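/- arXiv:1509.05309 — 6 statements merged into one kernel-verified Lean document; each statement's English description precedes it below -/
import Mathlib

section
/- Suppose G is a finite group, H₁ and H₂ are subgroups of G such that for every conjugacy class C of G one has |C ∩ H₁| = |C ∩ H₂|, and G acts linearly on a complex vector space V. Then there is a linear isomorphism ι : V^{H₁} → V^{H₂} such that for every linear endomorphism Δ of V that commutes with the action of every element of G (note such a Δ maps V^{H₁} into V^{H₁} and V^{H₂} into V^{H₂}), one has ι ∘ Δ = Δ ∘ ι on V^{H₁}. -/
/-- The subspace of vectors of `V` fixed by every element of the subgroup `H`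
under the representation `ρ`. -/
def fixedSubmodule {G V : Type*} [Group G] [AddCommGroup V] [Module ℂ V]
    (ρ : Representation ℂ G V) (H : Subgroup G) : Submodule ℂ V where
  carrier := {v | ∀ h ∈ H, ρ h v = v}
  add_mem' := by
    intro a b ha hb h hh
    simp [map_add, ha h hh, hb h hh]
  zero_mem' := by intro h hh; simp
  smul_mem' := by
    intro c v hv h hh
    simp [map_smul, hv h hh]

/-!
The averages `e₁, e₂ ∈ k[G]` over `H₁, H₂` are idempotents acting on every representation as
projections onto the fixed vectors. Almost conjugacy says precisely that every trace functional on
`k[G]` takes the same value at `e₁` and `e₂`. For a simple module `S`, the dimension of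
`Hom(k[G]e, S) ≃ eS` is the trace of `e` on `S`, so the semisimple modules `k[G]e₁` and `k[G]e₂`
contain each simple module with the same multiplicity and are isomorphic. Such an isomorphism is
right multiplication by an element of `k[G]`, so one obtains `u, w ∈ k[G]` with `w u = e₁` and
`u w = e₂`. The action of `u` carries `V^{H₁}` isomorphically onto `V^{H₂}`, and it commutes with
every endomorphism that commutes with `G`.
-/

section SemisimpleModule

variable {R M S : Type*} [Ring R] [AddCommGroup M] [Module R M] [AddCommGroup S] [Module R S]

theorem nonempty_linearEquiv_prod_ker_of_surjective [IsSemisimpleModule R M] {f : M →ₗ[R] S}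
    (hf : Function.Surjective f) : Nonempty (M ≃ₗ[R] S × LinearMap.ker f) := by
  obtain ⟨q, hq⟩ := exists_isCompl (LinearMap.ker f)
  exact ⟨(Submodule.prodEquivOfIsCompl _ q hq).symm ≪≫ₗ LinearEquiv.prodComm R _ _ ≪≫ₗ
    ((Submodule.quotientEquivOfIsCompl _ q hq).symm ≪≫ₗ
      f.quotKerEquivOfSurjective hf).prodCongr (.refl R _)⟩

variable (R M) in
theorem exists_isSimpleModule_linearMap_ne_zero [IsSemisimpleModule R M] [Nontrivial M] :
    ∃ S : Submodule R M, IsSimpleModule R S ∧ ∃ f : M →ₗ[R] S, f ≠ 0 := by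
  obtain ⟨S, hS⟩ := IsSemisimpleModule.exists_simple_submodule R M
  obtain ⟨q, hq⟩ := exists_isCompl S
  have := IsSimpleModule.nontrivial R S
  obtain ⟨s, hs⟩ := exists_ne (0 : S)
  refine ⟨S, hS, Submodule.projectionOnto S q hq, fun h => hs ?_⟩
  rw [← Submodule.projectionOnto_apply_left hq s, h, LinearMap.zero_apply]

variable (k : Type*) [Field k] [Algebra k R]

theorem finite_submodule_of_isScalarTower [Module k M] [IsScalarTower k R M] [Module.Finite k M]
    (N : Submodule R M) : Module.Finite k N :=
  inferInstanceAs (Module.Finite k (N.restrictScalars k))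

theorem finite_linearMap_of_isScalarTower [Module k M] [IsScalarTower k R M] [Module.Finite k M]
    [Module k S] [IsScalarTower k R S] [Module.Finite k S] : Module.Finite k (M →ₗ[R] S) :=
  .of_injective (LinearMap.restrictScalarsₗ k R M S k) (LinearMap.restrictScalars_injective k)

theorem finrank_ker_lt_of_ne_zero [Module k M] [IsScalarTower k R M] [Module.Finite k M]
    {f : M →ₗ[R] S} (hf : f ≠ 0) : Module.finrank k (LinearMap.ker f) < Module.finrank k M := by
  refine Submodule.finrank_lt (s := (LinearMap.ker f).restrictScalars k) ?_
  rwa [Ne, Submodule.restrictScalars_eq_top_iff, LinearMap.ker_eq_top]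

theorem finrank_hom_eq_add_of_surjective {T : Type*} [AddCommGroup T] [Module R T]
    [Module k M] [IsScalarTower k R M] [Module.Finite k M] [IsSemisimpleModule R M]
    [Module k S] [IsScalarTower k R S] [Module.Finite k S]
    [Module k T] [IsScalarTower k R T] [Module.Finite k T]
    {f : M →ₗ[R] S} (hf : Function.Surjective f) :
    Module.finrank k (M →ₗ[R] T) =
      Module.finrank k (S →ₗ[R] T) + Module.finrank k (LinearMap.ker f →ₗ[R] T) := by
  obtain ⟨split⟩ := nonempty_linearEquiv_prod_ker_of_surjective hf
  have := finite_submodule_of_isScalarTower k (LinearMap.ker f)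
  have := finite_linearMap_of_isScalarTower (R := R) (M := S) (S := T) k
  have := finite_linearMap_of_isScalarTower (R := R) (M := LinearMap.ker f) (S := T) k
  rw [(split.congrLeft T k).finrank_eq, ← (LinearMap.coprodEquiv k).finrank_eq,
    Module.finrank_prod]

theorem exists_surjective_of_finrank_hom_eq {N : Type*} [AddCommGroup N] [Module R N]
    [Module k M] [IsScalarTower k R M] [Module.Finite k M]
    [Module k N] [IsScalarTower k R N] [Module.Finite k N]
    [Module k S] [IsScalarTower k R S] [Module.Finite k S] [IsSimpleModule R S]
    (h : Module.finrank k (M →ₗ[R] S) = Module.finrank k (N →ₗ[R] S))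
    {f : M →ₗ[R] S} (hf : f ≠ 0) : ∃ g : N →ₗ[R] S, Function.Surjective g := by
  have := finite_linearMap_of_isScalarTower (R := R) (M := M) (S := S) k
  have := finite_linearMap_of_isScalarTower (R := R) (M := N) (S := S) k
  have pos : 0 < Module.finrank k (N →ₗ[R] S) :=
    h ▸ Module.finrank_pos_iff_exists_ne_zero.2 ⟨f, hf⟩
  obtain ⟨g, hg⟩ := Module.finrank_pos_iff_exists_ne_zero.1 pos
  exact ⟨g, LinearMap.surjective_of_ne_zero hg⟩

universe u

theorem nonempty_linearEquiv_of_finrank_hom_eq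
    {M N : Type u} [AddCommGroup M] [Module R M] [Module k M] [IsScalarTower k R M]
    [Module.Finite k M] [IsSemisimpleModule R M]
    [AddCommGroup N] [Module R N] [Module k N] [IsScalarTower k R N]
    [Module.Finite k N] [IsSemisimpleModule R N]
    (h : ∀ (S : Type u) [AddCommGroup S] [Module R S] [Module k S] [IsScalarTower k R S]
      [Module.Finite k S] [IsSimpleModule R S],
      Module.finrank k (M →ₗ[R] S) = Module.finrank k (N →ₗ[R] S)) :
    Nonempty (M ≃ₗ[R] N) := by
  induction hn : Module.finrank k M using Nat.strong_induction_on generalizing M N with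
  | _ n ih =>
    subst hn
    cases subsingleton_or_nontrivial M with
    | inl hM =>
      suffices Subsingleton N from ⟨0⟩
      by_contra hN
      have := not_subsingleton_iff_nontrivial.1 hN
      obtain ⟨S, hS, g, hg⟩ := exists_isSimpleModule_linearMap_ne_zero R N
      have := finite_submodule_of_isScalarTower k S
      obtain ⟨f, hf⟩ := exists_surjective_of_finrank_hom_eq k (h S).symm hg
      have := IsSimpleModule.nontrivial R S
      exact not_subsingleton S hf.subsingleton
    | inr hM =>
      obtain ⟨S, hS, f₀, hf₀⟩ := exists_isSimpleModule_linearMap_ne_zero R M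
      have := finite_submodule_of_isScalarTower k S
      have hf := LinearMap.surjective_of_ne_zero hf₀
      obtain ⟨g, hg⟩ := exists_surjective_of_finrank_hom_eq k (h S) hf₀
      obtain ⟨splitM⟩ := nonempty_linearEquiv_prod_ker_of_surjective hf
      obtain ⟨splitN⟩ := nonempty_linearEquiv_prod_ker_of_surjective hg
      have := finite_submodule_of_isScalarTower k (LinearMap.ker f₀)
      have := finite_submodule_of_isScalarTower k (LinearMap.ker g)
      obtain ⟨kerEquiv⟩ : Nonempty (LinearMap.ker f₀ ≃ₗ[R] LinearMap.ker g) := by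
        refine ih _ (finrank_ker_lt_of_ne_zero k hf₀) (fun T => ?_) rfl
        intros
        have hT := h T
        rw [finrank_hom_eq_add_of_surjective k hf, finrank_hom_eq_add_of_surjective k hg] at hT
        exact Nat.add_left_cancel hT
      exact ⟨splitM ≪≫ₗ (LinearEquiv.refl R S).prodCongr kerEquiv ≪≫ₗ splitN.symm⟩

end SemisimpleModule

section Idempotent

variable {R : Type*} [Ring R] {e f : R}

theorem mul_eq_of_mem_span_of_isIdempotentElem (he : IsIdempotentElem e) {x : R}
    (hx : x ∈ Submodule.span R {e}) : x * e = x := by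
  obtain ⟨r, rfl⟩ := Submodule.mem_span_singleton.1 hx
  rw [smul_eq_mul, mul_assoc, he.eq]

theorem coe_map_eq_mul_of_isIdempotentElem (he : IsIdempotentElem e)
    (φ : Submodule.span R {e} →ₗ[R] Submodule.span R {f}) (x : Submodule.span R {e}) :
    (φ x : R) = x * φ ⟨e, Submodule.mem_span_singleton_self e⟩ := by
  rw [← smul_eq_mul, ← Submodule.coe_smul, ← map_smul]
  congr 2
  exact Subtype.ext (mul_eq_of_mem_span_of_isIdempotentElem he x.2).symm

theorem exists_mul_eq_of_span_linearEquiv (he : IsIdempotentElem e) (hf : IsIdempotentElem f)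
    (φ : Submodule.span R {e} ≃ₗ[R] Submodule.span R {f}) : ∃ u w : R, w * u = e ∧ u * w = f := by
  refine ⟨φ.symm ⟨f, Submodule.mem_span_singleton_self f⟩,
    φ ⟨e, Submodule.mem_span_singleton_self e⟩, ?_, ?_⟩
  · simpa using (coe_map_eq_mul_of_isIdempotentElem hf φ.symm.toLinearMap (φ ⟨e, _⟩)).symm
  · simpa using (coe_map_eq_mul_of_isIdempotentElem he φ.toLinearMap (φ.symm ⟨f, _⟩)).symm

variable (k : Type*) [Field k] [Algebra k R]

/-- For an idempotent `e`, evaluation at `e` identifies `Hom_R(R e, S)` with `e S`. -/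
def homSpanEquivRange (he : IsIdempotentElem e) (S : Type*) [AddCommGroup S] [Module R S]
    [Module k S] [IsScalarTower k R S] :
    (Submodule.span R {e} →ₗ[R] S) ≃ₗ[k] LinearMap.range (Algebra.lsmul k k S e) where
  toFun φ := ⟨φ ⟨e, Submodule.mem_span_singleton_self e⟩,
    φ ⟨e, Submodule.mem_span_singleton_self e⟩, by
      change e • φ _ = φ _
      rw [← map_smul]
      exact congrArg φ (Subtype.ext he.eq)⟩
  map_add' _ _ := rfl
  map_smul' _ _ := rfl
  invFun v := (LinearMap.toSpanSingleton R S v).domRestrict _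
  left_inv φ := by
    ext x
    change (x : R) • φ _ = φ x
    rw [← map_smul]
    exact congrArg φ (Subtype.ext (mul_eq_of_mem_span_of_isIdempotentElem he x.2))
  right_inv := by
    rintro ⟨_, v, rfl⟩
    refine Subtype.ext ?_
    change e • e • v = e • v
    rw [smul_smul, he.eq]

theorem finrank_hom_span_eq_trace (he : IsIdempotentElem e) (S : Type*) [AddCommGroup S]
    [Module R S] [Module k S] [IsScalarTower k R S] [Module.Finite k S] :
    (Module.finrank k (Submodule.span R {e} →ₗ[R] S) : k) =
      LinearMap.trace k S (Algebra.lsmul k k S e) := by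
  rw [(homSpanEquivRange k he S).finrank_eq,
    (LinearMap.IsIdempotentElem.isProj_range _ (he.map (Algebra.lsmul k k S))).trace]

theorem exists_mul_eq_of_forall_trace_eq [CharZero k] [Module.Finite k R] [IsSemisimpleRing R]
    (he : IsIdempotentElem e) (hf : IsIdempotentElem f)
    (h : ∀ τ : R →ₗ[k] k, (∀ a b, τ (a * b) = τ (b * a)) → τ e = τ f) :
    ∃ u w : R, w * u = e ∧ u * w = f := by
  have finite_span (x : R) := finite_submodule_of_isScalarTower k (Submodule.span R {x})
  suffices Nonempty (Submodule.span R {e} ≃ₗ[R] Submodule.span R {f}) from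
    this.elim (exists_mul_eq_of_span_linearEquiv he hf)
  refine nonempty_linearEquiv_of_finrank_hom_eq k fun S => ?_
  intros
  have trace_eq := h (LinearMap.trace k S ∘ₗ (Algebra.lsmul k k S).toLinearMap) fun a b => by
    simp [LinearMap.trace_mul_comm k (Algebra.lsmul k k S a)]
  exact_mod_cast (finrank_hom_span_eq_trace k he S).trans
    (trace_eq.trans (finrank_hom_span_eq_trace k hf S).symm)

end Idempotent

theorem exists_linearEquiv_of_isProj_mul {k V : Type*} [Semiring k] [AddCommMonoid V]
    [Module k V] {P Q : Submodule k V} {u w : Module.End k V}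
    (hP : LinearMap.IsProj P (w * u)) (hQ : LinearMap.IsProj Q (u * w)) :
    ∃ ι : P ≃ₗ[k] Q, ∀ v : P, (ι v : V) = u v := by
  have map_u : ∀ v ∈ P, u v ∈ Q := fun v hv => by
    rw [← hP.map_id v hv]
    exact hQ.map_mem (u v)
  have map_w : ∀ v ∈ Q, w v ∈ P := fun v hv => by
    rw [← hQ.map_id v hv]
    exact hP.map_mem (w v)
  exact ⟨.ofLinearMap (u.restrict map_u) (w.restrict map_w)
    (by ext v; exact hQ.map_id v v.2) (by ext v; exact hP.map_id v v.2), fun _ => rfl⟩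

section AlmostConjugate

variable {G : Type*} [Group G]

/-- Almost conjugate subgroups, also known as a Gassmann pair: every conjugacy class of `G` meets
`H₁` and `H₂` in equally many elements. The class is given by a representative `g`, and `Nat.card`
makes the condition meaningful only where these intersections are finite. -/
def AlmostConjugate (H₁ H₂ : Subgroup G) : Prop :=
  ∀ g : G, Nat.card {x : G // IsConj g x ∧ x ∈ H₁} = Nat.card {x : G // IsConj g x ∧ x ∈ H₂}

theorem card_fiber_conjClassesMk (H : Subgroup G) (g : G) :
    Nat.card {x : H // ConjClasses.mk (x : G) = ConjClasses.mk g} =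
      Nat.card {x : G // IsConj g x ∧ x ∈ H} :=
  Nat.card_congr
    { toFun x := ⟨x.1, (ConjClasses.mk_eq_mk_iff_isConj.1 x.2).symm, x.1.2⟩
      invFun x := ⟨⟨x.1, x.2.2⟩, ConjClasses.mk_eq_mk_iff_isConj.2 x.2.1.symm⟩ }

theorem AlmostConjugate.exists_equiv_isConj {H₁ H₂ : Subgroup G} [Finite H₁] [Finite H₂]
    (h : AlmostConjugate H₁ H₂) : ∃ σ : H₁ ≃ H₂, ∀ x : H₁, IsConj (x : G) (σ x) := by
  have fiberEquiv (c : ConjClasses G) : Nonempty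
      ({x : H₁ // ConjClasses.mk (x : G) = c} ≃ {x : H₂ // ConjClasses.mk (x : G) = c}) := by
    obtain ⟨g, rfl⟩ := ConjClasses.mk_surjective c
    exact Finite.card_eq.1 (by rw [card_fiber_conjClassesMk, card_fiber_conjClassesMk, h g])
  let fiberEquiv' := fun c => (fiberEquiv c).some
  exact ⟨.ofFiberEquiv fiberEquiv', fun x : H₁ =>
    ConjClasses.mk_eq_mk_iff_isConj.1 (Equiv.ofFiberEquiv_map fiberEquiv' x).symm⟩

end AlmostConjugate

section Average

variable {k G V : Type*} [CommRing k] [Group G] [AddCommGroup V] [Module k V]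

/-- The subspace `V^H` of vectors fixed by the subgroup `H`, as the invariants of the restricted
representation. -/
noncomputable abbrev subgroupInvariants (ρ : Representation k G V) (H : Subgroup G) :
    Submodule k V :=
  Representation.invariants (ρ.comp H.subtype)

variable (k) in
/-- The average `|H|⁻¹ ∑ h ∈ H, h` of a finite subgroup `H` as an element of `k[G]`. -/
noncomputable def subgroupAverage (H : Subgroup G) [Fintype H] [Invertible (Fintype.card H : k)] :
    MonoidAlgebra k G :=
  MonoidAlgebra.mapDomainAlgHom k k H.subtype (GroupAlgebra.average k H)

theorem isIdempotentElem_average [Fintype G] [Invertible (Fintype.card G : k)] :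
    IsIdempotentElem (GroupAlgebra.average k G) := by
  rw [IsIdempotentElem]
  nth_rw 1 [GroupAlgebra.average]
  simp [Finset.sum_mul, Finset.card_univ, ← Nat.cast_smul_eq_nsmul k, smul_smul]

theorem isIdempotentElem_subgroupAverage (H : Subgroup G) [Fintype H]
    [Invertible (Fintype.card H : k)] : IsIdempotentElem (subgroupAverage k H) :=
  isIdempotentElem_average.map _

theorem isProj_asAlgebraHom_subgroupAverage (ρ : Representation k G V) (H : Subgroup G) [Fintype H]
    [Invertible (Fintype.card H : k)] :
    LinearMap.IsProj (subgroupInvariants ρ H) (ρ.asAlgebraHom (subgroupAverage k H)) := by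
  have restrict : ρ.asAlgebraHom.comp (MonoidAlgebra.mapDomainAlgHom k k H.subtype) =
      Representation.asAlgebraHom (ρ.comp H.subtype) := by
    ext; simp
  have := Representation.isProj_averageMap (ρ.comp H.subtype)
  rwa [Representation.averageMap, ← restrict] at this

theorem AlmostConjugate.map_subgroupAverage_eq {H₁ H₂ : Subgroup G} [Fintype H₁] [Fintype H₂]
    [Invertible (Fintype.card H₁ : k)] [Invertible (Fintype.card H₂ : k)]
    (h : AlmostConjugate H₁ H₂) {W : Type*} [AddCommGroup W] [Module k W]
    (τ : MonoidAlgebra k G →ₗ[k] W)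
    (hτ : ∀ a b, τ (a * b) = τ (b * a)) :
    τ (subgroupAverage k H₁) = τ (subgroupAverage k H₂) := by
  obtain ⟨σ, hσ⟩ := h.exists_equiv_isConj
  have apply_eq_of_isConj {x y : G} (hxy : IsConj x y) :
      τ (MonoidAlgebra.of k G x) = τ (MonoidAlgebra.of k G y) := by
    obtain ⟨c, rfl⟩ := isConj_iff.1 hxy
    rw [map_mul, hτ, ← map_mul, inv_mul_cancel_left]
  have apply_average (H : Subgroup G) [Fintype H] [Invertible (Fintype.card H : k)] :
      τ (subgroupAverage k H) = ⅟(Fintype.card H : k) • ∑ x : H, τ (MonoidAlgebra.of k G x) := by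
    simp [subgroupAverage, GroupAlgebra.average]
  have card_eq : (Fintype.card H₁ : k) = Fintype.card H₂ := congrArg _ (Fintype.card_congr σ)
  rw [apply_average, apply_average, invertible_unique _ _ card_eq,
    Fintype.sum_equiv σ _ (fun y : H₂ => τ (MonoidAlgebra.of k G y)) fun x =>
      apply_eq_of_isConj (hσ x)]

theorem AlmostConjugate.exists_mul_eq_subgroupAverage (k : Type*) [Field k] [CharZero k] [Finite G]
    {H₁ H₂ : Subgroup G} [Fintype H₁] [Fintype H₂]
    [Invertible (Fintype.card H₁ : k)] [Invertible (Fintype.card H₂ : k)]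
    (h : AlmostConjugate H₁ H₂) :
    ∃ u w : MonoidAlgebra k G, w * u = subgroupAverage k H₁ ∧ u * w = subgroupAverage k H₂ := by
  have : NeZero (Nat.card G : k) := ⟨Nat.cast_ne_zero.2 Nat.card_pos.ne'⟩
  have : Module.Finite k (MonoidAlgebra k G) := .of_basis (MonoidAlgebra.basis G k)
  exact exists_mul_eq_of_forall_trace_eq k (isIdempotentElem_subgroupAverage H₁)
    (isIdempotentElem_subgroupAverage H₂) h.map_subgroupAverage_eq

theorem commute_asAlgebraHom {ρ : Representation k G V} {Δ : Module.End k V}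
    (hΔ : ∀ g, Commute Δ (ρ g)) (a : MonoidAlgebra k G) : Commute Δ (ρ.asAlgebraHom a) := by
  induction a using MonoidAlgebra.induction_on with
  | of g => simpa using hΔ g
  | add a b ha hb => simpa using ha.add_right hb
  | smul r a ha => simpa using ha.smul_right r

theorem fixedSubmodule_eq_subgroupInvariants {V : Type*} [AddCommGroup V] [Module ℂ V]
    (ρ : Representation ℂ G V) (H : Subgroup G) :
    fixedSubmodule ρ H = subgroupInvariants ρ H := by
  ext v
  exact (Subtype.forall (q := fun h : H => ρ h v = v)).symm

end Average

theorem stmt_1_general {k : Type*} [Field k] [CharZero k] {G : Type*} [Group G] [Finite G]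
    {H₁ H₂ : Subgroup G} {V : Type*} [AddCommGroup V] [Module k V] (ρ : Representation k G V)
    (hac : AlmostConjugate H₁ H₂) :
    ∃ ι : subgroupInvariants ρ H₁ ≃ₗ[k] subgroupInvariants ρ H₂,
      ∀ Δ : V →ₗ[k] V, (∀ g : G, Δ ∘ₗ ρ g = ρ g ∘ₗ Δ) →
        ∀ (h₁ : ∀ v ∈ subgroupInvariants ρ H₁, Δ v ∈ subgroupInvariants ρ H₁)
          (h₂ : ∀ v ∈ subgroupInvariants ρ H₂, Δ v ∈ subgroupInvariants ρ H₂),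
          ι.toLinearMap ∘ₗ Δ.restrict h₁ = Δ.restrict h₂ ∘ₗ ι.toLinearMap := by
  have := Fintype.ofFinite H₁
  have := Fintype.ofFinite H₂
  have : Invertible (Fintype.card H₁ : k) := invertibleOfNonzero (by simp)
  have : Invertible (Fintype.card H₂ : k) := invertibleOfNonzero (by simp)
  obtain ⟨u, w, hwu, huw⟩ := hac.exists_mul_eq_subgroupAverage k
  have proj₁ := isProj_asAlgebraHom_subgroupAverage ρ H₁
  have proj₂ := isProj_asAlgebraHom_subgroupAverage ρ H₂
  rw [← hwu, map_mul] at proj₁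
  rw [← huw, map_mul] at proj₂
  obtain ⟨ι, hι⟩ := exists_linearEquiv_of_isProj_mul proj₁ proj₂
  refine ⟨ι, fun Δ hΔ h₁ h₂ => LinearMap.ext fun v => Subtype.ext ?_⟩
  have hcomm : Δ (ρ.asAlgebraHom u v) = ρ.asAlgebraHom u (Δ v) :=
    LinearMap.congr_fun (commute_asAlgebraHom hΔ u) v
  simp [hι, hcomm]

/-- If `G` is a finite group, `H₁, H₂ ≤ G` are almost conjugate
(`|C ∩ H₁| = |C ∩ H₂|` for every conjugacy class `C`), and `G` acts linearly on a
complex vector space `V`, then there is a linear isomorphism `ι : V^{H₁} ≃ V^{H₂}`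
commuting with every linear endomorphism `Δ` of `V` that commutes with the
`G`-action (such a `Δ` preserves `V^{H₁}` and `V^{H₂}`). -/
theorem stmt_1 {G : Type*} [Group G] [Finite G] (H₁ H₂ : Subgroup G)
    {V : Type*} [AddCommGroup V] [Module ℂ V] (ρ : Representation ℂ G V)
    (hac : ∀ g : G, Nat.card {x : G // IsConj g x ∧ x ∈ H₁} =
        Nat.card {x : G // IsConj g x ∧ x ∈ H₂}) :
    ∃ ι : ↥(fixedSubmodule ρ H₁) ≃ₗ[ℂ] ↥(fixedSubmodule ρ H₂),
      ∀ (Δ : V →ₗ[ℂ] V), (∀ g : G, Δ ∘ₗ (ρ g) = (ρ g) ∘ₗ Δ) →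
        ∀ (h₁ : ∀ v ∈ fixedSubmodule ρ H₁, Δ v ∈ fixedSubmodule ρ H₁)
          (h₂ : ∀ v ∈ fixedSubmodule ρ H₂, Δ v ∈ fixedSubmodule ρ H₂),
          ι.toLinearMap ∘ₗ (Δ.restrict h₁) = (Δ.restrict h₂) ∘ₗ ι.toLinearMap := by
  rw [fixedSubmodule_eq_subgroupInvariants, fixedSubmodule_eq_subgroupInvariants]
  exact stmt_1_general ρ hac
end

section
/- If H₁ and H₂ are subgroups of PSL(2,7) of index 7 that are not conjugate in PSL(2,7), then for every conjugacy class C of PSL(2,7) one has |C ∩ H₁| = |C ∩ H₂|; that is, (H₁, H₂) is an almost conjugate (Sunada) pair in PSL(2,7). -/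
/-- `SL(2, 𝔽_p)`: the group of 2×2 matrices of determinant 1 over `ℤ/pℤ`. -/
abbrev SL2 (p : ℕ) := Matrix.SpecialLinearGroup (Fin 2) (ZMod p)

/-- `PSL(2, 𝔽_p)`: the quotient of `SL(2, 𝔽_p)` by its center `{±I}`. -/
abbrev PSL2 (p : ℕ) := SL2 p ⧸ Subgroup.center (SL2 p)

open MulAction Matrix
open scoped MatrixGroups

/-!
Counting the `g` that conjugate `x` into `H` in two ways shows that `|C ∩ H|` depends only on `|H|`
and on the number of fixed points on `G ⧸ H` of an element of `C`. So it suffices that any two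
transitive actions of `SL(2, 7)` on `7` points have the same fixed-point counts. The centre acts
trivially, so only the trace up to sign matters. Nontrivial elements of trace `2` have order `7`
and fix nothing, since stabilizers have order `48`. Elements of equal trace `t` with `t ^ 2 ≠ 4`
are conjugate. If those of trace `0`, `1`, `3` fix `a`, `b`, `c` points, then Burnside's formula
reads `3 * a + 8 * b + 6 * c = 23`. An element of trace `3` is a `2`-element whose square has trace
`0`, so `c` is odd and `c ≤ a`; this forces `(a, b, c) = (3, 1, 1)`.
-/

section PermutationCharacter

variable {G α : Type*} [Group G] [MulAction G α]

theorem card_smul_mem_eq_card_stabilizer_mul_card (a : α) (s : Set α) :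
    Nat.card {g : G // g • a ∈ s} = Nat.card (stabilizer G a) * Nat.card ↥(orbit G a ∩ s) := by
  let t : Set (G ⧸ stabilizer G a) := ofQuotientStabilizer G a ⁻¹' s
  have ht : Nat.card t = Nat.card ↥(orbit G a ∩ s) := by
    refine Nat.card_congr (((orbitEquivQuotientStabilizer G a).symm.subtypeEquiv
      (q := fun b : orbit G a => (b : α) ∈ s) fun q => Iff.rfl).trans
      (Equiv.subtypeSubtypeEquivSubtypeInter _ _))
  rw [← ht, ← Nat.card_prod]
  exact Nat.card_congr (QuotientGroup.preimageMkEquivSubgroupProdSet (stabilizer G a) t)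

/- Both sides count the `g` with `g⁻¹ * x * g ∈ H`: as translates of the coset `H` lying in
`fixedBy (G ⧸ H) x`, and as conjugates of `x` lying in `H`. -/
theorem card_mul_card_fixedBy_quotient (H : Subgroup G) (x : G) :
    Nat.card H * Nat.card (fixedBy (G ⧸ H) x) =
      Nat.card (stabilizer (ConjAct G) x) * Nat.card {y : G // IsConj x y ∧ y ∈ H} := by
  have hcosets := card_smul_mem_eq_card_stabilizer_mul_card (G := G)
    ((1 : G) : G ⧸ H) (fixedBy (G ⧸ H) x)
  rw [stabilizer_quotient, orbit_eq_univ, Set.univ_inter] at hcosets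
  have hconj := card_smul_mem_eq_card_stabilizer_mul_card (G := ConjAct G) x (H : Set G)
  have hclass : Nat.card ↥(orbit (ConjAct G) x ∩ (H : Set G)) =
      Nat.card {y : G // IsConj x y ∧ y ∈ H} :=
    Nat.card_congr (Equiv.subtypeEquivRight fun y => by
      rw [Set.mem_inter_iff, ConjAct.mem_orbit_conjAct, isConj_comm, SetLike.mem_coe])
  rw [← hcosets, ← hclass, ← hconj]
  refine Nat.card_congr (((Equiv.inv G).trans ConjAct.toConjAct.toEquiv).subtypeEquiv fun g => ?_)
  rw [mem_fixedBy, MulAction.Quotient.smul_coe, MulAction.Quotient.smul_coe, eq_comm,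
    QuotientGroup.eq]
  simp [ConjAct.smul_def, mul_assoc]

theorem card_isConj_mem_eq_of_card_fixedBy_eq [Finite G] {H K : Subgroup G} {x : G}
    (hindex : H.index = K.index)
    (hfixed : Nat.card (fixedBy (G ⧸ H) x) = Nat.card (fixedBy (G ⧸ K) x)) :
    Nat.card {y : G // IsConj x y ∧ y ∈ H} = Nat.card {y : G // IsConj x y ∧ y ∈ K} := by
  have hcard : Nat.card H = Nat.card K := by
    refine Nat.eq_of_mul_eq_mul_right (Nat.pos_of_ne_zero H.index_ne_zero_of_finite) ?_
    rw [H.card_mul_index, hindex, K.card_mul_index]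
  have : Finite (ConjAct G) := ‹Finite G›
  refine Nat.eq_of_mul_eq_mul_left (Nat.card_pos (α := stabilizer (ConjAct G) x)) ?_
  rw [← card_mul_card_fixedBy_quotient, ← card_mul_card_fixedBy_quotient, hcard, hfixed]

theorem card_fixedBy_eq_of_isConj {x y : G} (h : IsConj x y) :
    Nat.card (fixedBy α x) = Nat.card (fixedBy α y) := by
  open scoped Pointwise in
  obtain ⟨c, rfl⟩ := isConj_iff.1 h
  rw [← smul_fixedBy, Set.natCard_smul_set]

theorem card_fixedBy_le_card_fixedBy_pow [Finite α] (g : G) (n : ℕ) :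
    Nat.card (fixedBy α g) ≤ Nat.card (fixedBy α (g ^ n)) := by
  refine Nat.card_mono (Set.toFinite _) ?_
  simpa only [zpow_natCast] using fixedBy_subset_fixedBy_zpow α g n

theorem card_modEq_card_fixedBy [Finite α] {g : G} {p n : ℕ} [Fact p.Prime] (hg : g ^ p ^ n = 1) :
    Nat.card α ≡ Nat.card (fixedBy α g) [MOD p] := by
  classical
  have : Fintype α := Fintype.ofFinite α
  have h := Equiv.Perm.card_fixedPoints_modEq (α := α) (f := toEndHom g) (p := p) (n := n)
    (by rw [← map_pow, hg, map_one])
  rwa [Fintype.card_eq_nat_card, Fintype.card_eq_nat_card] at h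

theorem fixedBy_eq_univ_of_mem_center [IsPretransitive G α] {z : G}
    (hz : z ∈ Subgroup.center G) (hfixed : (fixedBy α z).Nonempty) :
    fixedBy α z = Set.univ := by
  obtain ⟨a, ha⟩ := hfixed
  refine Set.eq_univ_of_forall fun b => ?_
  obtain ⟨g, rfl⟩ := exists_smul_eq G a b
  rw [mem_fixedBy, smul_smul, ← Subgroup.mem_center_iff.1 hz g, mul_smul, ha]

theorem fixedBy_eq_empty_of_coprime_card_stabilizer {g : G} {n : ℕ} (hg : g ^ n = 1) (hg' : g ≠ 1)
    (hn : ∀ a : α, n.Coprime (Nat.card (stabilizer G a))) : fixedBy α g = ∅ := by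
  refine Set.eq_empty_of_forall_notMem fun a ha => hg' (orderOf_eq_one_iff.1 ?_)
  exact Nat.eq_one_of_dvd_coprimes (hn a) (orderOf_dvd_of_pow_eq_one hg)
    (Subgroup.orderOf_dvd_natCard _ (mem_stabilizer_iff.2 ha))

theorem card_stabilizer_mul_card [IsPretransitive G α] (a : α) :
    Nat.card (stabilizer G a) * Nat.card α = Nat.card G := by
  rw [← index_stabilizer_of_transitive G a, Subgroup.card_mul_index]

theorem sum_card_fixedBy_of_isPretransitive [Fintype G] [Finite α] [Nonempty α]
    [IsPretransitive G α] : ∑ g : G, Nat.card (fixedBy α g) = Nat.card G := by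
  classical
  have : Fintype α := Fintype.ofFinite α
  have hunique : Nat.card (Quotient (orbitRel G α)) = 1 := by
    have := (pretransitive_iff_subsingleton_quotient G α).1 ‹_›
    have := (nonempty_quotient_iff (orbitRel G α)).2 ‹_›
    exact Nat.card_unique
  have burnside := sum_card_fixedBy_eq_card_orbits_mul_card_group G α
  simpa only [Fintype.card_eq_nat_card, hunique, one_mul] using burnside

end PermutationCharacter

namespace SL2

section CommRing

variable {R : Type*} [CommRing R]

theorem mul_sub_mul_eq_one (A : SL(2, R)) : A 0 0 * A 1 1 - A 0 1 * A 1 0 = 1 := by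
  rw [← det_fin_two, A.det_coe]

/-- The companion matrix of `X ^ 2 - t * X + 1`, the reference element of trace `t` with which other
elements of `SL(2, R)` of trace `t` are compared up to conjugacy. -/
def companion (t : R) : SL(2, R) := ⟨!![0, -1; 1, t], by simp [det_fin_two]⟩

@[simp]
theorem trace_companion (t : R) : (companion t).1.trace = t := by
  simp [companion, trace_fin_two]

/- The columns of the conjugating matrix are the cyclic vector `v = (x, y)` and `A v`; the
hypothesis says that its determinant is `1`. -/
theorem isConj_companion_of_cyclic (A : SL(2, R)) {x y : R}
    (hxy : x * (A 1 0 * x + A 1 1 * y) - y * (A 0 0 * x + A 0 1 * y) = 1) :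
    IsConj (companion A.1.trace) A := by
  have hdet := mul_sub_mul_eq_one A
  let B : SL(2, R) := ⟨!![x, A 0 0 * x + A 0 1 * y; y, A 1 0 * x + A 1 1 * y], by
    rw [det_fin_two_of]; linear_combination hxy⟩
  refine isConj_iff.2 ⟨B, mul_inv_eq_iff_eq_mul.2 (Subtype.ext ?_)⟩
  change B.1 * (companion A.1.trace).1 = A.1 * B.1
  ext i j
  fin_cases i <;> fin_cases j <;> simp only [B, companion, trace_fin_two, mul_apply,
    Fin.sum_univ_two, Fin.zero_eta, Fin.mk_one, of_apply, cons_val', cons_val_fin_one,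
    cons_val_zero, cons_val_one]
  · ring
  · linear_combination x * hdet
  · ring
  · linear_combination y * hdet

/-- The matrices of determinant `1` and trace `t`, fibred over their upper left entry `a`: the
off-diagonal entries form a pair with product `a * (t - a) - 1`. -/
def traceEquiv (t : R) : {A : SL(2, R) // A.1.trace = t} ≃
    Σ a : R, {v : R × R // v.1 * v.2 = a * (t - a) - 1} where
  toFun A := ⟨A.1 0 0, (A.1 0 1, A.1 1 0), by
    have htrace := A.2
    rw [trace_fin_two] at htrace
    linear_combination A.1 0 0 * htrace - mul_sub_mul_eq_one A.1⟩
  invFun v := ⟨⟨!![v.1, v.2.1.1; v.2.1.2, t - v.1], by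
    rw [det_fin_two_of, v.2.2, sub_sub_cancel]⟩, by simp [trace_fin_two]⟩
  left_inv A := by
    have htrace : t - A.1 0 0 = A.1 1 1 := by
      have h := A.2
      rw [trace_fin_two] at h
      exact sub_eq_of_eq_add' h.symm
    ext i j
    fin_cases i <;> fin_cases j <;> simp [htrace]
  right_inv v := rfl

theorem coe_sq (A : SL(2, R)) : A.1 ^ 2 = A.1.trace • A.1 - 1 := by
  nontriviality R
  have cayley_hamilton := A.1.aeval_self_charpoly
  rw [charpoly_fin_two, A.det_coe] at cayley_hamilton
  simp only [map_add, map_sub, map_mul, map_pow, map_one, Polynomial.aeval_X, Polynomial.aeval_C,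
    ← Algebra.smul_def] at cayley_hamilton
  rw [sub_add, sub_eq_zero] at cayley_hamilton
  exact cayley_hamilton

theorem trace_sq (A : SL(2, R)) : (A ^ 2).1.trace = A.1.trace ^ 2 - 2 := by
  rw [Matrix.SpecialLinearGroup.coe_pow, coe_sq]
  simp [pow_two]

theorem sq_eq_neg_one_of_trace_eq_zero {A : SL(2, R)} (h : A.1.trace = 0) : A ^ 2 = -1 := by
  apply Subtype.ext
  simp [coe_sq, h]

theorem pow_char_eq_one_of_trace_eq_two (p : ℕ) [Fact p.Prime] [CharP R p] {A : SL(2, R)}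
    (h : A.1.trace = 2) : A ^ p = 1 := by
  have hnil : (A.1 - 1) ^ 2 = 0 := by
    rw [(Commute.one_right A.1).sub_sq, coe_sq, h, two_smul]
    noncomm_ring
  have hnil' : (A.1 - 1) ^ p = 0 := pow_eq_zero_of_le (Fact.out : p.Prime).two_le hnil
  rw [sub_pow_char_of_commute p (Commute.one_right A.1), one_pow, sub_eq_zero] at hnil'
  exact Subtype.ext (by rw [Matrix.SpecialLinearGroup.coe_pow, hnil',
    Matrix.SpecialLinearGroup.coe_one])

theorem pow_eight_eq_one_of_trace_sq_eq_two {A : SL(2, R)} (h : A.1.trace ^ 2 = 2) :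
    A ^ 8 = 1 := by
  have htrace : (A ^ 2).1.trace = 0 := by rw [trace_sq, h, sub_self]
  calc A ^ 8 = ((A ^ 2) ^ 2) ^ 2 := by rw [← pow_mul, ← pow_mul]
    _ = 1 := by rw [sq_eq_neg_one_of_trace_eq_zero htrace, neg_one_sq]

theorem trace_neg (A : SL(2, R)) : (-A).1.trace = -A.1.trace := by
  rw [Matrix.SpecialLinearGroup.coe_neg, Matrix.trace_neg]

theorem neg_one_mem_center : (-1 : SL(2, R)) ∈ Subgroup.center SL(2, R) :=
  Subgroup.mem_center_iff.2 fun A => by rw [mul_neg_one, neg_one_mul]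

variable {α : Type*} [MulAction SL(2, R) α]

theorem card_modEq_two_card_fixedBy_of_trace_sq_eq_two [Finite α] {A : SL(2, R)}
    (hA : A.1.trace ^ 2 = 2) : Nat.card α ≡ Nat.card (fixedBy α A) [MOD 2] :=
  card_modEq_card_fixedBy (n := 3) (pow_eight_eq_one_of_trace_sq_eq_two hA)

theorem sum_card_fixedBy_trace_eq_two [Fintype R] [DecidableEq R]
    (hα : ∀ A : SL(2, R), A.1.trace = 2 → A ≠ 1 → fixedBy α A = ∅) :
    ∑ A : SL(2, R) with A.1.trace = 2, Nat.card (fixedBy α A) = Nat.card α := by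
  have htrace_one : (1 : SL(2, R)).1.trace = 2 := by
    rw [Matrix.SpecialLinearGroup.coe_one, trace_fin_two, one_apply_eq, one_apply_eq,
      one_add_one_eq_two]
  rw [Finset.sum_eq_single_of_mem 1 (Finset.mem_filter.2 ⟨Finset.mem_univ _, htrace_one⟩)
    fun A hA hne => ?_]
  · rw [fixedBy_one_eq_univ, Nat.card_univ]
  · rw [hα A (Finset.mem_filter.1 hA).2 hne, Nat.card_coe_set_eq, Set.ncard_empty]

variable [IsPretransitive SL(2, R) α]

theorem fixedBy_neg_one_eq_univ (hα : Odd (Nat.card α)) :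
    fixedBy α (-1 : SL(2, R)) = Set.univ := by
  have : Finite α := Nat.finite_of_card_ne_zero hα.pos.ne'
  have hparity := card_modEq_card_fixedBy (α := α) (g := (-1 : SL(2, R))) (p := 2) (n := 1)
    (by rw [pow_one, neg_one_sq])
  have hodd : Odd (Nat.card (fixedBy α (-1 : SL(2, R)))) := by
    rwa [Nat.odd_iff, ← hparity, ← Nat.odd_iff]
  exact fixedBy_eq_univ_of_mem_center neg_one_mem_center
    (Set.nonempty_coe_sort.1 (Nat.card_ne_zero.1 hodd.pos.ne').1)

theorem fixedBy_neg (hα : Odd (Nat.card α)) (A : SL(2, R)) : fixedBy α (-A) = fixedBy α A := by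
  ext a
  have ha : a ∈ fixedBy α (-1 : SL(2, R)) := by
    rw [fixedBy_neg_one_eq_univ hα]; exact Set.mem_univ a
  rw [mem_fixedBy, mem_fixedBy, ← mul_neg_one, mul_smul, mem_fixedBy.1 ha]

theorem sum_card_fixedBy_trace_eq_neg [Fintype R] [DecidableEq R] (hα : Odd (Nat.card α)) (t : R) :
    ∑ A : SL(2, R) with A.1.trace = -t, Nat.card (fixedBy α A) =
      ∑ A : SL(2, R) with A.1.trace = t, Nat.card (fixedBy α A) :=
  Finset.sum_equiv (Equiv.neg _) (by simp [neg_eq_iff_eq_neg]) fun A _ => by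
    rw [Equiv.neg_apply, fixedBy_neg hα]

end CommRing

section FiniteField

variable {F : Type*} [Field F]

section Conjugacy

variable [Finite F]

theorem exists_binary_quadratic_eq (hF : ringChar F ≠ 2) {a b c : F}
    (hdiscrim : discrim a b c ≠ 0) (m : F) : ∃ x y : F, a * x ^ 2 + b * x * y + c * y ^ 2 = m := by
  have : Fintype F := Fintype.ofFinite F
  rw [discrim] at hdiscrim
  have h2 : (2 : F) ≠ 0 := Ring.two_ne_zero hF
  by_cases ha : a = 0
  · have hb : b ≠ 0 := by rintro rfl; simp [ha] at hdiscrim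
    exact ⟨(m - c) / b, 1, by rw [ha]; field_simp; ring⟩
  · have hd : c - b ^ 2 / (2 ^ 2 * a) ≠ 0 := fun h => hdiscrim <| by
      field_simp at h
      linear_combination -h
    obtain ⟨u, y, huy⟩ := FiniteField.exists_root_sum_quadratic
      (Polynomial.degree_quadratic (b := 0) (c := -m) ha)
      (Polynomial.degree_quadratic (b := 0) (c := 0) hd) (FiniteField.odd_card_of_char_ne_two hF)
    refine ⟨u - b / (2 * a) * y, y, ?_⟩
    simp only [map_zero, zero_mul, add_zero, map_neg, Polynomial.eval_add, Polynomial.eval_mul,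
      Polynomial.eval_C, Polynomial.eval_pow, Polynomial.eval_X, Polynomial.eval_neg] at huy
    field_simp at huy ⊢
    linear_combination huy

theorem isConj_of_trace_eq (hF : ringChar F ≠ 2) {A B : SL(2, F)}
    (htrace : A.1.trace = B.1.trace) (hA : A.1.trace ^ 2 ≠ 4) : IsConj A B := by
  have isConj_companion (C : SL(2, F)) (hC : C.1.trace ^ 2 ≠ 4) :
      IsConj (companion C.1.trace) C := by
    have hdiscrim : discrim (C 1 0) (C 1 1 - C 0 0) (-C 0 1) ≠ 0 := fun h => hC <| by
      rw [discrim] at h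
      rw [trace_fin_two]
      linear_combination h + 4 * mul_sub_mul_eq_one C
    obtain ⟨x, y, hxy⟩ := exists_binary_quadratic_eq hF hdiscrim 1
    exact isConj_companion_of_cyclic C (x := x) (y := y) (by linear_combination hxy)
  exact (htrace ▸ isConj_companion A hA).symm.trans (isConj_companion B (htrace ▸ hA))

variable {α : Type*} [MulAction SL(2, F) α]

theorem card_fixedBy_eq_of_trace_eq (hF : ringChar F ≠ 2) {A B : SL(2, F)}
    (htrace : A.1.trace = B.1.trace) (hA : A.1.trace ^ 2 ≠ 4) :
    Nat.card (fixedBy α A) = Nat.card (fixedBy α B) :=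
  card_fixedBy_eq_of_isConj (isConj_of_trace_eq hF htrace hA)

theorem card_fixedBy_le_of_trace_sq_eq_two [Finite α] (hF : ringChar F ≠ 2) {A B : SL(2, F)}
    (hA : A.1.trace ^ 2 = 2) (hB : B.1.trace = 0) :
    Nat.card (fixedBy α A) ≤ Nat.card (fixedBy α B) := by
  have hsq : (A ^ 2).1.trace = 0 := by rw [trace_sq, hA, sub_self]
  have hne : (A ^ 2).1.trace ^ 2 ≠ 4 := by
    have h4 : (4 : F) = 2 ^ 2 := by norm_num
    rw [hsq, zero_pow two_ne_zero, h4]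
    exact (pow_ne_zero 2 (Ring.two_ne_zero hF)).symm
  exact (card_fixedBy_le_card_fixedBy_pow A 2).trans
    (card_fixedBy_eq_of_trace_eq hF (hsq.trans hB.symm) hne).le

end Conjugacy

variable [Fintype F] [DecidableEq F]

theorem card_mul_eq (m : F) :
    Fintype.card {v : F × F // v.1 * v.2 = m} =
      (if m = 0 then Fintype.card F else 0) + (Fintype.card F - 1) := by
  have hfiber (b : F) : ∑ c : F, (if b * c = m then 1 else 0) =
      if b = 0 then (if m = 0 then Fintype.card F else 0) else 1 := by
    split_ifs with hb hm
    · simp [hb, hm]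
    · simp [hb, Ne.symm hm]
    · simp [← eq_div_iff hb, mul_comm b]
  rw [Fintype.card_subtype, Finset.card_filter, Fintype.sum_prod_type]
  simp only [hfiber]
  rw [Fintype.sum_eq_add_sum_compl 0, if_pos rfl, Finset.sum_congr rfl fun b hb => if_neg ?_]
  · simp [Finset.card_compl]
  · simpa using hb

theorem card_root_mul_sub_eq_one (hF : ringChar F ≠ 2) (t : F) :
    (Fintype.card {a : F // a * (t - a) - 1 = 0} : ℤ) = quadraticChar F (t ^ 2 - 4) + 1 := by
  have h2 : (2 : F) ≠ 0 := Ring.two_ne_zero hF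
  rw [← quadraticChar_card_sqrts hF, Set.toFinset_card, Nat.cast_inj]
  refine Fintype.card_congr (((Equiv.mulLeft₀ 2 h2).trans (Equiv.subRight t)).subtypeEquiv
    fun a => ?_)
  have complete_square : (2 * a - t) ^ 2 - (t ^ 2 - 4) = -2 ^ 2 * (a * (t - a) - 1) := by ring
  change _ ↔ (2 * a - t) ^ 2 = t ^ 2 - 4
  rw [← sub_eq_zero (b := t ^ 2 - 4), complete_square, mul_eq_zero_iff_left]
  exact neg_ne_zero.2 (pow_ne_zero 2 h2)

theorem card_trace_eq (hF : ringChar F ≠ 2) (t : F) :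
    (Fintype.card {A : SL(2, F) // A.1.trace = t} : ℤ) =
      Fintype.card F ^ 2 + Fintype.card F * quadraticChar F (t ^ 2 - 4) := by
  have hroots := card_root_mul_sub_eq_one hF t
  rw [Fintype.card_subtype] at hroots
  rw [Fintype.card_congr (traceEquiv t), Fintype.card_sigma]
  simp only [card_mul_eq, Finset.sum_add_distrib, ← Finset.sum_filter, Finset.sum_const,
    Finset.card_univ, smul_eq_mul]
  push_cast [Fintype.card_pos (α := F)]
  rw [hroots]
  ring

theorem sum_card_fixedBy_trace_eq {α : Type*} [MulAction SL(2, F) α] (hF : ringChar F ≠ 2) {t : F}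
    (ht : t ^ 2 ≠ 4) :
    ∑ A : SL(2, F) with A.1.trace = t, Nat.card (fixedBy α A) =
      Fintype.card {A : SL(2, F) // A.1.trace = t} * Nat.card (fixedBy α (companion t)) := by
  rw [Fintype.card_subtype, ← smul_eq_mul, ← Finset.sum_const]
  refine Finset.sum_congr rfl fun A hA => ?_
  have htrace := (Finset.mem_filter.1 hA).2
  exact card_fixedBy_eq_of_trace_eq hF (htrace.trans (trace_companion t).symm) (htrace ▸ ht)

end FiniteField

section Seven

local instance : Fact (Nat.Prime 7) := ⟨by norm_num⟩

theorem ringChar_zmod_seven_ne_two : ringChar (ZMod 7) ≠ 2 := by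
  rw [ZMod.ringChar_zmod_n]
  norm_num

theorem card_trace_eq_zmod_seven (t : ZMod 7) :
    Fintype.card {A : SL2 7 // A.1.trace = t} =
      if t ^ 2 = 4 then 49 else if t ^ 2 = 1 then 56 else 42 := by
  have hcard := card_trace_eq ringChar_zmod_seven_ne_two t
  have hchar : ∀ t : ZMod 7, quadraticChar (ZMod 7) (t ^ 2 - 4) =
      if t ^ 2 = 4 then 0 else if t ^ 2 = 1 then 1 else -1 := by decide
  rw [hchar, ZMod.card] at hcard
  split_ifs at hcard ⊢ <;> lia

theorem card_zmod_seven : Nat.card (SL2 7) = 336 := by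
  rw [Nat.card_eq_fintype_card,
    Fintype.card_congr (Equiv.sigmaFiberEquiv fun A : SL2 7 => A.1.trace).symm, Fintype.card_sigma]
  simp only [card_trace_eq_zmod_seven]
  decide

variable {α : Type*} [MulAction (SL2 7) α] [IsPretransitive (SL2 7) α] (hα : Nat.card α = 7)
include hα

theorem fixedBy_eq_empty_of_trace_eq_two {A : SL2 7} (htrace : A.1.trace = 2) (hA : A ≠ 1) :
    fixedBy α A = ∅ := by
  refine fixedBy_eq_empty_of_coprime_card_stabilizer
    (pow_char_eq_one_of_trace_eq_two 7 htrace) hA fun a => ?_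
  have hcard := card_stabilizer_mul_card (G := SL2 7) a
  rw [hα, card_zmod_seven] at hcard
  have hstab : Nat.card (stabilizer (SL2 7) a) = 48 := by lia
  rw [hstab]
  norm_num

theorem sum_card_fixedBy_companion :
    3 * Nat.card (fixedBy α (companion (0 : ZMod 7))) +
      8 * Nat.card (fixedBy α (companion (1 : ZMod 7))) +
      6 * Nat.card (fixedBy α (companion (3 : ZMod 7))) = 23 := by
  have hodd : Odd (Nat.card α) := by rw [hα]; decide
  obtain ⟨_, _⟩ : Nonempty α ∧ Finite α := Nat.card_ne_zero.1 hodd.pos.ne'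
  have burnside := sum_card_fixedBy_of_isPretransitive (G := SL2 7) (α := α)
  have sum_pairs (f : ZMod 7 → ℕ) :
      ∑ t, f t = f 0 + (f 1 + f (-1)) + (f 2 + f (-2)) + (f 3 + f (-3)) := by
    refine (Fin.sum_univ_seven f).trans ?_
    change f 0 + f 1 + f 2 + f 3 + f (-3) + f (-2) + f (-1) = _
    ring
  have sum_trace {t : ZMod 7} (ht : t ^ 2 ≠ 4) :=
    sum_card_fixedBy_trace_eq (α := α) ringChar_zmod_seven_ne_two ht
  have sum_trace_two := sum_card_fixedBy_trace_eq_two fun A htrace hA =>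
    fixedBy_eq_empty_of_trace_eq_two hα (A := A) htrace hA
  have card0 : Fintype.card {A : SL2 7 // A.1.trace = 0} = 42 := card_trace_eq_zmod_seven 0
  have card1 : Fintype.card {A : SL2 7 // A.1.trace = 1} = 56 := card_trace_eq_zmod_seven 1
  have card3 : Fintype.card {A : SL2 7 // A.1.trace = 3} = 42 := card_trace_eq_zmod_seven 3
  rw [card_zmod_seven, ← Finset.sum_fiberwise _ (fun A : SL2 7 => A.1.trace), sum_pairs] at burnside
  simp only [sum_card_fixedBy_trace_eq_neg hodd, sum_trace_two, hα] at burnside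
  rw [sum_trace (by decide), sum_trace (by decide), sum_trace (by decide), card0, card1, card3]
    at burnside
  omega

theorem card_fixedBy_companion :
    Nat.card (fixedBy α (companion (0 : ZMod 7))) = 3 ∧
      Nat.card (fixedBy α (companion (1 : ZMod 7))) = 1 ∧
      Nat.card (fixedBy α (companion (3 : ZMod 7))) = 1 := by
  have : Finite α := Nat.finite_of_card_ne_zero (by rw [hα]; decide)
  have htrace_sq : (companion (3 : ZMod 7)).1.trace ^ 2 = 2 := by rw [trace_companion]; decide
  have hburnside := sum_card_fixedBy_companion hα
  have hle := card_fixedBy_le_of_trace_sq_eq_two (α := α) ringChar_zmod_seven_ne_two htrace_sq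
    (trace_companion 0)
  have hodd := card_modEq_two_card_fixedBy_of_trace_sq_eq_two (α := α) htrace_sq
  rw [hα, Nat.ModEq] at hodd
  omega

theorem card_fixedBy_of_trace_sq_ne_four {A : SL2 7} (hA : A.1.trace ^ 2 ≠ 4) :
    Nat.card (fixedBy α A) = if A.1.trace = 0 then 3 else 1 := by
  obtain ⟨h0, h1, h3⟩ := card_fixedBy_companion hα
  have of_trace (B : SL2 7) (hB : B.1.trace = 0 ∨ B.1.trace = 1 ∨ B.1.trace = 3) :
      Nat.card (fixedBy α B) = if B.1.trace = 0 then 3 else 1 := by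
    rw [card_fixedBy_eq_of_trace_eq ringChar_zmod_seven_ne_two (trace_companion _).symm
      (by rcases hB with hB | hB | hB <;> rw [hB] <;> decide)]
    rcases hB with hB | hB | hB <;> rw [hB]
    exacts [h0, h1, h3]
  have up_to_sign : ∀ t : ZMod 7, t ^ 2 ≠ 4 →
      (t = 0 ∨ t = 1 ∨ t = 3) ∨ (-t = 0 ∨ -t = 1 ∨ -t = 3) := by decide
  rcases up_to_sign _ hA with h | h
  · exact of_trace A h
  · rw [← fixedBy_neg (by rw [hα]; decide), of_trace (-A) (by rwa [trace_neg])]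
    simp only [trace_neg, neg_eq_zero]

theorem card_fixedBy_of_trace_eq_two {A : SL2 7} (htrace : A.1.trace = 2) :
    Nat.card (fixedBy α A) = if A = 1 then 7 else 0 := by
  split_ifs with hA
  · rw [hA, fixedBy_one_eq_univ, Nat.card_univ, hα]
  · rw [fixedBy_eq_empty_of_trace_eq_two hα htrace hA, Nat.card_coe_set_eq, Set.ncard_empty]

theorem card_fixedBy_eq_card_fixedBy {β : Type*} [MulAction (SL2 7) β]
    [IsPretransitive (SL2 7) β] (hβ : Nat.card β = 7) (A : SL2 7) :
    Nat.card (fixedBy α A) = Nat.card (fixedBy β A) := by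
  by_cases hA : A.1.trace ^ 2 = 4
  · have htrace : ∀ t : ZMod 7, t ^ 2 = 4 → t = 2 ∨ -t = 2 := by decide
    rcases htrace _ hA with htwo | hneg_two
    · rw [card_fixedBy_of_trace_eq_two hα htwo, card_fixedBy_of_trace_eq_two hβ htwo]
    · have htwo : (-A).1.trace = 2 := by rw [trace_neg, hneg_two]
      have hoddα : Odd (Nat.card α) := by rw [hα]; decide
      have hoddβ : Odd (Nat.card β) := by rw [hβ]; decide
      rw [← fixedBy_neg hoddα A, ← fixedBy_neg hoddβ A, card_fixedBy_of_trace_eq_two hα htwo,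
        card_fixedBy_of_trace_eq_two hβ htwo]
  · rw [card_fixedBy_of_trace_sq_ne_four hα hA, card_fixedBy_of_trace_sq_ne_four hβ hA]

end Seven

end SL2

namespace PSL2

theorem card_fixedBy_quotient_eq {H₁ H₂ : Subgroup (PSL2 7)} (h₁ : H₁.index = 7)
    (h₂ : H₂.index = 7) (x : PSL2 7) :
    Nat.card (fixedBy (PSL2 7 ⧸ H₁) x) = Nat.card (fixedBy (PSL2 7 ⧸ H₂) x) := by
  let π : SL2 7 →* PSL2 7 := QuotientGroup.mk' _
  have hπ : Function.Surjective π := QuotientGroup.mk'_surjective _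
  let action (H : Subgroup (PSL2 7)) : MulAction (SL2 7) (PSL2 7 ⧸ H) := MulAction.compHom _ π
  have transitive (H : Subgroup (PSL2 7)) : IsPretransitive (SL2 7) (PSL2 7 ⧸ H) :=
    isPretransitive_compHom hπ
  obtain ⟨A, rfl⟩ := hπ x
  exact SL2.card_fixedBy_eq_card_fixedBy (α := PSL2 7 ⧸ H₁) h₁ (β := PSL2 7 ⧸ H₂) h₂ A

end PSL2

theorem stmt_3_general (H₁ H₂ : Subgroup (PSL2 7)) (h₁ : H₁.index = 7) (h₂ : H₂.index = 7) :
    ∀ x : PSL2 7, Nat.card {y : PSL2 7 // IsConj x y ∧ y ∈ H₁} =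
      Nat.card {y : PSL2 7 // IsConj x y ∧ y ∈ H₂} := fun x =>
  card_isConj_mem_eq_of_card_fixedBy_eq (h₁.trans h₂.symm) (PSL2.card_fixedBy_quotient_eq h₁ h₂ x)

/-- If `H₁` and `H₂` are subgroups of `PSL(2,7)` of index 7 that are not
conjugate in `PSL(2,7)`, then for every conjugacy class `C` of `PSL(2,7)` one has
`|C ∩ H₁| = |C ∩ H₂|`; i.e. `(H₁, H₂)` is an almost conjugate (Sunada) pair. -/
theorem stmt_3 (H₁ H₂ : Subgroup (PSL2 7))
    (h₁ : H₁.index = 7) (h₂ : H₂.index = 7)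
    (hnc : ¬ ∃ g : PSL2 7, Subgroup.map (MulAut.conj g).toMonoidHom H₁ = H₂) :
    ∀ x : PSL2 7, Nat.card {y : PSL2 7 // IsConj x y ∧ y ∈ H₁} =
      Nat.card {y : PSL2 7 // IsConj x y ∧ y ∈ H₂} := by
  exact stmt_3_general H₁ H₂ h₁ h₂
end

section
/- If H₁ and H₂ are subgroups of PSL(2,11) of index 11 that are not conjugate in PSL(2,11), then for every conjugacy class C of PSL(2,11) one has |C ∩ H₁| = |C ∩ H₂|; that is, (H₁, H₂) is an almost conjugate (Sunada) pair in PSL(2,11). -/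
/-!
Double counting pairs `(h, y)` with `h ∈ C` and `h • y = y` shows that in a transitive action on
`X` a point stabilizer meets the conjugacy class `C` of `g` in `|C| · |Fix g| / |X|` elements. So it
suffices that `|Fix g|` is the same for all transitive actions of `SL(2, 𝔽₁₁)` on 11 points.

In such an action `-1` acts trivially, since it is a central involution and 11 is odd. The
noncentral elements of trace `±2` have no fixed point, since up to sign their order is 11 and `11²`
does not divide `|SL(2, 𝔽₁₁)| = 1320`. Any other noncentral element is conjugate to the companion
matrix of its characteristic polynomial. Hence `|Fix g| = w (tr g)` for `g ≠ ±1`, where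
`w (-t) = w t` and `w 2 = 0`, and Burnside's lemma reads
`2 · 11 + 110 (w 0 + 2 w 1 + 2 w 5) + 264 (w 3 + w 4) = 1320`. Up to sign, traces 1 and 3 belong to
elements of order 3 and 5, and squaring turns trace 5 into trace 1, so `w 1 ≡ 11 (mod 3)`,
`w 3 ≡ 11 (mod 5)` and `w 5 ≡ w 1 (mod 2)`. These conditions have only one solution in `ℕ`.
-/

namespace Sunada

open MulAction Matrix
open scoped MatrixGroups

section Action

variable {G X : Type*} [Group G] [MulAction G X]

theorem card_fixedBy_eq_of_isConj {g h : G} (hgh : IsConj g h) :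
    Nat.card (fixedBy X g) = Nat.card (fixedBy X h) := by
  obtain ⟨c, rfl⟩ := isConj_iff.mp hgh
  rw [← smul_fixedBy, Set.natCard_smul_set]

theorem card_fixedBy_pow_modEq [Finite X] (g : G) (p : ℕ) [Fact p.Prime] :
    Nat.card (fixedBy X (g ^ p)) ≡ Nat.card (fixedBy X g) [MOD p] := by
  classical
  have := Fintype.ofFinite X
  have maps : Set.MapsTo (g • ·) (fixedBy X (g ^ p)) (fixedBy X (g ^ p)) := fun x hx ↦ by
    rw [mem_fixedBy] at hx ⊢
    rw [smul_smul, ← pow_succ, pow_succ', mul_smul, hx]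
  let σ : Function.End (fixedBy X (g ^ p)) := maps.restrict
  have σ_pow : σ ^ p ^ 1 = 1 := by
    rw [pow_one]
    funext x
    have : (σ ^ p) x = (maps.restrict)^[p] x := rfl
    rw [this, maps.iterate_restrict]
    refine Subtype.ext ?_
    rw [Set.MapsTo.val_restrict_apply, smul_iterate]
    exact x.2
  have fixed : fixedBy X g ≃ σ.fixedPoints :=
    { toFun x :=
        ⟨⟨x, by simpa only [zpow_natCast] using mem_fixedBy_zpow x.2 p⟩, Subtype.ext x.2⟩
      invFun x := ⟨x.1, congrArg Subtype.val x.2⟩ }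
  rw [Nat.card_congr fixed, Nat.card_eq_fintype_card, Nat.card_eq_fintype_card]
  exact Equiv.Perm.card_fixedPoints_modEq σ_pow

variable [IsPretransitive G X]

theorem fixedBy_eq_univ_of_mem_center {g : G} (hg : g ∈ Subgroup.center G)
    (h : (fixedBy X g).Nonempty) : fixedBy X g = Set.univ := by
  obtain ⟨x, hx⟩ := h
  refine Set.eq_univ_of_forall fun y ↦ ?_
  obtain ⟨c, rfl⟩ := exists_smul_eq G x y
  rw [mem_fixedBy, smul_smul, ← Subgroup.mem_center_iff.mp hg c, mul_smul, hx]

theorem fixedBy_eq_empty_of_not_dvd {g : G} (h : ¬ orderOf g * Nat.card X ∣ Nat.card G) :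
    fixedBy X g = ∅ := by
  refine Set.eq_empty_of_forall_notMem fun x hx ↦ h ?_
  rw [← index_stabilizer_of_transitive G x, ← (stabilizer G x).card_mul_index]
  exact mul_dvd_mul_right (Subgroup.orderOf_dvd_natCard _ hx) _

theorem sum_card_fixedBy_eq_card [Fintype G] [Nonempty X] :
    ∑ g : G, Nat.card (fixedBy X g) = Nat.card G := by
  classical
  have := Finite.of_surjective _ (surjective_smul G (Classical.arbitrary X))
  have := Fintype.ofFinite X
  have orbits : Fintype.card (Quotient (orbitRel G X)) = 1 :=
    Fintype.card_eq_one_iff_nonempty_unique.mpr <|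
      (pretransitive_iff_unique_quotient_of_nonempty G X).mp inferInstance
  have burnside := sum_card_fixedBy_eq_card_orbits_mul_card_group G X
  rw [orbits, one_mul] at burnside
  simpa only [Nat.card_eq_fintype_card] using burnside

theorem card_isConj_mem_stabilizer_eq (g : G) (x y : X) :
    Nat.card {h // IsConj g h ∧ h ∈ stabilizer G x} =
      Nat.card {h // IsConj g h ∧ h ∈ stabilizer G y} := by
  obtain ⟨c, rfl⟩ := exists_smul_eq G x y
  refine Nat.card_congr ((MulAut.conj c).toEquiv.subtypeEquiv fun h ↦ ?_)
  have isConj_conj : IsConj h (c * h * c⁻¹) := isConj_iff.mpr ⟨c, rfl⟩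
  have isConj_iff_isConj_conj : IsConj g h ↔ IsConj g (c * h * c⁻¹) :=
    ⟨fun hgh ↦ hgh.trans isConj_conj, fun hgh ↦ hgh.trans isConj_conj.symm⟩
  simp only [isConj_iff_isConj_conj, mem_stabilizer_iff, MulEquiv.toEquiv_eq_coe,
    EquivLike.coe_coe, MulAut.conj_apply, mul_smul, inv_smul_smul, smul_left_cancel_iff]

theorem card_mul_card_isConj_mem_stabilizer [Finite G] (g : G) (x : X) :
    Nat.card X * Nat.card {h // IsConj g h ∧ h ∈ stabilizer G x} =
      Nat.card {h // IsConj g h} * Nat.card (fixedBy X g) := by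
  have := Finite.of_surjective _ (surjective_smul G x)
  have := Fintype.ofFinite X
  have := Fintype.ofFinite {h // IsConj g h}
  have swap : (Σ y : X, {h // IsConj g h ∧ h ∈ stabilizer G y}) ≃
      Σ h : {h // IsConj g h}, fixedBy X h.1 :=
    { toFun p := ⟨⟨p.2, p.2.2.1⟩, p.1, p.2.2.2⟩
      invFun p := ⟨p.2, p.1, p.1.2, p.2.2⟩ }
  calc Nat.card X * Nat.card {h // IsConj g h ∧ h ∈ stabilizer G x}
      = Nat.card (Σ y : X, {h // IsConj g h ∧ h ∈ stabilizer G y}) := by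
        simp only [Nat.card_sigma, card_isConj_mem_stabilizer_eq g _ x, Finset.sum_const,
          Finset.card_univ, smul_eq_mul, Nat.card_eq_fintype_card]
    _ = Nat.card (Σ h : {h // IsConj g h}, fixedBy X h.1) := Nat.card_congr swap
    _ = ∑ _h : {h // IsConj g h}, Nat.card (fixedBy X g) := by
        rw [Nat.card_sigma]
        exact Finset.sum_congr rfl fun h _ ↦ (card_fixedBy_eq_of_isConj h.2).symm
    _ = Nat.card {h // IsConj g h} * Nat.card (fixedBy X g) := by
        rw [Finset.sum_const, Finset.card_univ, smul_eq_mul, Fintype.card_eq_nat_card]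

end Action

section CommRing

variable {R : Type*} [CommRing R]

/-- The companion matrix of `X² - t X + 1`, the standard element of `SL(2, R)` of trace `t`. -/
def companion (t : R) : SL(2, R) := ⟨!![0, -1; 1, t], by rw [det_fin_two_of]; ring⟩

theorem coe_companion (t : R) : (companion t : Matrix (Fin 2) (Fin 2) R) = !![0, -1; 1, t] := rfl

@[simp]
theorem trace_companion (t : R) : (companion t).1.trace = t := by
  simp [companion, trace_fin_two]

theorem companion_ne_one [Nontrivial R] (t : R) : companion t ≠ 1 := fun h ↦ by
  simpa [companion] using congr($h 0 0)

theorem companion_ne_neg_one [Nontrivial R] (t : R) : companion t ≠ -1 := fun h ↦ by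
  simpa [companion] using congr($h 0 0)

-- For `v = (x, y)` the form is `det (v, g v)`; in the basis `(v, g v)`, `g` is a companion matrix.
theorem isConj_companion_of_form_eq_one (g : SL(2, R)) {x y : R}
    (h : g 1 0 * x ^ 2 + (g 1 1 - g 0 0) * x * y + -g 0 1 * y ^ 2 = 1) :
    IsConj (companion g.1.trace) g := by
  have hdet := g.det_coe
  rw [det_fin_two] at hdet
  let P : SL(2, R) := ⟨!![x, g 0 0 * x + g 0 1 * y; y, g 1 0 * x + g 1 1 * y], by
    rw [det_fin_two_of]; linear_combination h⟩
  have hP : (P : Matrix (Fin 2) (Fin 2) R) =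
    !![x, g 0 0 * x + g 0 1 * y; y, g 1 0 * x + g 1 1 * y] := rfl
  refine isConj_iff.mpr ⟨P, mul_inv_eq_of_eq_mul ?_⟩
  ext i j
  fin_cases i <;> fin_cases j <;>
    simp only [Matrix.SpecialLinearGroup.coe_mul, hP, coe_companion, trace_fin_two, mul_apply,
      Fin.sum_univ_two, Fin.zero_eta, Fin.mk_one, Fin.isValue, of_apply, cons_val', cons_val_zero,
      cons_val_one, cons_val_fin_one, mul_zero, mul_one, mul_neg, zero_add]
  · linear_combination x * hdet
  · linear_combination y * hdet

theorem pow_char_eq_one_of_trace_eq_two (p : ℕ) [Fact p.Prime] [CharP R p] (g : SL(2, R))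
    (hg : g.1.trace = 2) : g ^ p = 1 := by
  have := CharP.nontrivial_of_char_ne_one (R := R) (Fact.out : p.Prime).ne_one
  have cayley_hamilton := aeval_self_charpoly g.1
  simp only [charpoly_fin_two, hg, g.det_coe, map_add, map_sub, map_mul, map_pow, map_one,
    map_ofNat, Polynomial.aeval_X] at cayley_hamilton
  have sub_one_pow : (g.1 - 1) ^ p = 0 := by
    refine pow_eq_zero_of_le (Fact.out : p.Prime).two_le ?_
    rw [← cayley_hamilton]
    noncomm_ring
  have frobenius : (g.1 - 1 + 1) ^ p = (g.1 - 1) ^ p + 1 ^ p :=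
    add_pow_char_of_commute _ (Commute.one_right _)
  rw [sub_add_cancel, sub_one_pow, one_pow, zero_add] at frobenius
  exact Subtype.ext ((Matrix.SpecialLinearGroup.coe_pow g p).trans frobenius)

end CommRing

section FiniteField

variable {F : Type*} [Field F]

theorem exists_quadratic_form_eq [Finite F] (hF : ringChar F ≠ 2) {a b c : F}
    (hdisc : discrim a b c ≠ 0) (r : F) : ∃ x y, a * x ^ 2 + b * x * y + c * y ^ 2 = r := by
  have := Fintype.ofFinite F
  have h2 : (2 : F) ≠ 0 := Ring.two_ne_zero hF
  by_cases ha : a = 0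
  · subst ha
    have hb : b ≠ 0 := by rintro rfl; simp [discrim] at hdisc
    exact ⟨(r - c) / b, 1, by field_simp; ring⟩
  · -- Complete the square: solve `u² = discrim a b c * y² + 4 a r`.
    obtain ⟨u, y, h⟩ := FiniteField.exists_root_sum_quadratic
      (f := .X ^ 2 - .C (4 * a * r)) (g := .C (-discrim a b c) * .X ^ 2)
      (Polynomial.degree_X_pow_sub_C two_pos _)
      (Polynomial.degree_C_mul_X_pow 2 (neg_ne_zero.mpr hdisc))
      (FiniteField.odd_card_of_char_ne_two hF)
    simp only [Polynomial.eval_sub, Polynomial.eval_mul, Polynomial.eval_pow, Polynomial.eval_X,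
      Polynomial.eval_C, discrim] at h
    refine ⟨(u - b * y) / (2 * a), y, ?_⟩
    field_simp
    linear_combination h

theorem isConj_companion [Finite F] (hF : ringChar F ≠ 2) (g : SL(2, F))
    (hg : g.1.trace ^ 2 ≠ 4) : IsConj (companion g.1.trace) g := by
  have hdet := g.det_coe
  rw [det_fin_two] at hdet
  have hdisc : discrim (g 1 0) (g 1 1 - g 0 0) (-g 0 1) ≠ 0 := fun h ↦ hg <| by
    rw [trace_fin_two]
    simp only [discrim] at h
    linear_combination h + 4 * hdet
  obtain ⟨x, y, h⟩ := exists_quadratic_form_eq hF hdisc 1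
  exact isConj_companion_of_form_eq_one g h

theorem card_mul_eq [Finite F] (m : F) [Decidable (m = 0)] :
    Nat.card {p : F × F // p.1 * p.2 = m} =
      (Nat.card F - 1) + if m = 0 then Nat.card F else 0 := by
  classical
  have := Fintype.ofFinite F
  have fibre (b : F) : Nat.card {c : F // b * c = m} =
      if b = 0 then if m = 0 then Nat.card F else 0 else 1 := by
    split_ifs with hb hm
    · simp [hb, hm]
    · simp [hb, Ne.symm hm]
    · simp [mul_comm b, ← eq_div_iff hb]
  have fibration : {p : F × F // p.1 * p.2 = m} ≃ Σ b : F, {c : F // b * c = m} :=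
    { toFun p := ⟨p.1.1, p.1.2, p.2⟩
      invFun p := ⟨(p.1, p.2.1), p.2.2⟩ }
  rw [Nat.card_congr fibration, Nat.card_sigma]
  simp only [fibre]
  rw [Fintype.sum_eq_add_sum_compl 0, if_pos rfl, add_comm,
    Finset.sum_congr rfl fun b hb ↦ if_neg (by simpa using hb)]
  simp [Finset.card_compl]

theorem card_trace_eq [Finite F] (t : F) :
    Nat.card {g : SL(2, F) // g.1.trace = t} =
      Nat.card F * (Nat.card F - 1) + Nat.card F * Nat.card {a : F // a * (t - a) = 1} := by
  classical
  have := Fintype.ofFinite F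
  have entries : {g : SL(2, F) // g.1.trace = t} ≃
      Σ a : F, {p : F × F // p.1 * p.2 = a * (t - a) - 1} :=
    { toFun g := ⟨g.1 0 0, (g.1 0 1, g.1 1 0), by
        have hdet := g.1.det_coe
        have htr := g.2
        rw [det_fin_two] at hdet
        rw [trace_fin_two] at htr
        dsimp only
        linear_combination g.1 0 0 * htr - hdet⟩
      invFun p := ⟨⟨!![p.1, p.2.1.1; p.2.1.2, t - p.1], by
        rw [det_fin_two_of]; linear_combination - p.2.2⟩, by
        simp [trace_fin_two_of]⟩
      left_inv g := by
        ext i j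
        have htr := g.2
        rw [trace_fin_two] at htr
        fin_cases i <;> fin_cases j <;> simp [← htr]
      right_inv p := rfl }
  rw [Nat.card_congr entries, Nat.card_sigma]
  simp only [card_mul_eq, Finset.sum_add_distrib, sub_eq_zero]
  simp [← Finset.sum_filter, Fintype.card_subtype, mul_comm]

theorem sum_comp_trace [Fintype F] [DecidableEq F] (w : F → ℕ) :
    ∑ g : SL(2, F), w g.1.trace = ∑ t, Nat.card {g : SL(2, F) // g.1.trace = t} * w t := by
  rw [← Finset.sum_fiberwise Finset.univ (fun g : SL(2, F) ↦ g.1.trace)]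
  refine Finset.sum_congr rfl fun t _ ↦ ?_
  rw [Nat.card_eq_fintype_card, Fintype.card_subtype, ← smul_eq_mul]
  exact Finset.sum_eq_card_nsmul fun g hg ↦ by rw [(Finset.mem_filter.mp hg).2]

end FiniteField

section OddAction

variable {R X : Type*} [CommRing R] [MulAction SL(2, R) X] [IsPretransitive SL(2, R) X]

theorem neg_smul_of_odd_card (hX : Odd (Nat.card X)) (g : SL(2, R)) (x : X) :
    -g • x = g • x := by
  have := Nat.finite_of_card_ne_zero hX.pos.ne'
  have fixed_modEq := card_fixedBy_pow_modEq (X := X) (-1 : SL(2, R)) 2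
  rw [neg_one_sq, fixedBy_one_eq_univ, Nat.card_univ] at fixed_modEq
  have fixed_nonempty : (fixedBy X (-1 : SL(2, R))).Nonempty := by
    refine Set.nonempty_iff_ne_empty.mpr fun h ↦ Nat.not_even_iff_odd.mpr hX ?_
    rw [h, Nat.card_coe_set_eq ∅, Set.ncard_empty] at fixed_modEq
    exact even_iff_two_dvd.mpr (Nat.modEq_zero_iff_dvd.mp fixed_modEq)
  have central : (-1 : SL(2, R)) ∈ Subgroup.center SL(2, R) := by
    simp [Subgroup.mem_center_iff]
  have neg_one_smul : (-1 : SL(2, R)) • x = x :=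
    (fixedBy_eq_univ_of_mem_center central fixed_nonempty).ge (Set.mem_univ x)
  rw [← mul_neg_one, mul_smul, neg_one_smul]

theorem fixedBy_neg_of_odd_card (hX : Odd (Nat.card X)) (g : SL(2, R)) :
    fixedBy X (-g) = fixedBy X g := by
  ext x
  rw [mem_fixedBy, mem_fixedBy, neg_smul_of_odd_card hX]

theorem card_modEq_card_fixedBy_of_pow (hX : Odd (Nat.card X)) (p : ℕ) [Fact p.Prime]
    {g : SL(2, R)} (hg : g ^ p = 1 ∨ g ^ p = -1) :
    Nat.card X ≡ Nat.card (fixedBy X g) [MOD p] := by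
  have := Nat.finite_of_card_ne_zero hX.pos.ne'
  have fixedBy_pow : fixedBy X (g ^ p) = Set.univ := by
    rcases hg with hg | hg <;> simp only [hg, fixedBy_neg_of_odd_card hX, fixedBy_one_eq_univ]
  simpa only [fixedBy_pow, Nat.card_univ] using card_fixedBy_pow_modEq (X := X) g p

theorem fixedBy_eq_empty_of_trace_eq_two (p : ℕ) [Fact p.Prime] [CharP R p]
    (hcard : ¬ p * Nat.card X ∣ Nat.card SL(2, R)) {g : SL(2, R)} (htr : g.1.trace = 2)
    (hg : g ≠ 1) : fixedBy X g = ∅ := by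
  refine fixedBy_eq_empty_of_not_dvd ?_
  rwa [orderOf_eq_prime (pow_char_eq_one_of_trace_eq_two p g htr) hg]

end OddAction

section Eleven

instance fact_prime_eleven : Fact (Nat.Prime 11) := ⟨by norm_num⟩

theorem sum_comp_trace_eleven (w : ZMod 11 → ℕ) :
    ∑ g : SL2 11, w g.1.trace =
      110 * (w 0 + w 1 + w (-1) + w 5 + w (-5)) + 121 * (w 2 + w (-2)) +
        132 * (w 3 + w (-3) + w 4 + w (-4)) := by
  have count (t : ZMod 11) : Nat.card {g : SL2 11 // g.1.trace = t} =
      (![110, 110, 121, 132, 132, 110, 110, 132, 132, 121, 110] : Fin 11 → ℕ) t := by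
    rw [card_trace_eq, Nat.card_zmod, Nat.card_eq_fintype_card, Fintype.card_subtype]
    fin_cases t <;> rfl
  have univ_eq : (Finset.univ : Finset (ZMod 11)) = {0, 1, -1, 5, -5, 2, -2, 3, -3, 4, -4} := by
    decide
  simp only [sum_comp_trace, count]
  rw [univ_eq]
  repeat rw [Finset.sum_insert (by decide)]
  rw [Finset.sum_singleton]
  calc
    _ = 110 * w 0 + (110 * w 1 + (110 * w (-1) + (110 * w 5 + (110 * w (-5) + (121 * w 2 +
        (121 * w (-2) + (132 * w 3 + (132 * w (-3) + (132 * w 4 + 132 * w (-4)))))))))) := rfl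
    _ = _ := by ring

theorem card_SL2_eleven : Nat.card (SL2 11) = 1320 := by
  rw [Nat.card_eq_fintype_card, Fintype.card_eq_sum_ones, sum_comp_trace_eleven fun _ ↦ 1]

variable {X : Type*} [MulAction (SL2 11) X] [IsPretransitive (SL2 11) X]

theorem fixedBy_eq_empty_of_trace_sq_eq_four (hX : Nat.card X = 11) {g : SL2 11}
    (htr : g.1.trace ^ 2 = 4) (hg : g ≠ 1) (hg' : g ≠ -1) : fixedBy X g = ∅ := by
  have hodd : Odd (Nat.card X) := by rw [hX]; decide
  have hcard : ¬ 11 * Nat.card X ∣ Nat.card (SL2 11) := by rw [hX, card_SL2_eleven]; decide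
  have htr' : g.1.trace = 2 ∨ g.1.trace = -2 := by
    rw [← sq_eq_sq_iff_eq_or_eq_neg, htr]; norm_num
  rcases htr' with htr | htr
  · exact fixedBy_eq_empty_of_trace_eq_two 11 hcard htr hg
  · rw [← fixedBy_neg_of_odd_card hodd]
    refine fixedBy_eq_empty_of_trace_eq_two 11 hcard ?_ (by rwa [ne_eq, neg_eq_iff_eq_neg])
    simp [htr]

theorem card_fixedBy_companion_of_sq_eq_four (hX : Nat.card X = 11) {t : ZMod 11}
    (ht : t ^ 2 = 4) : Nat.card (fixedBy X (companion t)) = 0 := by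
  rw [fixedBy_eq_empty_of_trace_sq_eq_four hX (by rwa [trace_companion]) (companion_ne_one _)
    (companion_ne_neg_one _), Nat.card_coe_set_eq, Set.ncard_empty]

theorem card_fixedBy_eq_card_fixedBy_companion (hX : Nat.card X = 11) {g : SL2 11} (hg : g ≠ 1)
    (hg' : g ≠ -1) : Nat.card (fixedBy X g) = Nat.card (fixedBy X (companion g.1.trace)) := by
  by_cases htr : g.1.trace ^ 2 = 4
  · rw [fixedBy_eq_empty_of_trace_sq_eq_four hX htr hg hg', Nat.card_coe_set_eq ∅,
      Set.ncard_empty, card_fixedBy_companion_of_sq_eq_four hX htr]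
  · have hchar : ringChar (ZMod 11) ≠ 2 := by rw [ZMod.ringChar_zmod_n]; decide
    exact (card_fixedBy_eq_of_isConj (isConj_companion hchar g htr)).symm

theorem card_fixedBy_eq_ite_add (hX : Nat.card X = 11) (g : SL2 11) :
    Nat.card (fixedBy X g) =
      (if g = 1 ∨ g = -1 then 11 else 0) + Nat.card (fixedBy X (companion g.1.trace)) := by
  have hodd : Odd (Nat.card X) := by rw [hX]; decide
  split_ifs with hg
  · have htr : g.1.trace ^ 2 = 4 := by rcases hg with rfl | rfl <;> decide
    have hfix : fixedBy X g = Set.univ := by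
      rcases hg with rfl | rfl <;> simp only [fixedBy_neg_of_odd_card hodd, fixedBy_one_eq_univ]
    rw [hfix, Nat.card_univ, hX, card_fixedBy_companion_of_sq_eq_four hX htr]
  · rw [not_or] at hg
    rw [card_fixedBy_eq_card_fixedBy_companion hX hg.1 hg.2, zero_add]

theorem card_fixedBy_companion_neg (hX : Nat.card X = 11) (t : ZMod 11) :
    Nat.card (fixedBy X (companion (-t))) = Nat.card (fixedBy X (companion t)) := by
  have hodd : Odd (Nat.card X) := by rw [hX]; decide
  have hne_one : -companion t ≠ 1 := by
    rw [ne_eq, neg_eq_iff_eq_neg]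
    exact companion_ne_neg_one t
  have hne_neg_one : -companion t ≠ -1 := neg_injective.ne (companion_ne_one t)
  have htr : (-companion t).1.trace = -t := by simp
  rw [← fixedBy_neg_of_odd_card hodd (companion t),
    card_fixedBy_eq_card_fixedBy_companion hX hne_one hne_neg_one, htr]

theorem sum_card_fixedBy_companion (hX : Nat.card X = 11) :
    2 * 11 + ∑ g : SL2 11, Nat.card (fixedBy X (companion g.1.trace)) =
      Nat.card (SL2 11) := by
  have : Nonempty X := (Nat.card_pos_iff.mp (by rw [hX]; decide)).1
  have card_center : (Finset.univ.filter fun g : SL2 11 ↦ g = 1 ∨ g = -1).card = 2 := by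
    rw [Finset.filter_or, Finset.filter_eq', Finset.filter_eq', if_pos (Finset.mem_univ _),
      if_pos (Finset.mem_univ _)]
    exact Finset.card_pair (show (1 : SL2 11) ≠ -1 by decide)
  rw [← sum_card_fixedBy_eq_card (X := X),
    Finset.sum_congr rfl fun g _ ↦ card_fixedBy_eq_ite_add hX g, Finset.sum_add_distrib,
    ← Finset.sum_filter, Finset.sum_const, card_center, smul_eq_mul]

/-- The number of fixed points of an element `g ≠ ±1` of trace `t` in a transitive action of
`SL(2, 𝔽₁₁)` on 11 points. Indexing by `Fin 11` lists the traces as `0, …, 5, -5, …, -1`. -/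
def fixedPointCount (t : ZMod 11) : ℕ := (![3, 2, 0, 1, 1, 0, 0, 1, 1, 0, 2] : Fin 11 → ℕ) t

theorem eq_of_burnside_of_modEq {w₀ w₁ w₃ w₄ w₅ : ℕ}
    (burnside : 2 * 11 + (110 * (w₀ + w₁ + w₁ + w₅ + w₅) + 132 * (w₃ + w₃ + w₄ + w₄)) = 1320)
    (h₁ : 11 ≡ w₁ [MOD 3]) (h₃ : 11 ≡ w₃ [MOD 5]) (h₅ : w₁ ≡ w₅ [MOD 2]) :
    w₀ = 3 ∧ w₁ = 2 ∧ w₃ = 1 ∧ w₄ = 1 ∧ w₅ = 0 := by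
  simp only [Nat.ModEq] at h₁ h₃ h₅
  have : w₃ = 1 := by omega
  have : w₄ = 1 := by omega
  omega

theorem card_fixedBy_companion_of_mem (hX : Nat.card X = 11) :
    ∀ t ∈ ({0, 1, 2, 3, 4, 5} : Finset (ZMod 11)),
      Nat.card (fixedBy X (companion t)) = fixedPointCount t := by
  have hodd : Odd (Nat.card X) := by rw [hX]; decide
  have := Nat.finite_of_card_ne_zero hodd.pos.ne'
  have : Fact (Nat.Prime 5) := ⟨by norm_num⟩
  have fix_one : 11 ≡ Nat.card (fixedBy X (companion (1 : ZMod 11))) [MOD 3] := by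
    simpa only [hX] using card_modEq_card_fixedBy_of_pow hodd 3 (g := companion 1) (by decide)
  have fix_two : Nat.card (fixedBy X (companion (2 : ZMod 11))) = 0 :=
    card_fixedBy_companion_of_sq_eq_four hX (by decide)
  have fix_three : 11 ≡ Nat.card (fixedBy X (companion (3 : ZMod 11))) [MOD 5] := by
    simpa only [hX] using card_modEq_card_fixedBy_of_pow hodd 5 (g := companion 3) (by decide)
  have fix_five : Nat.card (fixedBy X (companion (1 : ZMod 11))) ≡
      Nat.card (fixedBy X (companion (5 : ZMod 11))) [MOD 2] := by
    have trace_sq : (companion (5 : ZMod 11) ^ 2).1.trace = 1 := by decide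
    have fix_sq := card_fixedBy_pow_modEq (X := X) (companion (5 : ZMod 11)) 2
    rwa [card_fixedBy_eq_card_fixedBy_companion hX (g := companion 5 ^ 2) (by decide) (by decide),
      trace_sq] at fix_sq
  have burnside := sum_card_fixedBy_companion hX
  rw [sum_comp_trace_eleven fun t ↦ Nat.card (fixedBy X (companion t)), card_SL2_eleven] at burnside
  simp only [card_fixedBy_companion_neg hX, fix_two, add_zero, mul_zero] at burnside
  obtain ⟨h₀, h₁, h₃, h₄, h₅⟩ := eq_of_burnside_of_modEq burnside fix_one fix_three fix_five
  simp only [Finset.forall_mem_insert, Finset.mem_singleton, forall_eq]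
  exact ⟨h₀, h₁, fix_two, h₃, h₄, h₅⟩

theorem card_fixedBy_companion (hX : Nat.card X = 11) (t : ZMod 11) :
    Nat.card (fixedBy X (companion t)) = fixedPointCount t := by
  have rep : ∀ t : ZMod 11, ∃ s ∈ ({0, 1, 2, 3, 4, 5} : Finset (ZMod 11)), t = s ∨ t = -s := by
    decide
  have fixedPointCount_neg : ∀ s : ZMod 11, fixedPointCount (-s) = fixedPointCount s := by decide
  obtain ⟨s, hs, rfl | rfl⟩ := rep t
  · exact card_fixedBy_companion_of_mem hX t hs
  · rw [card_fixedBy_companion_neg hX, fixedPointCount_neg, card_fixedBy_companion_of_mem hX s hs]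

theorem card_fixedBy_eq (hX : Nat.card X = 11) (g : SL2 11) :
    Nat.card (fixedBy X g) =
      (if g = 1 ∨ g = -1 then 11 else 0) + fixedPointCount g.1.trace := by
  rw [card_fixedBy_eq_ite_add hX, card_fixedBy_companion hX]

theorem card_isConj_mem_of_index_eq_eleven {H : Subgroup (PSL2 11)} (hH : H.index = 11)
    (g : SL2 11) :
    11 * Nat.card {y : PSL2 11 // IsConj (g : PSL2 11) y ∧ y ∈ H} =
      Nat.card {y : PSL2 11 // IsConj (g : PSL2 11) y} *
        ((if g = 1 ∨ g = -1 then 11 else 0) + fixedPointCount g.1.trace) := by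
  let : MulAction (SL2 11) (PSL2 11 ⧸ H) :=
    MulAction.compHom _ (QuotientGroup.mk' (Subgroup.center (SL2 11)))
  have : IsPretransitive (SL2 11) (PSL2 11 ⧸ H) := ⟨fun x y ↦ by
    obtain ⟨c, hc⟩ := exists_smul_eq (PSL2 11) x y
    obtain ⟨k, rfl⟩ := QuotientGroup.mk_surjective c
    exact ⟨k, hc⟩⟩
  have double_count :=
    card_mul_card_isConj_mem_stabilizer (g : PSL2 11) ((1 : PSL2 11) : PSL2 11 ⧸ H)
  rw [stabilizer_quotient] at double_count
  rw [← card_fixedBy_eq (X := PSL2 11 ⧸ H) hH g]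
  exact (congrArg (· * _) hH.symm).trans double_count

end Eleven

end Sunada

theorem stmt_4_general (H₁ H₂ : Subgroup (PSL2 11)) (h₁ : H₁.index = 11)
    (h₂ : H₂.index = 11) (x : PSL2 11) :
    Nat.card {y : PSL2 11 // IsConj x y ∧ y ∈ H₁} =
      Nat.card {y : PSL2 11 // IsConj x y ∧ y ∈ H₂} := by
  obtain ⟨g, rfl⟩ := QuotientGroup.mk_surjective x
  refine Nat.eq_of_mul_eq_mul_left (show 0 < 11 by norm_num) ?_
  rw [Sunada.card_isConj_mem_of_index_eq_eleven h₁,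
    Sunada.card_isConj_mem_of_index_eq_eleven h₂]

/-- If `H₁` and `H₂` are subgroups of `PSL(2,11)` of index 11 that are not
conjugate in `PSL(2,11)`, then for every conjugacy class `C` of `PSL(2,11)` one has
`|C ∩ H₁| = |C ∩ H₂|`; i.e. `(H₁, H₂)` is an almost conjugate (Sunada) pair. -/
theorem stmt_4 (H₁ H₂ : Subgroup (PSL2 11))
    (h₁ : H₁.index = 11) (h₂ : H₂.index = 11)
    (hnc : ¬ ∃ g : PSL2 11, Subgroup.map (MulAut.conj g).toMonoidHom H₁ = H₂) :
    ∀ x : PSL2 11, Nat.card {y : PSL2 11 // IsConj x y ∧ y ∈ H₁} =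
      Nat.card {y : PSL2 11 // IsConj x y ∧ y ∈ H₂} :=
  stmt_4_general H₁ H₂ h₁ h₂
end

section
/- The group PSL(2,7) has exactly two conjugacy classes of subgroups of index 7: there exist subgroups H₁ and H₂ of PSL(2,7) of index 7 that are not conjugate to each other, and every subgroup of PSL(2,7) of index 7 is conjugate either to H₁ or to H₂. -/
/-!
`PSL(2,7)` is isomorphic to `GL(3,2)`. Let `ζ` generate `𝔽₈ˣ`, with `ζ ^ 3 = ζ + 1`, and identify
the projective line over `𝔽₇` with `𝔽₈ ≅ 𝔽₂³` by sending `∞` to `0` and `a` to `ζ ^ a`. Then the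
translation `x ↦ x + c` becomes multiplication by `ζ ^ c`, and `x ↦ -1 / x` becomes the affine map
`y ↦ 1 + σ y`, where `σ` is linear, fixes `1` and exchanges `ζ` and `ζ ^ 2`. These Möbius maps
generate, so `PSL(2,7)` acts on `𝔽₂³` by affine maps. Taking linear parts gives a nontrivial
homomorphism to `GL(3,2)`; it is injective by simplicity, and both groups have order `168`.

A subgroup `K` of `GL(3,2)` of index `7` has order `24`, so it is not transitive on the seven
nonzero vectors and has an orbit of at most three of them. If the sum of that orbit is nonzero, it
is a vector fixed by `K`. Otherwise the orbit consists of the nonzero vectors of a plane, and `K`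
fixes the covector defining this plane. As the stabilizers of nonzero vectors and of nonzero
covectors also have index `7`, the subgroup `K` is one of these. Each kind is a single conjugacy
class, and they differ because the stabilizer of a nonzero vector fixes no nonzero covector.
-/

open Matrix MulAction OnePoint

section Group

variable {G G' A P : Type*} [Group G] [Group G'] [Group A] [Group P]

theorem map_conj_comap (e : G ≃* G') (H : Subgroup G') (g : G) :
    (H.comap e.toMonoidHom).map (MulAut.conj g).toMonoidHom =
      (H.map (MulAut.conj (e g)).toMonoidHom).comap e.toMonoidHom := by
  ext x
  rw [Subgroup.mem_map_equiv, Subgroup.mem_comap, Subgroup.mem_comap, Subgroup.mem_map_equiv]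
  simp

theorem exists_map_conj_comap_iff (e : G ≃* G') {H K : Subgroup G'} :
    (∃ g, (H.comap e.toMonoidHom).map (MulAut.conj g).toMonoidHom = K.comap e.toMonoidHom) ↔
      ∃ g, H.map (MulAut.conj g).toMonoidHom = K := by
  have hinj : Function.Injective (Subgroup.comap e.toMonoidHom) :=
    Subgroup.comap_injective e.surjective
  simp only [map_conj_comap, hinj.eq_iff, e.surjective.exists]

theorem subgroup_eq_of_le_of_index_eq {H K : Subgroup G} [H.FiniteIndex] (hle : H ≤ K)
    (hindex : H.index = K.index) : H = K :=
  hle.eq_of_not_lt fun hlt => (Subgroup.index_strictAnti hlt).ne' hindex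

theorem exists_comp_eq_of_range_le {f : G →* P} {j : A →* P} (hj : Function.Injective j)
    (h : f.range ≤ j.range) : ∃ φ : G →* A, j.comp φ = f := by
  refine ⟨(MonoidHom.ofInjective hj).symm.toMonoidHom.comp
    (f.codRestrict j.range fun g => h ⟨g, rfl⟩), MonoidHom.ext fun g => ?_⟩
  exact congrArg Subtype.val ((MonoidHom.ofInjective hj).apply_symm_apply _)

theorem injective_of_ne_one [IsSimpleGroup G] {f : G →* P} (hf : f ≠ 1) :
    Function.Injective f := by
  rw [← MonoidHom.ker_eq_bot_iff]
  exact f.normal_ker.eq_bot_or_eq_top.resolve_right fun h => hf (MonoidHom.ker_eq_top_iff.mp h)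

theorem smul_sum_eq_sum {M : Type*} [AddCommMonoid M] [DistribMulAction G M] {s : Finset M} {g : G}
    (hs : ∀ x ∈ s, g • x ∈ s) : g • ∑ x ∈ s, x = ∑ x ∈ s, x := by
  rw [Finset.smul_sum]
  exact Finset.sum_nbij (g • ·) hs (MulAction.injective g).injOn
    (Finset.surjOn_of_injOn_of_card_le _ hs (MulAction.injective g).injOn le_rfl) fun _ _ => rfl

theorem exists_two_mul_ncard_orbit_le {α : Type*} [MulAction G α] {s : Set α} (hfin : s.Finite)
    (hne : s.Nonempty) (hs : ∀ a ∈ s, orbit G a ⊆ s) (hdvd : ¬ s.ncard ∣ Nat.card G) :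
    ∃ a ∈ s, 2 * (orbit G a).ncard ≤ s.ncard := by
  obtain ⟨a, ha⟩ := hne
  obtain ⟨b, hb, hab⟩ : ∃ b ∈ s, b ∉ orbit G a := by
    by_contra! htrans
    apply hdvd
    rw [← (hs a ha).antisymm htrans, ← index_stabilizer]
    exact Subgroup.index_dvd_card _
  have hdisj : Disjoint (orbit G a) (orbit G b) :=
    (orbit.eq_or_disjoint a b).resolve_left fun h => hab (h ▸ mem_orbit_self b)
  have hsum : (orbit G a).ncard + (orbit G b).ncard ≤ s.ncard := by
    rw [← Set.ncard_union_eq hdisj (hfin.subset (hs a ha)) (hfin.subset (hs b hb))]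
    exact Set.ncard_le_ncard (Set.union_subset (hs a ha) (hs b hb)) hfin
  rcases le_total (orbit G a).ncard (orbit G b).ncard with h | h
  · exact ⟨a, ha, by lia⟩
  · exact ⟨b, hb, by lia⟩

end Group

section Contragredient

variable (n R : Type*) [Fintype n] [DecidableEq n] [CommRing R]

/-- The contragredient automorphism `g ↦ (gᵀ)⁻¹`. It describes the action of `GL n R` on covectors
in the dual basis, so the preimage under it of the stabilizer of `w` is the stabilizer of `w`
considered as a covector. -/
def contragredient : GL n R ≃* GL n R :=
  ((Units.mapEquiv (transposeRingEquiv n R).toMulEquiv).trans Units.opEquiv).trans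
    (MulEquiv.inv' (GL n R)).symm

variable {n R}

theorem transpose_mulVec_contragredient_smul (g : GL n R) (v : n → R) :
    (g : Matrix n n R)ᵀ *ᵥ (contragredient n R g • v) = v := by
  change (g : Matrix n n R)ᵀ *ᵥ ((↑g⁻¹ : Matrix n n R)ᵀ *ᵥ v) = v
  rw [mulVec_mulVec, ← transpose_mul, Units.inv_mul, transpose_one, one_mulVec]

theorem contragredient_smul_eq_iff {g : GL n R} {v w : n → R} :
    contragredient n R g • v = w ↔ (g : Matrix n n R)ᵀ *ᵥ w = v := by
  have hinj := mulVec_injective_of_isUnit ((isUnit_transpose _).mpr g.isUnit)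
  rw [← hinj.eq_iff, transpose_mulVec_contragredient_smul, eq_comm]

end Contragredient

section CrossProduct

variable {R : Type*} [CommRing R]

theorem transpose_mulVec_cross (A : Matrix (Fin 3) (Fin 3) R) (v w : Fin 3 → R) :
    Aᵀ *ᵥ ((A *ᵥ v) ⨯₃ (A *ᵥ w)) = A.det • (v ⨯₃ w) := by
  refine dotProduct_eq _ _ fun u => ?_
  have hrows : of ![A *ᵥ u, A *ᵥ v, A *ᵥ w] = of ![u, v, w] * Aᵀ := by
    ext i j
    fin_cases i <;> simp [mulVec, mul_apply, dotProduct, mul_comm]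
  calc (Aᵀ *ᵥ ((A *ᵥ v) ⨯₃ (A *ᵥ w))) ⬝ᵥ u = (A *ᵥ u) ⬝ᵥ ((A *ᵥ v) ⨯₃ (A *ᵥ w)) := by
        rw [mulVec_transpose, ← dotProduct_mulVec, dotProduct_comm]
    _ = (of ![u, v, w] * Aᵀ).det := by rw [triple_product_eq_det, ← hrows]; rfl
    _ = A.det * u ⬝ᵥ (v ⨯₃ w) := by
        rw [det_mul, det_transpose, triple_product_eq_det, mul_comm]; rfl
    _ = (A.det • (v ⨯₃ w)) ⬝ᵥ u := by rw [smul_dotProduct, dotProduct_comm u, smul_eq_mul]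

theorem det_smul_contragredient_smul_cross (g : GL (Fin 3) R) (v w : Fin 3 → R) :
    g.det • contragredient (Fin 3) R g • (v ⨯₃ w) = (g • v) ⨯₃ (g • w) := by
  rw [smul_comm, contragredient_smul_eq_iff]
  exact transpose_mulVec_cross _ v w

theorem cross_eq_cross_of_mem [CharP R 2] [DecidableEq R] {a b x y : Fin 3 → R}
    (hx : x ∈ ({a, b, a + b} : Finset _)) (hy : y ∈ ({a, b, a + b} : Finset _)) (hxy : x ≠ y) :
    x ⨯₃ y = a ⨯₃ b := by
  have hba : b ⨯₃ a = a ⨯₃ b := by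
    rw [← cross_anticomm]
    exact funext fun i => CharTwo.neg_eq _
  simp only [Finset.mem_insert, Finset.mem_singleton] at hx hy
  rcases hx with rfl | rfl | rfl <;> rcases hy with rfl | rfl | rfl <;>
    simp_all [cross_self]

theorem cross_ne_zero_of_ne {a b : Fin 3 → ZMod 2} (ha : a ≠ 0) (hb : b ≠ 0) (hab : a ≠ b) :
    a ⨯₃ b ≠ 0 := by
  rw [crossProduct_ne_zero_iff_linearIndependent, LinearIndependent.pair_iff' ha]
  intro c
  obtain rfl | rfl : c = 0 ∨ c = 1 := by decide +revert
  · simpa using hb.symm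
  · simpa using hab

end CrossProduct

section VectorStabilizer

variable {n F : Type*} [Fintype n] [DecidableEq n] [Field F]

/-- The identification of linear automorphisms of `n → F` with invertible matrices, in the
standard basis. -/
noncomputable def linearAutEquivGL : ((n → F) ≃ₗ[F] (n → F)) ≃* GL n F :=
  (LinearMap.GeneralLinearGroup.generalLinearEquiv F (n → F)).symm.trans
    GeneralLinearGroup.toLin.symm

theorem linearAutEquivGL_symm_apply (g : GL n F) (v : n → F) :
    linearAutEquivGL.symm g v = g • v := rfl

theorem linearAutEquivGL_smul (f : (n → F) ≃ₗ[F] (n → F)) (v : n → F) :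
    linearAutEquivGL f • v = f v := by
  rw [← linearAutEquivGL_symm_apply, MulEquiv.symm_apply_apply]

theorem exists_smul_eq_of_ne_zero {v w : n → F} (hv : v ≠ 0) (hw : w ≠ 0) :
    ∃ g : GL n F, g • v = w := by
  obtain ⟨f, hf⟩ := Submodule.exists_linearEquiv_restrict_eq
    ((LinearEquiv.toSpanNonzeroSingleton F _ v hv).symm.trans
      (LinearEquiv.toSpanNonzeroSingleton F _ w hw))
  refine ⟨linearAutEquivGL f, ?_⟩
  have hfv := hf (LinearEquiv.toSpanNonzeroSingleton F _ v hv 1)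
  rw [LinearEquiv.trans_apply, LinearEquiv.symm_apply_apply] at hfv
  rw [linearAutEquivGL_smul]
  simpa only [LinearEquiv.toSpanNonzeroSingleton_apply, one_smul] using hfv.symm

theorem orbit_eq_compl_zero {v : n → F} (hv : v ≠ 0) : orbit (GL n F) v = {0}ᶜ := by
  ext w
  refine ⟨?_, exists_smul_eq_of_ne_zero hv⟩
  rintro ⟨g, rfl⟩
  exact (smul_ne_zero_iff_ne g).mpr hv

theorem index_stabilizer_of_ne_zero [Finite F] {v : n → F} (hv : v ≠ 0) :
    (stabilizer (GL n F) v).index = Nat.card F ^ Fintype.card n - 1 := by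
  rw [index_stabilizer, orbit_eq_compl_zero hv, Set.ncard_compl, Set.ncard_singleton, Nat.card_fun,
    Nat.card_eq_fintype_card (α := n)]

theorem exists_map_conj_stabilizer_eq {v w : n → F} (hv : v ≠ 0) (hw : w ≠ 0) :
    ∃ g, (stabilizer (GL n F) v).map (MulAut.conj g).toMonoidHom = stabilizer (GL n F) w := by
  obtain ⟨g, rfl⟩ := exists_smul_eq_of_ne_zero hv hw
  exact ⟨g, (stabilizer_smul_eq_stabilizer_map_conj g v).symm⟩

-- For every `x` there is `y ≠ 0` orthogonal to `v` and `x`. The transvection `1 + x yᵀ` fixes `v`,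
-- and it fixes `w` as a covector only if `w` is orthogonal to `x`.
theorem eq_zero_of_stabilizer_le_comap_contragredient (hn : 2 < Fintype.card n) {v w : n → F}
    (h : stabilizer (GL n F) v ≤
      (stabilizer (GL n F) w).comap (contragredient n F).toMonoidHom) : w = 0 := by
  refine dotProduct_eq_zero _ fun x => ?_
  obtain ⟨y, hy, hy0⟩ : ∃ y ∈ (of ![v, x]).mulVecLin.ker, y ≠ 0 :=
    Submodule.exists_mem_ne_zero_of_ne_bot
      (LinearMap.ker_ne_bot_of_finrank_lt (by simpa using hn))
  obtain ⟨hvy, hxy⟩ : v ⬝ᵥ y = 0 ∧ x ⬝ᵥ y = 0 := by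
    simpa [funext_iff, Fin.forall_fin_two, mulVec] using hy
  have hdet : (1 + vecMulVec x y).det ≠ 0 := by
    rw [vecMulVec_eq Unit, det_one_add_replicateCol_mul_replicateRow, dotProduct_comm, hxy]
    simp
  let t : GL n F := GeneralLinearGroup.mkOfDetNeZero (1 + vecMulVec x y) hdet
  have htv : t • v = v := by
    change (1 + vecMulVec x y) *ᵥ v = v
    simp [add_mulVec, vecMulVec_mulVec, dotProduct_comm y, hvy]
  have htw : (1 + vecMulVec x y)ᵀ *ᵥ w = w := contragredient_smul_eq_iff.mp (h htv)
  rw [transpose_add, transpose_one, transpose_vecMulVec, add_mulVec, one_mulVec, vecMulVec_mulVec,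
    op_smul_eq_smul, add_eq_left, smul_eq_zero] at htw
  rw [dotProduct_comm]
  exact htw.resolve_right hy0

theorem not_exists_map_conj_stabilizer_eq_comap_contragredient (hn : 2 < Fintype.card n)
    {v w : n → F} (hw : w ≠ 0) :
    ¬ ∃ g, (stabilizer (GL n F) v).map (MulAut.conj g).toMonoidHom =
      (stabilizer (GL n F) w).comap (contragredient n F).toMonoidHom := by
  rintro ⟨g, hg⟩
  rw [← stabilizer_smul_eq_stabilizer_map_conj] at hg
  exact hw (eq_zero_of_stabilizer_le_comap_contragredient hn hg.le)

end VectorStabilizer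

section IndexSeven

theorem exists_eq_insert_add_of_sum_eq_zero {A : Type*} [AddCommGroup A] [Module (ZMod 2) A]
    [DecidableEq A] {s : Finset A} (hs : s.Nonempty) (hs0 : 0 ∉ s) (hcard : s.card ≤ 3)
    (hsum : ∑ x ∈ s, x = 0) : ∃ a b, a ≠ b ∧ s = {a, b, a + b} := by
  have hadd (a b : A) : a + b = 0 ↔ a = b := by
    rw [add_eq_zero_iff_eq_neg, ZModModule.neg_eq_self]
  have hpos := hs.card_pos
  interval_cases h : s.card
  · obtain ⟨a, rfl⟩ := Finset.card_eq_one.mp h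
    simp_all
  · obtain ⟨a, b, hab, rfl⟩ := Finset.card_eq_two.mp h
    rw [Finset.sum_pair hab, hadd] at hsum
    exact absurd hsum hab
  · obtain ⟨a, b, c, hab, hac, hbc, rfl⟩ := Finset.card_eq_three.mp h
    rw [Finset.sum_insert (by simp [hab, hac]), Finset.sum_pair hbc, ← add_assoc, hadd] at hsum
    exact ⟨a, b, hab, by rw [hsum]⟩

variable {K : Subgroup (GL (Fin 3) (ZMod 2))}

theorem exists_le_stabilizer_of_forall_smul_mem {s : Finset (Fin 3 → ZMod 2)} (hs : s.Nonempty)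
    (hs0 : 0 ∉ s) (hcard : s.card ≤ 3) (hK : ∀ g ∈ K, ∀ x ∈ s, g • x ∈ s) :
    ∃ w : Fin 3 → ZMod 2, w ≠ 0 ∧ (K ≤ stabilizer _ w ∨
      K ≤ (stabilizer _ w).comap (contragredient (Fin 3) (ZMod 2)).toMonoidHom) := by
  by_cases hsum : ∑ x ∈ s, x = 0
  · obtain ⟨a, b, hab, rfl⟩ := exists_eq_insert_add_of_sum_eq_zero hs hs0 hcard hsum
    refine ⟨a ⨯₃ b, cross_ne_zero_of_ne ?_ ?_ hab, .inr fun g hg => ?_⟩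
    · rintro rfl
      simp at hs0
    · rintro rfl
      simp at hs0
    have hdet : g.det = 1 := Subsingleton.elim _ _
    calc contragredient _ _ g • (a ⨯₃ b) = (g • a) ⨯₃ (g • b) := by
          rw [← det_smul_contragredient_smul_cross, hdet, one_smul]
      _ = a ⨯₃ b := cross_eq_cross_of_mem (hK g hg a (by simp)) (hK g hg b (by simp)) (by simpa)
  · exact ⟨_, hsum, .inl fun g hg => smul_sum_eq_sum (hK g hg)⟩

theorem exists_orbit_ncard_le_three (hK : ¬ 7 ∣ Nat.card K) :
    ∃ v : Fin 3 → ZMod 2, v ≠ 0 ∧ (orbit K v).ncard ≤ 3 := by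
  have hcompl : ({0}ᶜ : Set (Fin 3 → ZMod 2)).ncard = 7 := by
    rw [Set.ncard_compl, Set.ncard_singleton]
    simp
  have horbit : ∀ v ∈ ({0}ᶜ : Set (Fin 3 → ZMod 2)), orbit K v ⊆ {0}ᶜ := by
    rintro v hv _ ⟨g, rfl⟩
    exact (smul_ne_zero_iff_ne g).mpr hv
  obtain ⟨v, hv, hcard⟩ := exists_two_mul_ncard_orbit_le (Set.toFinite _)
    (Set.nonempty_compl_of_nontrivial 0) horbit (hcompl ▸ hK)
  exact ⟨v, hv, by lia⟩

theorem exists_le_stabilizer_of_not_dvd_card (hK : ¬ 7 ∣ Nat.card K) :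
    ∃ w : Fin 3 → ZMod 2, w ≠ 0 ∧ (K ≤ stabilizer _ w ∨
      K ≤ (stabilizer _ w).comap (contragredient (Fin 3) (ZMod 2)).toMonoidHom) := by
  obtain ⟨v, hv, hcard⟩ := exists_orbit_ncard_le_three hK
  have hfin : (orbit K v).Finite := Set.toFinite _
  refine exists_le_stabilizer_of_forall_smul_mem (s := hfin.toFinset) ⟨v, by simp⟩ ?_ ?_ ?_
  · simp only [Set.Finite.mem_toFinset]
    rintro ⟨g, hg⟩
    exact hv ((smul_eq_zero_iff_eq g).mp hg)
  · rwa [← Set.ncard_eq_toFinset_card _ hfin]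
  · simp only [Set.Finite.mem_toFinset]
    exact fun g hg x hx => mem_orbit_of_mem_orbit (⟨g, hg⟩ : K) hx

theorem card_GL_three_two : Nat.card (GL (Fin 3) (ZMod 2)) = 168 := by
  rw [card_GL_field]
  simp [Fin.prod_univ_succ]

theorem eq_stabilizer_of_index_eq_seven (hK : K.index = 7) :
    ∃ w : Fin 3 → ZMod 2, w ≠ 0 ∧ (K = stabilizer _ w ∨
      K = (stabilizer _ w).comap (contragredient (Fin 3) (ZMod 2)).toMonoidHom) := by
  have hdvd : ¬ 7 ∣ Nat.card K := by
    have hcard := K.card_mul_index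
    rw [hK, card_GL_three_two] at hcard
    lia
  obtain ⟨w, hw, h⟩ := exists_le_stabilizer_of_not_dvd_card hdvd
  have hindex : (stabilizer (GL (Fin 3) (ZMod 2)) w).index = 7 := by
    simp [index_stabilizer_of_ne_zero hw]
  refine ⟨w, hw, h.imp (fun hle => subgroup_eq_of_le_of_index_eq hle ?_)
    fun hle => subgroup_eq_of_le_of_index_eq hle ?_⟩
  · rw [hK, hindex]
  · rw [Subgroup.index_comap_of_surjective _ (contragredient _ _).surjective, hK, hindex]

theorem exists_map_conj_eq_of_index_eq_seven {v : Fin 3 → ZMod 2} (hv : v ≠ 0)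
    (hK : K.index = 7) :
    (∃ g, K.map (MulAut.conj g).toMonoidHom = stabilizer _ v) ∨
      ∃ g, K.map (MulAut.conj g).toMonoidHom =
        (stabilizer _ v).comap (contragredient (Fin 3) (ZMod 2)).toMonoidHom := by
  obtain ⟨w, hw, rfl | rfl⟩ := eq_stabilizer_of_index_eq_seven hK
  · exact .inl (exists_map_conj_stabilizer_eq hw hv)
  · exact .inr ((exists_map_conj_comap_iff _).mpr (exists_map_conj_stabilizer_eq hw hv))

end IndexSeven

section Card

theorem card_SL_mul_card_units {n R : Type*} [Fintype n] [DecidableEq n] [Nonempty n]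
    [CommRing R] :
    Nat.card (SpecialLinearGroup n R) * Nat.card Rˣ = Nat.card (GL n R) := by
  have hker : (SpecialLinearGroup.toGL (n := n) (R := R)).range = GeneralLinearGroup.det.ker :=
    SetLike.coe_injective SpecialLinearGroup.range_toGL
  rw [← Subgroup.card_mul_index GeneralLinearGroup.det.ker, ← hker,
    ← Nat.card_congr (MonoidHom.ofInjective SpecialLinearGroup.toGL_injective).toEquiv, hker,
    Subgroup.index_ker, MonoidHom.range_eq_top.mpr GeneralLinearGroup.det_surjective,
    Subgroup.card_top]

theorem card_center_SL2 {p : ℕ} [Fact p.Prime] (hp : p ≠ 2) :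
    Nat.card (Subgroup.center (SL2 p)) = 2 := by
  have hroot : IsPrimitiveRoot (-1 : ZMod p) 2 := .neg_one p hp
  rw [Nat.card_congr (SpecialLinearGroup.center_equiv_rootsOfUnity' 0).toEquiv, Fintype.card_fin,
    hroot.card_rootsOfUnity]

instance fact_prime_seven : Fact (Nat.Prime 7) := ⟨by norm_num⟩

theorem card_PSL2_seven : Nat.card (PSL2 7) = 168 := by
  have hGL : Nat.card (GL (Fin 2) (ZMod 7)) = 2016 := by
    rw [card_GL_field]
    simp [Fin.prod_univ_succ]
  have hSL : Nat.card (SL2 7) * 6 = 2016 := by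
    rw [← hGL, ← card_SL_mul_card_units, Nat.card_eq_fintype_card (α := (ZMod 7)ˣ),
      ZMod.card_units]
  have hPSL := Subgroup.card_eq_card_quotient_mul_card_subgroup (Subgroup.center (SL2 7))
  rw [card_center_SL2 (by norm_num)] at hPSL
  lia

end Card

section Moebius

variable {K : Type*} [Field K]

/-- The matrix of the Möbius map `x ↦ x + c`. -/
def translation (c : K) : SpecialLinearGroup (Fin 2) K :=
  ⟨!![1, c; 0, 1], by simp [det_fin_two]⟩

@[simp]
theorem coe_translation (c : K) : (translation c : Matrix (Fin 2) (Fin 2) K) = !![1, c; 0, 1] :=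
  rfl

variable (K) in
/-- The matrix of the Möbius map `x ↦ -1 / x`, called `S` for the modular group. -/
def negInversion : SpecialLinearGroup (Fin 2) K :=
  ⟨!![0, -1; 1, 0], by simp [det_fin_two]⟩

@[simp]
theorem coe_negInversion : (negInversion K : Matrix (Fin 2) (Fin 2) K) = !![0, -1; 1, 0] :=
  rfl

theorem transvection_zero_one (h : (0 : Fin 2) ≠ 1) (c : K) :
    SpecialLinearGroup.transvection h c = translation c := by
  ext i j
  rw [SpecialLinearGroup.transvection_coe]
  fin_cases i <;> fin_cases j <;> simp

theorem transvection_one_zero (h : (1 : Fin 2) ≠ 0) (c : K) :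
    SpecialLinearGroup.transvection h c =
      negInversion K * translation (-c) * (negInversion K)⁻¹ := by
  ext i j
  rw [SpecialLinearGroup.transvection_coe]
  fin_cases i <;> fin_cases j <;> simp

theorem closure_negInversion_translation :
    Subgroup.closure (insert (negInversion K) (Set.range translation)) = ⊤ := by
  refine eq_top_iff.mpr fun g _ => ?_
  have hinv : negInversion K ∈ Subgroup.closure (insert (negInversion K) (Set.range translation)) :=
    Subgroup.subset_closure (Set.mem_insert _ _)
  have htrans (c : K) :
      translation c ∈ Subgroup.closure (insert (negInversion K) (Set.range translation)) :=
    Subgroup.subset_closure (Set.mem_insert_of_mem _ ⟨c, rfl⟩)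
  induction g using SL2.transvection_induction with
  | htransvec i j h c =>
    match i, j with
    | 0, 0 | 1, 1 => exact absurd rfl h
    | 0, 1 => exact transvection_zero_one h c ▸ htrans c
    | 1, 0 =>
      exact transvection_one_zero h c ▸ mul_mem (mul_mem hinv (htrans (-c))) (inv_mem hinv)
  | hmul A B hA hB => exact mul_mem (hA trivial) (hB trivial)

variable [DecidableEq K]

theorem translation_smul_infty (c : K) :
    SpecialLinearGroup.toGL (translation c) • (∞ : OnePoint K) = ∞ := by
  simp [smul_infty_eq_ite]

theorem translation_smul_coe (a c : K) :
    SpecialLinearGroup.toGL (translation c) • (a : OnePoint K) = ↑(a + c) := by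
  simp [smul_some_eq_ite]

theorem negInversion_smul_infty :
    SpecialLinearGroup.toGL (negInversion K) • (∞ : OnePoint K) = ↑(0 : K) := by
  simp [smul_infty_eq_ite]

theorem negInversion_smul_coe (a : K) :
    SpecialLinearGroup.toGL (negInversion K) • (a : OnePoint K) =
      if a = 0 then ∞ else ↑(-a⁻¹) := by
  simp [smul_some_eq_ite, neg_div]

end Moebius

section Singer

/-- The Singer cycle: the matrix of multiplication by `ζ` on `𝔽₈` in the basis `1, ζ, ζ ^ 2`,
where `ζ ^ 3 = ζ + 1`. -/
def singer : SpecialLinearGroup (Fin 3) (ZMod 2) :=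
  ⟨!![0, 0, 1; 1, 0, 1; 0, 1, 0], by decide⟩

/-- The map from the projective line over `𝔽₇` to `𝔽₈` sending `∞` to `0` and `a` to `ζ ^ a`, in
the coordinates of `singer`. -/
def singerExp : OnePoint (ZMod 7) → (Fin 3 → ZMod 2) :=
  fun x => x.elim 0 fun a => singer ^ a.val • ![1, 0, 0]

theorem singerExp_coe_injective : Function.Injective fun a : ZMod 7 => singerExp a := by
  unfold Function.Injective
  decide

theorem singerExp_coe_ne_zero (a : ZMod 7) : singerExp a ≠ 0 := by
  revert a
  decide

theorem singerExp_injective : Function.Injective singerExp := by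
  rintro (_ | a) (_ | b) hab
  · rfl
  · exact absurd hab.symm (singerExp_coe_ne_zero b)
  · exact absurd hab (singerExp_coe_ne_zero a)
  · exact congrArg _ (singerExp_coe_injective hab)

theorem singerExp_bijective : Function.Bijective singerExp :=
  (Nat.bijective_iff_injective_and_card _).mpr
    ⟨singerExp_injective, by simp [OnePoint, Nat.card_eq_fintype_card]⟩

theorem singerExp_add (a c : ZMod 7) : singerExp ↑(a + c) = singer ^ c.val • singerExp a := by
  revert a c
  decide

theorem singerExp_of_mul_eq_neg_one {a b : ZMod 7} (h : a * b = -1) :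
    singerExp b = ![1, 0, 0] + singerExp a ∘ Equiv.swap 1 2 := by
  revert a b
  decide

/-- Multiplication by `ζ ^ c` on `𝔽₈`, as an affine map: it is the translation by `c` of the
projective line over `𝔽₇`, seen through `singerExp`. -/
def singerPowAffine (c : ZMod 7) : (Fin 3 → ZMod 2) ≃ᵃ[ZMod 2] (Fin 3 → ZMod 2) :=
  (DistribMulAction.toLinearEquiv (ZMod 2) _ (singer ^ c.val)).toAffineEquiv

/-- The affine map `y ↦ 1 + σ y` of `𝔽₈`, where `σ` exchanges the basis vectors `ζ` and `ζ ^ 2`: it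
is the map `x ↦ -1 / x` of the projective line over `𝔽₇`, seen through `singerExp`. -/
def swapAddOneAffine : (Fin 3 → ZMod 2) ≃ᵃ[ZMod 2] (Fin 3 → ZMod 2) :=
  (LinearEquiv.funCongrLeft (ZMod 2) (ZMod 2) (Equiv.swap 1 2)).toAffineEquiv.trans
    (AffineEquiv.constVAdd (ZMod 2) _ ![1, 0, 0])

end Singer

section Isomorphism

/-- The action of the affine automorphisms of `P` on the points of `P`. -/
def affinePermHom (k P : Type*) {V : Type*} [Ring k] [AddCommGroup V] [Module k V]
    [AddTorsor V P] : (P ≃ᵃ[k] P) →* Equiv.Perm P where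
  toFun := AffineEquiv.toEquiv
  map_one' := rfl
  map_mul' _ _ := rfl

theorem affinePermHom_injective (k P : Type*) {V : Type*} [Ring k] [AddCommGroup V] [Module k V]
    [AddTorsor V P] : Function.Injective (affinePermHom k P) :=
  AffineEquiv.toEquiv_injective

/-- The action of `PSL(2,7)` on `𝔽₂³` obtained from its action on the projective line over `𝔽₇`
through `singerExp`. -/
noncomputable def pslPermHom : PSL2 7 →* Equiv.Perm (Fin 3 → ZMod 2) :=
  ((equivProjectivization (ZMod 7)).symm.trans
    (.ofBijective singerExp singerExp_bijective)).permCongrHom.toMonoidHom.comp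
      Projectivization.PSLAction.toPermHom

theorem pslPermHom_singerExp (g : SL2 7) (x : OnePoint (ZMod 7)) :
    pslPermHom g (singerExp x) = singerExp (SpecialLinearGroup.toGL g • x) := by
  have hx : (Equiv.ofBijective singerExp singerExp_bijective).symm (singerExp x) = x :=
    Equiv.ofBijective_symm_apply_apply ..
  exact congrArg (fun y => singerExp (SpecialLinearGroup.toGL g • y)) hx

theorem pslPermHom_translation (c : ZMod 7) :
    pslPermHom (translation c : SL2 7) = affinePermHom _ _ (singerPowAffine c) := by
  ext1 v
  obtain ⟨x, rfl⟩ := singerExp_bijective.surjective v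
  rw [pslPermHom_singerExp]
  cases x with
  | infty =>
    rw [translation_smul_infty]
    exact (smul_zero (singer ^ c.val)).symm
  | coe a =>
    rw [translation_smul_coe, singerExp_add]
    rfl

theorem pslPermHom_negInversion :
    pslPermHom (negInversion (ZMod 7) : SL2 7) = affinePermHom _ _ swapAddOneAffine := by
  ext1 v
  obtain ⟨x, rfl⟩ := singerExp_bijective.surjective v
  rw [pslPermHom_singerExp]
  cases x with
  | infty =>
    rw [negInversion_smul_infty]
    decide
  | coe a =>
    rw [negInversion_smul_coe]
    split_ifs with ha
    · subst ha
      decide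
    · rw [singerExp_of_mul_eq_neg_one (a := a) (by field_simp)]
      rfl

theorem range_pslPermHom_le :
    pslPermHom.range ≤ (affinePermHom (ZMod 2) (Fin 3 → ZMod 2)).range := by
  let q : SL2 7 →* PSL2 7 := QuotientGroup.mk' _
  have hle : Subgroup.closure (insert (negInversion (ZMod 7)) (Set.range translation)) ≤
      (affinePermHom (ZMod 2) (Fin 3 → ZMod 2)).range.comap (pslPermHom.comp q) := by
    rw [Subgroup.closure_le, Set.insert_subset_iff, Set.range_subset_iff]
    exact ⟨⟨_, pslPermHom_negInversion.symm⟩, fun c => ⟨_, (pslPermHom_translation c).symm⟩⟩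
  rw [closure_negInversion_translation] at hle
  rintro _ ⟨g, rfl⟩
  obtain ⟨g, rfl⟩ := QuotientGroup.mk_surjective g
  exact hle (Subgroup.mem_top g)

theorem exists_hom_GL_three_two_ne_one : ∃ ψ : PSL2 7 →* GL (Fin 3) (ZMod 2), ψ ≠ 1 := by
  obtain ⟨φ, hφ⟩ := exists_comp_eq_of_range_le (affinePermHom_injective _ _) range_pslPermHom_le
  let ψ : PSL2 7 →* GL (Fin 3) (ZMod 2) :=
    (linearAutEquivGL.toMonoidHom.comp AffineEquiv.linearHom).comp φ
  refine ⟨ψ, fun h => ?_⟩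
  have hφT : φ (translation 1 : SL2 7) = singerPowAffine 1 :=
    affinePermHom_injective _ _ ((DFunLike.congr_fun hφ _).trans (pslPermHom_translation 1))
  have hψT (v : Fin 3 → ZMod 2) :
      ψ (translation 1 : SL2 7) • v = singer ^ (1 : ZMod 7).val • v := by
    simp only [ψ, MonoidHom.comp_apply, hφT]
    exact linearAutEquivGL_smul (singerPowAffine 1).linear v
  have hsinger (v : Fin 3 → ZMod 2) : v = singer ^ (1 : ZMod 7).val • v := by
    rw [← hψT, h, MonoidHom.one_apply, one_smul]
  exact absurd (hsinger ![1, 0, 0]) (by decide)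

theorem nonempty_mulEquiv_GL_three_two : Nonempty (PSL2 7 ≃* GL (Fin 3) (ZMod 2)) := by
  obtain ⟨ψ, hψ⟩ := exists_hom_GL_three_two_ne_one
  have : IsSimpleGroup (PSL2 7) := ProjectiveSpecialLinearGroup.rank_two_simple (by simp)
  have hcard : Nat.card (PSL2 7) = Nat.card (GL (Fin 3) (ZMod 2)) := by
    rw [card_PSL2_seven, card_GL_three_two]
  exact ⟨MulEquiv.ofBijective ψ
    ((Nat.bijective_iff_injective_and_card _).mpr ⟨injective_of_ne_one hψ, hcard⟩)⟩

end Isomorphism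

/-- `PSL(2,7)` has exactly two conjugacy classes of subgroups of index 7:
there are index-7 subgroups `H₁`, `H₂` that are not conjugate, and every index-7
subgroup is conjugate to `H₁` or to `H₂`. -/
theorem stmt_5 :
    ∃ H₁ H₂ : Subgroup (PSL2 7),
      H₁.index = 7 ∧ H₂.index = 7 ∧
      (¬ ∃ g : PSL2 7, Subgroup.map (MulAut.conj g).toMonoidHom H₁ = H₂) ∧
      ∀ K : Subgroup (PSL2 7), K.index = 7 →
        (∃ g : PSL2 7, Subgroup.map (MulAut.conj g).toMonoidHom K = H₁) ∨
        (∃ g : PSL2 7, Subgroup.map (MulAut.conj g).toMonoidHom K = H₂) := by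
  obtain ⟨e⟩ := nonempty_mulEquiv_GL_three_two
  obtain ⟨v, hv⟩ := exists_ne (0 : Fin 3 → ZMod 2)
  let τ := contragredient (Fin 3) (ZMod 2)
  let S := stabilizer (GL (Fin 3) (ZMod 2)) v
  have hS : S.index = 7 := by simp [S, index_stabilizer_of_ne_zero hv]
  have hSτ : (S.comap τ.toMonoidHom).index = 7 := by
    rw [Subgroup.index_comap_of_surjective _ τ.surjective, hS]
  refine ⟨S.comap e.toMonoidHom, (S.comap τ.toMonoidHom).comap e.toMonoidHom, ?_, ?_, ?_, ?_⟩
  · rw [Subgroup.index_comap_of_surjective _ e.surjective, hS]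
  · rw [Subgroup.index_comap_of_surjective _ e.surjective, hSτ]
  · exact (exists_map_conj_comap_iff e).not.mpr
      (not_exists_map_conj_stabilizer_eq_comap_contragredient (by simp) hv)
  · intro K hK
    obtain ⟨L, rfl⟩ : ∃ L, K = Subgroup.comap e.toMonoidHom L :=
      ⟨K.map e.toMonoidHom, (Subgroup.comap_map_eq_self_of_injective e.injective K).symm⟩
    rw [Subgroup.index_comap_of_surjective _ e.surjective] at hK
    simpa only [exists_map_conj_comap_iff] using exists_map_conj_eq_of_index_eq_seven hv hK
end

section
/- The group PSL(2,11) has exactly two conjugacy classes of subgroups of index 11: there exist subgroups H₁ and H₂ of PSL(2,11) of index 11 that are not conjugate to each other, and every subgroup of PSL(2,11) of index 11 is conjugate either to H₁ or to H₂. -/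
/-!
The unipotent subgroup `U ≅ 𝔽₁₁` has order prime to that of any subgroup `H` of index `11`, so its
elements represent the cosets of `H`, each once. A diagonal element of order `5` normalizes `U` and
fixes exactly one coset; hence some conjugate of `H` contains it, and any conjugate of `H`
containing it is already equal to that one. If `H` itself contains it, then `H` is recovered from
the map `s : 𝔽₁₁ → 𝔽₁₁` describing the Weyl element on the cosets, and the relations of
`PSL(2, 𝔽₁₁)` leave two possibilities for `s`. Both occur: the centralizers of Galois's two pairings
of the twelve points of the projective line over `𝔽₁₁` realize them.
-/

namespace PSLTwo

open Matrix Matrix.SpecialLinearGroup OnePoint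
open scoped MatrixGroups

lemma smul_mk_eq_mk_iff {G : Type*} [Group G] {H : Subgroup G} {a g : G} :
    a • (g : G ⧸ H) = g ↔ a ∈ H.map (MulAut.conj g).toMonoidHom := by
  rw [← MulAction.mem_stabilizer_iff, ← mul_one g, ← smul_eq_mul, ← MulAction.Quotient.smul_mk,
    MulAction.stabilizer_smul_eq_stabilizer_map_conj, MulAction.stabilizer_quotient, smul_eq_mul,
    mul_one]

section Relations

variable {R : Type*} [CommRing R]

/-- The standard lift to `SL(2, R)` of the nontrivial Weyl group element; it acts on the
projective line by `z ↦ -1/z`. -/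
def weylSL : SL(2, R) := ⟨!![0, 1; -1, 0], by simp⟩

/-- The element of the diagonal torus of `SL(2, R)` with upper left entry `t`; it acts on the
projective line by `z ↦ t²z`. -/
def torusSL (t : Rˣ) : SL(2, R) := ⟨!![(t : R), 0; 0, ↑t⁻¹], by simp⟩

/-- The class in `PSL(2, R)` of the upper unitriangular matrix with corner `x`; it acts on the
projective line by `z ↦ x + z`. -/
def unipotent (x : R) : PSL(2, R) := (transvection zero_ne_one x : SL(2, R))

/-- The class of `weylSL` in `PSL(2, R)`. -/
def weyl : PSL(2, R) := (weylSL : SL(2, R))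

/-- The class of `torusSL t` in `PSL(2, R)`. -/
def torus (t : Rˣ) : PSL(2, R) := torusSL t

lemma coe_weylSL : ((weylSL : SL(2, R)) : Matrix (Fin 2) (Fin 2) R) = !![0, 1; -1, 0] := rfl

lemma coe_torusSL (t : Rˣ) :
    (torusSL t : Matrix (Fin 2) (Fin 2) R) = !![(t : R), 0; 0, ↑t⁻¹] := rfl

lemma coe_transvection_zero_one (x : R) :
    ((transvection zero_ne_one x : SL(2, R)) : Matrix (Fin 2) (Fin 2) R) = !![1, x; 0, 1] := by
  ext i j
  fin_cases i <;> fin_cases j <;> simp [transvection_coe]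

lemma transvection_one_zero (c : R) :
    (transvection one_ne_zero c : SL(2, R)) =
      weylSL * transvection zero_ne_one (-c) * weylSL⁻¹ := by
  rw [eq_mul_inv_iff_mul_eq]
  ext i j
  fin_cases i <;> fin_cases j <;>
    simp [transvection_coe, coe_weylSL, Matrix.mul_apply, Fin.sum_univ_two]

lemma unipotent_zero : unipotent (0 : R) = 1 := by
  simp [unipotent]

lemma unipotent_add (x y : R) : unipotent (x + y) = unipotent x * unipotent y := by
  simp [unipotent, transvection_add]

lemma unipotent_neg (x : R) : unipotent (-x) = (unipotent x)⁻¹ := by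
  simp [unipotent, ← transvection_inv]

lemma unipotent_pow (x : R) (n : ℕ) : unipotent x ^ n = unipotent (n • x) := by
  induction n with
  | zero => simp [unipotent_zero]
  | succ n ih => rw [pow_succ, ih, succ_nsmul, unipotent_add]

lemma unipotent_eq_one_iff {x : R} : unipotent x = 1 ↔ x = 0 := by
  rw [unipotent, QuotientGroup.eq_one_iff, transvection_mem_center_iff]

lemma weyl_mul_weyl : (weyl * weyl : PSL(2, R)) = 1 := by
  have hsq : (weylSL * weylSL : SL(2, R)) = -1 := by
    ext i j
    fin_cases i <;> fin_cases j <;> simp [coe_weylSL]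
  rw [weyl, ← QuotientGroup.mk_mul, hsq, QuotientGroup.eq_one_iff, Subgroup.mem_center_iff]
  simp

lemma torus_mul_unipotent (t : Rˣ) (x : R) :
    torus t * unipotent x = unipotent (t ^ 2 * x) * torus t := by
  have : torusSL t * transvection zero_ne_one x =
      transvection zero_ne_one (t ^ 2 * x) * torusSL t := by
    refine Subtype.ext ?_
    simp [coe_torusSL, coe_transvection_zero_one, pow_two, mul_right_comm]
  exact congrArg (QuotientGroup.mk (s := Subgroup.center SL(2, R))) this

lemma torus_mul_weyl_mul_torus (t : Rˣ) : torus t * weyl * torus t = weyl := by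
  have : torusSL t * weylSL * torusSL t = weylSL := by
    refine Subtype.ext ?_
    simp [coe_torusSL, coe_weylSL]
  exact congrArg (QuotientGroup.mk (s := Subgroup.center SL(2, R))) this

lemma weyl_mul_unipotent_one_pow_three : (weyl * unipotent (1 : R)) ^ 3 = 1 := by
  have : (weylSL * transvection zero_ne_one (1 : R) : SL(2, R)) ^ 3 = 1 := by
    refine Subtype.ext ?_
    simp [pow_succ, coe_weylSL, coe_transvection_zero_one, Matrix.one_fin_two]
  exact congrArg (QuotientGroup.mk (s := Subgroup.center SL(2, R))) this

end Relations

section Generation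

variable {K : Type*} [Field K]

lemma induction_on {P : PSL(2, K) → Prop} (g : PSL(2, K)) (unipotent : ∀ x, P (unipotent x))
    (weyl : P weyl) (mul : ∀ g h, P g → P h → P (g * h)) : P g := by
  have weyl_inv : (PSLTwo.weyl⁻¹ : PSL(2, K)) = PSLTwo.weyl :=
    inv_eq_of_mul_eq_one_left weyl_mul_weyl
  have lower (c : K) : P (transvection one_ne_zero c : SL(2, K)) := by
    rw [transvection_one_zero]
    exact mul _ _ (mul _ _ weyl (unipotent (-c))) (weyl_inv.symm ▸ weyl)
  induction g using QuotientGroup.induction_on with | H A => ?_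
  induction A using SL2.transvection_induction with
  | htransvec i j hij c =>
    fin_cases i <;> fin_cases j
    · exact absurd rfl hij
    · exact unipotent c
    · exact lower c
    · exact absurd rfl hij
  | hmul A B hA hB => exact mul _ _ hA hB

end Generation

section ProjectiveLine

variable {K : Type*} [Field K] [DecidableEq K]

instance : MulAction PSL(2, K) (OnePoint K) := (equivProjectivization K).mulAction _

lemma coe_smul (g : SL(2, K)) (z : OnePoint K) : (g : PSL(2, K)) • z = toGL g • z := rfl

lemma unipotent_smul (x : K) (z : OnePoint K) : unipotent x • z = z.map (x + ·) := by
  induction z with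
  | infty => simp [unipotent, coe_smul, smul_infty_eq_ite, coe_transvection_zero_one]
  | coe z => simp [unipotent, coe_smul, smul_some_eq_ite, coe_transvection_zero_one, add_comm]

lemma weyl_smul (z : OnePoint K) :
    (weyl : PSL(2, K)) • z = z.elim ↑(0 : K) fun z => if z = 0 then ∞ else ↑(-z⁻¹) := by
  induction z with
  | infty => simp [weyl, coe_smul, smul_infty_eq_ite, coe_weylSL]
  | coe z => simp [weyl, coe_smul, smul_some_eq_ite, coe_weylSL, div_neg]

lemma torus_smul (t : Kˣ) (z : OnePoint K) : torus t • z = z.map ((t : K) ^ 2 * ·) := by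
  induction z with
  | infty => simp [torus, coe_smul, smul_infty_eq_ite, coe_torusSL]
  | coe z => simp [torus, coe_smul, smul_some_eq_ite, coe_torusSL, pow_two, mul_right_comm]

end ProjectiveLine

section Cosets

variable {R : Type*} [CommRing R] {H : Subgroup PSL(2, R)} {s : R → R} {t : Rˣ}

variable (H) in
/-- The coset of `H` represented by `unipotent x`. When every coset is of this form for exactly one
`x`, this identifies `PSL(2, R) ⧸ H` with the affine line `R`. -/
def unipotentCoset (x : R) : PSL(2, R) ⧸ H := (unipotent x : PSL(2, R))

variable (H s) in
/-- The map `s` describes the action of `weyl` on the cosets `unipotentCoset H x` in terms of their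
parameter `x`. -/
def HasWeylMap : Prop :=
  ∀ x, (weyl : PSL(2, R)) • unipotentCoset H x = unipotentCoset H (s x)

lemma unipotent_smul_unipotentCoset (a x : R) :
    unipotent a • unipotentCoset H x = unipotentCoset H (a + x) := by
  rw [unipotentCoset, unipotentCoset, unipotent_add]
  rfl

lemma unipotentCoset_injective (hH : ∀ x, unipotent x ∈ H → x = 0) :
    (unipotentCoset H).Injective := fun x y hxy => by
  have hmem : unipotent (-x + y) ∈ H := by
    rw [unipotent_add, unipotent_neg]
    exact QuotientGroup.eq.mp hxy
  exact neg_add_eq_zero.mp (hH _ hmem)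

lemma torus_smul_unipotentCoset (ht : torus t ∈ H) (x : R) :
    torus t • unipotentCoset H x = unipotentCoset H (t ^ 2 * x) := by
  change QuotientGroup.mk (torus t * unipotent x) = _
  rw [torus_mul_unipotent]
  exact QuotientGroup.mk_mul_of_mem _ ht

lemma exists_hasWeylMap (hH : (unipotentCoset H).Surjective) : ∃ s, HasWeylMap H s :=
  ⟨_, fun _ => (Function.surjInv_eq hH _).symm⟩

lemma hasWeylMap_iff : HasWeylMap H s ↔
    ∀ x, (unipotent (s x))⁻¹ * (weyl * unipotent x) ∈ H :=
  forall_congr' fun _ => eq_comm.trans QuotientGroup.eq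

namespace HasWeylMap

lemma inf {L : Subgroup PSL(2, R)} (hH : HasWeylMap H s) (hL : HasWeylMap L s) :
    HasWeylMap (H ⊓ L) s :=
  hasWeylMap_iff.mpr fun x => ⟨hasWeylMap_iff.mp hH x, hasWeylMap_iff.mp hL x⟩

lemma unique {s' : R → R} (hs : HasWeylMap H s) (hs' : HasWeylMap H s')
    (hH : (unipotentCoset H).Injective) : s = s' :=
  funext fun x => hH ((hs x).symm.trans (hs' x))

lemma involutive (hs : HasWeylMap H s) (hH : (unipotentCoset H).Injective) :
    Function.Involutive s := by
  refine fun x => hH ?_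
  rw [← hs, ← hs, ← mul_smul, weyl_mul_weyl, one_smul]

lemma one_add_iterate_three (hs : HasWeylMap H s) (hH : (unipotentCoset H).Injective) (x : R) :
    s (1 + s (1 + s (1 + x))) = x := by
  have weyl_mul_unipotent_one_smul (y : R) :
      (weyl * unipotent (1 : R)) • unipotentCoset H y = unipotentCoset H (s (1 + y)) := by
    rw [mul_smul, unipotent_smul_unipotentCoset, hs]
  apply hH
  simp only [← weyl_mul_unipotent_one_smul, ← mul_smul]
  rw [← mul_assoc, ← pow_three', weyl_mul_unipotent_one_pow_three, one_smul]

lemma sq_mul_apply_sq_mul (hs : HasWeylMap H s) (hH : (unipotentCoset H).Injective)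
    (ht : torus t ∈ H) (x : R) : (t : R) ^ 2 * s (t ^ 2 * x) = s x := by
  apply hH
  rw [← torus_smul_unipotentCoset ht, ← hs, ← torus_smul_unipotentCoset ht, ← hs, ← mul_smul,
    ← mul_smul, torus_mul_weyl_mul_torus]

variable {K : Type*} [Field K] {H : Subgroup PSL(2, K)} {s : K → K}

lemma surjective (hs : HasWeylMap H s) : (unipotentCoset H).Surjective := by
  have smul_mem_range (g : PSL(2, K)) : ∀ x, ∃ y, g • unipotentCoset H x = unipotentCoset H y := by
    induction g using induction_on with
    | unipotent a => exact fun x => ⟨a + x, unipotent_smul_unipotentCoset a x⟩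
    | weyl => exact fun x => ⟨s x, hs x⟩
    | mul g h hg hh =>
      intro x
      obtain ⟨y, hy⟩ := hh x
      obtain ⟨z, hz⟩ := hg y
      exact ⟨z, by rw [mul_smul, hy, hz]⟩
  intro q
  obtain ⟨g, rfl⟩ := QuotientGroup.mk_surjective q
  obtain ⟨y, hy⟩ := smul_mem_range g 0
  refine ⟨y, hy.symm.trans ?_⟩
  rw [unipotentCoset, unipotent_zero, MulAction.Quotient.smul_mk, smul_eq_mul, mul_one]

lemma index_eq (hs : HasWeylMap H s) (hH : (unipotentCoset H).Injective) :
    H.index = Nat.card K :=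
  (Nat.card_congr (Equiv.ofBijective _ ⟨hH, hs.surjective⟩)).symm

lemma le {L : Subgroup PSL(2, K)} (hH : HasWeylMap H s) (hL : HasWeylMap L s)
    (hinj : (unipotentCoset H).Injective) : H ≤ L := by
  -- Each `g ∈ H` is `unipotent x` times an element of `H ⊓ L`, and then `unipotent x ∈ H`.
  intro g hg
  obtain ⟨x, hx⟩ := (hH.inf hL).surjective g
  have hxg : (unipotent x)⁻¹ * g ∈ H ⊓ L := QuotientGroup.eq.mp hx
  have hxH : unipotent x ∈ H := by
    simpa using mul_mem hg (inv_mem hxg.1)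
  have hx0 : x = 0 := hinj (QuotientGroup.eq.mpr (by simpa [unipotent_zero] using hxH))
  simpa [hx0, unipotent_zero] using hxg.2

end HasWeylMap

end Cosets

section IndexEqCard

variable {K : Type*} [Field K] [Finite K] {H : Subgroup PSL(2, K)} {t : Kˣ}

lemma natCard_dvd : Nat.card PSL(2, K) ∣ (Nat.card K ^ 2 - 1) * (Nat.card K ^ 2 - Nat.card K) := by
  have := Fintype.ofFinite K
  have hGL : Nat.card (GeneralLinearGroup (Fin 2) K) =
      (Nat.card K ^ 2 - 1) * (Nat.card K ^ 2 - Nat.card K) := by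
    simp [card_GL_field, Fin.prod_univ_two]
  rw [← hGL]
  exact (Subgroup.card_quotient_dvd_card _).trans
    (Subgroup.card_dvd_of_injective toGL toGL_injective)

lemma coprime_natCard_of_index_eq (hH : H.index = Nat.card K) :
    (Nat.card H).Coprime (Nat.card K) := by
  have hq : 0 < Nat.card K := Nat.card_pos
  have hdvd : Nat.card H ∣ (Nat.card K ^ 2 - 1) * (Nat.card K - 1) := by
    refine Nat.dvd_of_mul_dvd_mul_right hq ?_
    nth_rw 1 [← hH]
    rw [H.card_mul_index, mul_assoc, Nat.sub_one_mul (Nat.card K), ← pow_two]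
    exact natCard_dvd
  have hsq : (Nat.card K ^ 2 - 1).Coprime (Nat.card K ^ 2) :=
    (Nat.coprime_self_sub_left (Nat.pow_pos hq)).mpr (Nat.coprime_one_left _)
  exact .of_dvd_left hdvd (.mul_left (hsq.coprime_dvd_right (dvd_pow_self _ two_ne_zero))
    ((Nat.coprime_self_sub_left hq).mpr (Nat.coprime_one_left _)))

lemma eq_zero_of_unipotent_mem (hH : H.index = Nat.card K) {x : K} (hx : unipotent x ∈ H) :
    x = 0 := by
  have hpow : unipotent x ^ Nat.card K = 1 := by
    rw [unipotent_pow, card_nsmul_eq_zero', unipotent_zero]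
  have hord : orderOf (unipotent x) = 1 :=
    Nat.eq_one_of_dvd_coprimes (coprime_natCard_of_index_eq hH)
      (Subgroup.orderOf_dvd_natCard H hx) (orderOf_dvd_of_pow_eq_one hpow)
  exact unipotent_eq_one_iff.mp (orderOf_eq_one_iff.mp hord)

lemma unipotentCoset_bijective (hH : H.index = Nat.card K) : (unipotentCoset H).Bijective := by
  have : Finite (PSL(2, K) ⧸ H) :=
    Nat.finite_of_card_ne_zero (hH.trans_ne Nat.card_pos.ne')
  exact (Nat.bijective_iff_injective_and_card _).mpr
    ⟨unipotentCoset_injective fun _ => eq_zero_of_unipotent_mem hH, hH.symm⟩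

lemma existsUnique_torus_smul_eq (hH : H.index = Nat.card K) (ht : (t : K) ^ 2 ≠ 1) :
    ∃! q : PSL(2, K) ⧸ H, torus t • q = q := by
  obtain ⟨hinj, hsurj⟩ := unipotentCoset_bijective hH
  obtain ⟨c, hc⟩ := hsurj (torus t • unipotentCoset H 0)
  have torus_smul (x : K) : torus t • unipotentCoset H x = unipotentCoset H (t ^ 2 * x + c) := by
    rw [← unipotent_smul_unipotentCoset, hc, ← mul_smul, ← torus_mul_unipotent, mul_smul,
      unipotent_smul_unipotentCoset, add_zero]
  have fixed_iff (x : K) : torus t • unipotentCoset H x = unipotentCoset H x ↔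
      x = c / (1 - t ^ 2) := by
    rw [torus_smul, hinj.eq_iff, eq_div_iff (sub_ne_zero.mpr ht.symm)]
    constructor <;> intro h <;> linear_combination -h
  refine ⟨unipotentCoset H (c / (1 - t ^ 2)), (fixed_iff _).mpr rfl, fun q hq => ?_⟩
  obtain ⟨x, rfl⟩ := hsurj q
  rw [(fixed_iff x).mp hq]

lemma exists_torus_mem_map_conj (hH : H.index = Nat.card K) (ht : (t : K) ^ 2 ≠ 1) :
    ∃ g, torus t ∈ H.map (MulAut.conj g).toMonoidHom := by
  obtain ⟨q, hq, -⟩ := existsUnique_torus_smul_eq hH ht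
  obtain ⟨g, rfl⟩ := QuotientGroup.mk_surjective q
  exact ⟨g, smul_mk_eq_mk_iff.mp hq⟩

lemma map_conj_eq_self_of_torus_mem (hH : H.index = Nat.card K) (ht : (t : K) ^ 2 ≠ 1)
    (htH : torus t ∈ H) {g : PSL(2, K)} (htg : torus t ∈ H.map (MulAut.conj g).toMonoidHom) :
    H.map (MulAut.conj g).toMonoidHom = H := by
  have hfix : torus t • ((1 : PSL(2, K)) : PSL(2, K) ⧸ H) = (1 : PSL(2, K)) :=
    smul_mk_eq_mk_iff.mpr (by simpa using htH)
  have hg : g ∈ H := by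
    simpa using QuotientGroup.eq.mp
      ((existsUnique_torus_smul_eq hH ht).unique hfix (smul_mk_eq_mk_iff.mpr htg))
  exact Subgroup.mem_normalizer_iff_map_conj_eq.mp (Subgroup.le_normalizer hg)

end IndexEqCard

section Eleven

local instance : Fact (Nat.Prime 11) := ⟨by norm_num⟩

/-- The candidates for the map `s` in `HasWeylMap H s` when `H ≤ PSL(2, 𝔽₁₁)` has index `11`. As
`x ^ 5` is the Legendre symbol of `x`, the product `x * weylMap c x` is `5 + c` on nonzero squares
and `5 - c` on nonsquares; division by zero gives the intended value `weylMap c 0 = 0`. -/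
def weylMap (c x : ZMod 11) : ZMod 11 := (5 + c * x ^ 5) / x

lemma apply_pow_five {α : Type*} {f : ZMod 11 → α} (hf : ∀ x, f (4 * x) = f x) (x : ZMod 11) :
    f (x ^ 5) = f x := by
  have apply_four_pow_mul (k : ℕ) : f (4 ^ k * x) = f x := by
    induction k with
    | zero => simp
    | succ k ih => rw [pow_succ', mul_assoc, hf, ih]
  -- The squares are generated by `4`, so the fourth power `x ^ 4` is a power of `4`.
  have pow_five_eq : ∀ x : ZMod 11, ∃ k : Fin 5, x ^ 5 = 4 ^ (k : ℕ) * x := by decide +kernel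
  obtain ⟨k, hk⟩ := pow_five_eq x
  rw [hk, apply_four_pow_mul]

lemma apply_zero_eq_zero {s : ZMod 11 → ZMod 11} (hmul : ∀ x, 4 * s (4 * x) = s x) : s 0 = 0 := by
  have h : 4 * s 0 = s 0 := by simpa using hmul 0
  have h3 : 3 * s 0 = 0 := by linear_combination h
  exact (mul_eq_zero.mp h3).resolve_left (by decide)

lemma eq_weylMap {s : ZMod 11 → ZMod 11} (hmul : ∀ x, 4 * s (4 * x) = s x)
    (hneg : s (-1) = 1 + s 1) : s = weylMap (s 1 - 5) := by
  have hfive (x : ZMod 11) : x ^ 5 * s (x ^ 5) = x * s x :=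
    apply_pow_five (f := fun x => x * s x) (fun x => by rw [← hmul x]; ring) x
  ext x
  rcases eq_or_ne x 0 with rfl | hx
  · simp [apply_zero_eq_zero hmul, weylMap]
  rw [weylMap, eq_div_iff hx, mul_comm, ← hfive x]
  obtain h | h : x ^ 5 = 1 ∨ x ^ 5 = -1 := ZMod.pow_div_two_eq_neg_one_or_one 11 hx
  · rw [h]
    ring
  · have h11 : (11 : ZMod 11) = 0 := by decide
    rw [h, hneg]
    linear_combination -h11

lemma exists_eq_weylMap {s : ZMod 11 → ZMod 11} (hmul : ∀ x, 4 * s (4 * x) = s x)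
    (hinv : ∀ x, s (s x) = x) (hcube : ∀ x, s (1 + s (1 + s (1 + x))) = x) :
    ∃ e : ℤˣ, s = weylMap (4 * e) := by
  have hneg : s (-1) = 1 + s 1 := by
    rw [← hinv (1 + s 1)]
    congr 1
    simpa [apply_zero_eq_zero hmul] using (hcube (-1)).symm
  have hparam : ∀ c, (∀ x, weylMap c (1 + weylMap c (1 + weylMap c (1 + x))) = x) →
      ∃ e : ℤˣ, c = 4 * e := by decide +kernel
  have hs := eq_weylMap hmul hneg
  rw [hs] at hcube
  obtain ⟨e, he⟩ := hparam _ hcube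
  exact ⟨e, he ▸ hs⟩

lemma weylMap_four_mul_injective : (fun e : ℤˣ => weylMap (4 * e)).Injective := by
  have : ∀ e e' : ℤˣ, weylMap (4 * e) 1 = weylMap (4 * e') 1 → e = e' := by decide +kernel
  exact fun e e' h => this e e' (congrFun h 1)

local instance : DecidableEq (OnePoint (ZMod 11)) := inferInstanceAs (DecidableEq (Option _))

/-- The two fixed-point-free involutions of the projective line over `𝔽₁₁` from Galois's letter to
Chevalier. They pair `∞` with `0`, and a nonzero `x` with `4 * x - 2 * e * x ^ 6`, which is `2 * x`
if `x ^ 5 = e` and `x / 2` if `x ^ 5 = -e`. The points can be placed at the vertices of an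
icosahedron so that the pairs are the antipodal vertices. -/
def antipode (e : ℤˣ) : Equiv.Perm (OnePoint (ZMod 11)) :=
  Function.Involutive.toPerm
    (fun z => z.elim ↑(0 : ZMod 11) fun x =>
      if x = 0 then ∞ else ↑(4 * x - 2 * e * x ^ 6 : ZMod 11))
    (by revert e; unfold Function.Involutive; decide +kernel)

/-- The subgroup of `PSL(2, 𝔽₁₁)` commuting with `antipode e`; it acts on the projective line as the
rotation group of the icosahedron acts on its vertices. -/
def icosahedral (e : ℤˣ) : Subgroup (PSL2 11) :=
  (Subgroup.centralizer {antipode e}).comap (MulAction.toPermHom (PSL2 11) (OnePoint (ZMod 11)))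

variable {e : ℤˣ}

lemma antipode_infty : antipode e ∞ = ↑(0 : ZMod 11) := rfl

lemma mem_icosahedral_iff {g : PSL2 11} :
    g ∈ icosahedral e ↔ ∀ z, antipode e (g • z) = g • antipode e z := by
  simp [icosahedral, Subgroup.mem_centralizer_singleton_iff, Equiv.Perm.ext_iff, eq_comm]

lemma eq_zero_of_unipotent_mem_icosahedral {x : ZMod 11} (hx : unipotent x ∈ icosahedral e) :
    x = 0 := by
  have h := mem_icosahedral_iff.mp hx ∞
  rw [unipotent_smul, unipotent_smul, OnePoint.map_infty, antipode_infty, OnePoint.map_some,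
    OnePoint.coe_eq_coe] at h
  simpa using h.symm

lemma torus_mem_icosahedral (t : (ZMod 11)ˣ) : torus t ∈ icosahedral e := by
  have antipode_map_sq_mul : ∀ (e : ℤˣ) (a : ZMod 11) (z : OnePoint (ZMod 11)), a ≠ 0 →
      antipode e (z.map (a ^ 2 * ·)) = (antipode e z).map (a ^ 2 * ·) := by
    decide +kernel
  refine mem_icosahedral_iff.mpr fun z => ?_
  simpa only [torus_smul] using antipode_map_sq_mul e t z t.ne_zero

lemma unipotentCoset_icosahedral_injective : (unipotentCoset (icosahedral e)).Injective :=
  unipotentCoset_injective fun _ => eq_zero_of_unipotent_mem_icosahedral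

lemma hasWeylMap_icosahedral : HasWeylMap (icosahedral e) (weylMap (4 * e)) := by
  refine hasWeylMap_iff.mpr fun x => mem_icosahedral_iff.mpr fun z => ?_
  simp only [← unipotent_neg, mul_smul, unipotent_smul, weyl_smul]
  revert e x z
  decide +kernel

lemma index_icosahedral : (icosahedral e).index = 11 := by
  rw [hasWeylMap_icosahedral.index_eq unipotentCoset_icosahedral_injective, Nat.card_zmod]

lemma exists_eq_icosahedral {H : Subgroup (PSL2 11)} (hH : H.index = 11) {t : (ZMod 11)ˣ}
    (ht : (t : ZMod 11) ^ 2 = 4) (htH : torus t ∈ H) : ∃ e, H = icosahedral e := by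
  obtain ⟨hinj, hsurj⟩ := unipotentCoset_bijective (hH.trans (Nat.card_zmod 11).symm)
  obtain ⟨s, hs⟩ := exists_hasWeylMap hsurj
  obtain ⟨e, rfl⟩ := exists_eq_weylMap (ht ▸ hs.sq_mul_apply_sq_mul hinj htH)
    (hs.involutive hinj) (hs.one_add_iterate_three hinj)
  exact ⟨e, le_antisymm (hs.le hasWeylMap_icosahedral hinj)
    (hasWeylMap_icosahedral.le hs unipotentCoset_icosahedral_injective)⟩

lemma exists_map_conj_eq_icosahedral {H : Subgroup (PSL2 11)} (hH : H.index = 11) :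
    ∃ g e, H.map (MulAut.conj g).toMonoidHom = icosahedral e := by
  let t : (ZMod 11)ˣ := Units.mk0 2 (by decide)
  obtain ⟨g, htg⟩ := exists_torus_mem_map_conj (hH.trans (Nat.card_zmod 11).symm)
    (by decide : (t : ZMod 11) ^ 2 ≠ 1)
  have hindex : (H.map (MulAut.conj g).toMonoidHom).index = 11 :=
    (H.index_map_equiv (MulAut.conj g)).trans hH
  exact ⟨g, exists_eq_icosahedral hindex (by decide : (t : ZMod 11) ^ 2 = 4) htg⟩

lemma eq_of_map_conj_icosahedral_eq {e' : ℤˣ} {g : PSL2 11}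
    (hg : (icosahedral e).map (MulAut.conj g).toMonoidHom = icosahedral e') : e = e' := by
  let t : (ZMod 11)ˣ := Units.mk0 2 (by decide)
  have heq : icosahedral e = icosahedral e' := by
    rw [← hg, map_conj_eq_self_of_torus_mem (index_icosahedral.trans (Nat.card_zmod 11).symm)
      (by decide : (t : ZMod 11) ^ 2 ≠ 1) (torus_mem_icosahedral t)
      (hg ▸ torus_mem_icosahedral t)]
  exact weylMap_four_mul_injective <| hasWeylMap_icosahedral.unique
    (heq ▸ hasWeylMap_icosahedral) unipotentCoset_icosahedral_injective

end Eleven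

end PSLTwo

/-- `PSL(2,11)` has exactly two conjugacy classes of subgroups of index 11:
there are index-11 subgroups `H₁`, `H₂` that are not conjugate, and every index-11
subgroup is conjugate to `H₁` or to `H₂`. -/
theorem stmt_6 :
    ∃ H₁ H₂ : Subgroup (PSL2 11),
      H₁.index = 11 ∧ H₂.index = 11 ∧
      (¬ ∃ g : PSL2 11, Subgroup.map (MulAut.conj g).toMonoidHom H₁ = H₂) ∧
      ∀ K : Subgroup (PSL2 11), K.index = 11 →
        (∃ g : PSL2 11, Subgroup.map (MulAut.conj g).toMonoidHom K = H₁) ∨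
        (∃ g : PSL2 11, Subgroup.map (MulAut.conj g).toMonoidHom K = H₂) := by
  refine ⟨PSLTwo.icosahedral 1, PSLTwo.icosahedral (-1), PSLTwo.index_icosahedral,
    PSLTwo.index_icosahedral, ?_, fun K hK => ?_⟩
  · rintro ⟨g, hg⟩
    exact absurd (PSLTwo.eq_of_map_conj_icosahedral_eq hg) (by decide)
  · obtain ⟨g, e, hg⟩ := PSLTwo.exists_map_conj_eq_icosahedral hK
    rcases Int.units_eq_one_or e with rfl | rfl
    · exact .inl ⟨g, hg⟩
    · exact .inr ⟨g, hg⟩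
end

section
/- For each p ∈ {7, 11}, the group PSL(2,p) contains a pair of subgroups H₁, H₂ of index p that are almost conjugate: H₁ and H₂ are not conjugate in PSL(2,p), yet for every conjugacy class C of PSL(2,p) one has |C ∩ H₁| = |C ∩ H₂|. -/
/-!
Galois' exceptional actions of `PSL(2, 7)` and `PSL(2, 11)` on `p` points arise as follows. For a
nonsquare `θ`, pair `∞` with `0` and every nonzero square `x` with `θ * x`; this is a fixed-point
free involution of the projective line, and for `θ = 3`, `p = 7` and `θ = 2`, `p = 11` its `p`
conjugates under translations are permuted by all of `PSL(2, p)`. The stabilizer `H₁` of the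
involution therefore has index `p`.

As `-1` is not a square, the outer automorphism `x ↦ -x` turns `θ` into `θ⁻¹`, so the stabilizer
`H₂` for `θ⁻¹` is the image of `H₁`. A parabolic element has exactly one fixed point and so commutes
with no fixed-point free involution, while every other element of `SL(2, F)` is conjugate in
`SL(2, F)` to its images under `GL(2, F)`: its centralizer in `GL(2, F)` attains every determinant.
Hence `H₁` and `H₂` meet each conjugacy class equally often.

If `H₁` were conjugate to `H₂`, then, for some `c`, everything commuting with the conjugate of the
`θ`-involution by `x ↦ x + c` would commute with the `θ⁻¹`-involution. The maps
`x ↦ a ^ 2 * (x - c) + c` force `c = 0`. An element of `H₁` outside the stabilizer of `{0, ∞}` then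
contradicts the fact that the two involutions agree only on `{0, ∞}`.
-/

open Equiv (Perm)
open Matrix OnePoint Subgroup
open scoped MatrixGroups

namespace SunadaPair

section Group

variable {G P : Type*} [Group G] [Group P]

/-- Gassmann equivalence of subgroups: every conjugacy class of `G` meets `H₁` and `H₂` in the
same number of elements. Almost conjugate means Gassmann equivalent but not conjugate. -/
def GassmannEquivalent (H₁ H₂ : Subgroup G) : Prop :=
  ∀ x : G, Nat.card {y : G // IsConj x y ∧ y ∈ H₁} = Nat.card {y : G // IsConj x y ∧ y ∈ H₂}

lemma gassmannEquivalent_map (β : G ≃* G) {H : Subgroup G} (hβ : ∀ g ∈ H, IsConj g (β g)) :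
    GassmannEquivalent H (H.map β.toMonoidHom) := by
  refine fun x ↦ Nat.card_congr (β.toEquiv.subtypeEquiv fun g ↦ ?_)
  change _ ↔ IsConj x (β g) ∧ β g ∈ H.map β.toMonoidHom
  rw [show β g ∈ H.map β.toMonoidHom ↔ g ∈ H from H.mem_map_equiv.trans (by simp)]
  exact and_congr_left fun hg ↦ ⟨fun h ↦ h.trans (hβ g hg), fun h ↦ h.trans (hβ g hg).symm⟩

lemma mem_comap_centralizer_singleton {ρ : G →* P} {a : P} {g : G} :
    g ∈ (centralizer {a}).comap ρ ↔ ρ g * a = a * ρ g := by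
  rw [mem_comap, mem_centralizer_singleton_iff]

lemma map_comap_centralizer_singleton {ρ : G →* P} {β : G ≃* G} {d : P}
    (hβ : ∀ g, ρ (β g) = d * ρ g * d⁻¹) (a : P) :
    ((centralizer {a}).comap ρ).map β.toMonoidHom = (centralizer {d * a * d⁻¹}).comap ρ := by
  ext g
  obtain ⟨g, rfl⟩ := β.surjective g
  have hmap : β g ∈ ((centralizer {a}).comap ρ).map β.toMonoidHom ↔ g ∈ (centralizer {a}).comap ρ :=
    mem_map_equiv.trans (by simp)
  rw [hmap, mem_comap_centralizer_singleton, mem_comap_centralizer_singleton, hβ]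
  simp only [mul_assoc, inv_mul_cancel_left, mul_right_inj]
  simp only [← mul_assoc, mul_left_inj]

lemma index_comap_centralizer_singleton (ρ : G →* P) (a : P) :
    ((centralizer {a}).comap ρ).index = (Set.range fun g ↦ ρ g * a * (ρ g)⁻¹).ncard := by
  let _ : MulAction G P := MulAction.compHom P ((ConjAct.toConjAct : P ≃* _).toMonoidHom.comp ρ)
  have hstab : MulAction.stabilizer G a = (centralizer {a}).comap ρ := by
    ext g
    rw [mem_comap_centralizer_singleton, ← mul_inv_eq_iff_eq_mul]
    rfl
  rw [← hstab, MulAction.index_stabilizer]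
  rfl

end Group

section SpecialLinear

variable {n R : Type*} [Fintype n] [DecidableEq n] [CommRing R]

/-- The action of `GL n R` on its normal subgroup `SL n R` by conjugation. -/
def conjSL (d : GL n R) : MulAut (SpecialLinearGroup n R) where
  toFun A := ⟨d.val * A * d⁻¹.val, by rw [det_units_conj, A.det_coe]⟩
  invFun A := ⟨d⁻¹.val * A * d.val, by rw [det_units_conj', A.det_coe]⟩
  left_inv A := Subtype.ext <| by simp [mul_assoc]
  right_inv A := Subtype.ext <| by simp [mul_assoc]
  map_mul' A B := Subtype.ext <| by
    change d.val * (A.val * B.val) * d⁻¹.val = d.val * A * d⁻¹.val * (d.val * B * d⁻¹.val)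
    simp [mul_assoc]

lemma coe_conjSL (d : GL n R) (A : SpecialLinearGroup n R) :
    (conjSL d A).val = d.val * A.val * d⁻¹.val :=
  rfl

lemma toGL_conjSL (d : GL n R) (A : SpecialLinearGroup n R) :
    (conjSL d A).toGL = d * A.toGL * d⁻¹ :=
  Units.ext rfl

/-- The automorphism of `PSL n R` induced by conjugation with an element of `GL n R`. -/
def conjPSL (d : GL n R) : MulAut (ProjectiveSpecialLinearGroup n R) :=
  QuotientGroup.congr _ _ (conjSL d) (characteristic_iff_map_eq.mp inferInstance _)

end SpecialLinear

section FiniteField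

variable {F : Type*} [Field F] [Finite F]

lemma exists_sq_sub_mul_sq_eq (hF : ringChar F ≠ 2) {D : F} (hD : D ≠ 0) (c : F) :
    ∃ a b : F, a ^ 2 - D * b ^ 2 = c := by
  have := Fintype.ofFinite F
  obtain ⟨a, b, h⟩ := FiniteField.exists_root_sum_quadratic (f := .X ^ 2)
    (g := .C (-D) * .X ^ 2 + .C 0 * .X + .C (-c)) (Polynomial.degree_X_pow 2)
    (Polynomial.degree_quadratic (neg_ne_zero.mpr hD)) (FiniteField.odd_card_of_char_ne_two hF)
  simp only [Polynomial.eval_add, Polynomial.eval_mul, Polynomial.eval_pow, Polynomial.eval_X,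
    Polynomial.eval_C] at h
  exact ⟨a, b, by linear_combination h⟩

lemma exists_det_smul_one_add_smul_eq (hF : ringChar F ≠ 2) {M : Matrix (Fin 2) (Fin 2) F}
    (hM : M.discr ≠ 0) (c : F) : ∃ s t : F, (s • 1 + t • M).det = c := by
  have h2 : (2 : F) ≠ 0 := Ring.two_ne_zero hF
  obtain ⟨a, b, hab⟩ := exists_sq_sub_mul_sq_eq hF hM (4 * c)
  refine ⟨(a - b * M.trace) / 2, b, ?_⟩
  rw [discr_fin_two, trace_fin_two, det_fin_two] at hab
  simp only [det_fin_two, trace_fin_two, Matrix.add_apply, Matrix.smul_apply, one_apply_eq,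
    one_apply_ne zero_ne_one, one_apply_ne one_ne_zero, smul_eq_mul]
  field_simp
  linear_combination hab

-- `d (s + t A)` conjugates `A` to `d A d⁻¹`, and some such matrix has determinant 1.
lemma isConj_conjSL (hF : ringChar F ≠ 2) (d : GL (Fin 2) F) {A : SL(2, F)}
    (hA : ¬ A.val.IsParabolic) : IsConj A (conjSL d A) := by
  rw [IsParabolic, not_and_or, not_not] at hA
  obtain ⟨r, hr⟩ | hdisc := hA
  · have hfix : conjSL d A = A := Subtype.ext <| by
      rw [coe_conjSL, ← hr, ← (scalar_commute r (mul_comm r) d.val).eq, mul_assoc,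
        Units.mul_inv, mul_one]
    rw [hfix]
  · obtain ⟨s, t, hst⟩ := exists_det_smul_one_add_smul_eq hF hdisc (d⁻¹.val).det
    let B : SL(2, F) := ⟨d.val * (s • 1 + t • A.val), by
      rw [det_mul, hst, ← det_mul, Units.mul_inv, det_one]⟩
    refine isConj_iff.mpr ⟨B, mul_inv_eq_iff_eq_mul.mpr <| Subtype.ext ?_⟩
    change d.val * (s • 1 + t • A.val) * A = d.val * A * d⁻¹.val * (d.val * (s • 1 + t • A.val))
    have hcomm : Commute (s • 1 + t • A.val) A.val :=
      ((Commute.one_left _).smul_left s).add_left ((Commute.refl _).smul_left t)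
    simp only [mul_assoc, Units.inv_mul_cancel_left, hcomm.eq]

end FiniteField

section Matrices

variable {K : Type*} [Field K]

/-- The matrix of the translation `x ↦ x + c`. -/
def translation (c : K) : SL(2, K) :=
  SpecialLinearGroup.transvection zero_ne_one c

lemma coe_translation (c : K) : (translation c).val = !![1, c; 0, 1] := by
  ext i j
  fin_cases i <;> fin_cases j <;> simp [translation, SpecialLinearGroup.transvection_coe]

lemma translation_add (b c : K) : translation (b + c) = translation b * translation c :=
  SpecialLinearGroup.transvection_add zero_ne_one b c

lemma translation_inv (c : K) : (translation c)⁻¹ = translation (-c) :=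
  SpecialLinearGroup.transvection_inv zero_ne_one c

/-- The matrix of `x ↦ -x⁻¹`. -/
def negInversion : SL(2, K) :=
  ⟨!![0, -1; 1, 0], by simp⟩

lemma coe_negInversion : (negInversion : SL(2, K)).val = !![0, -1; 1, 0] :=
  rfl

lemma negInversion_mul_translation_mul_inv (c : K) :
    negInversion * translation c * negInversion⁻¹ =
      SpecialLinearGroup.transvection one_ne_zero (-c) := by
  rw [mul_inv_eq_iff_eq_mul]
  ext i j
  fin_cases i <;> fin_cases j <;>
    simp [coe_negInversion, coe_translation, SpecialLinearGroup.transvection_coe, mul_apply,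
      Fin.sum_univ_two]

/-- The matrix of `x ↦ -x`. -/
def reflection : GL (Fin 2) K :=
  GeneralLinearGroup.mkOfDetNeZero !![-1, 0; 0, 1] (by simp)

end Matrices

section ProjectiveLine

variable {K : Type*} [Field K] [DecidableEq K]

/-- The action of `GL (Fin 2) K` on the projective line by Möbius transformations. -/
def moebius : GL (Fin 2) K →* Perm (OnePoint K) :=
  MulAction.toPermHom _ _

/-- The action of `SL(2, K)` on the projective line by Möbius transformations. -/
def slMoebius : SL(2, K) →* Perm (OnePoint K) :=
  moebius.comp SpecialLinearGroup.toGL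

lemma slMoebius_infty (A : SL(2, K)) :
    slMoebius A ∞ = if A.val 1 0 = 0 then ∞ else ((A.val 0 0 / A.val 1 0 : K) : OnePoint K) :=
  smul_infty_eq_ite _

lemma slMoebius_coe (A : SL(2, K)) (x : K) :
    slMoebius A x = if A.val 1 0 * x + A.val 1 1 = 0 then ∞ else
      (((A.val 0 0 * x + A.val 0 1) / (A.val 1 0 * x + A.val 1 1) : K) : OnePoint K) :=
  smul_some_eq_ite

lemma slMoebius_eq_one_of_mem_center {A : SL(2, K)} (hA : A ∈ center SL(2, K)) :
    slMoebius A = 1 := by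
  obtain ⟨r, hr, hA⟩ := Matrix.SpecialLinearGroup.mem_center_iff.mp hA
  have hr : r ≠ 0 := by rintro rfl; simp at hr
  ext x
  cases x <;> simp [slMoebius_infty, slMoebius_coe, ← hA, hr]

/-- The action of `PSL(2, K)` on the projective line by Möbius transformations. -/
def pslMoebius : PSL(2, K) →* Perm (OnePoint K) :=
  QuotientGroup.lift _ slMoebius fun _ ↦ slMoebius_eq_one_of_mem_center

lemma pslMoebius_mk (A : SL(2, K)) : pslMoebius (A : PSL(2, K)) = slMoebius A :=
  rfl

lemma pslMoebius_conjPSL (d : GL (Fin 2) K) (g : PSL(2, K)) :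
    pslMoebius (conjPSL d g) = moebius d * pslMoebius g * (moebius d)⁻¹ := by
  obtain ⟨A, rfl⟩ := QuotientGroup.mk_surjective g
  change moebius (conjSL d A).toGL = _
  rw [toGL_conjSL, map_mul_inv, map_mul]
  rfl

lemma slMoebius_translation_infty (c : K) : slMoebius (translation c) ∞ = ∞ := by
  simp [slMoebius_infty, coe_translation]

lemma slMoebius_translation_coe (c x : K) : slMoebius (translation c) x = (x + c : K) := by
  simp [slMoebius_coe, coe_translation]

lemma slMoebius_diag2_infty {a : K} (ha : a ≠ 0) :
    slMoebius (SpecialLinearGroup.diag2 a ha) ∞ = ∞ := by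
  simp [slMoebius_infty, SpecialLinearGroup.diag2_coe']

lemma slMoebius_diag2_coe {a : K} (ha : a ≠ 0) (x : K) :
    slMoebius (SpecialLinearGroup.diag2 a ha) x = (a ^ 2 * x : K) := by
  simp [slMoebius_coe, SpecialLinearGroup.diag2_coe', ha]
  ring

lemma slMoebius_negInversion_infty : slMoebius (negInversion : SL(2, K)) ∞ = (0 : K) := by
  simp [slMoebius_infty, coe_negInversion]

lemma slMoebius_negInversion_coe {x : K} (hx : x ≠ 0) :
    slMoebius (negInversion : SL(2, K)) x = (-x⁻¹ : K) := by
  simp [slMoebius_coe, coe_negInversion, hx, neg_div]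

lemma moebius_reflection_infty : moebius (reflection : GL (Fin 2) K) ∞ = ∞ :=
  smul_infty_eq_self_iff.mpr rfl

lemma moebius_reflection_coe (x : K) : moebius reflection (x : OnePoint K) = (-x : K) := by
  refine smul_some_eq_ite.trans ?_
  simp [reflection, GeneralLinearGroup.mkOfDetNeZero]

lemma existsUnique_slMoebius_eq_self (h2 : (2 : K) ≠ 0) {A : SL(2, K)}
    (hA : A.val.IsParabolic) : ∃! x, slMoebius A x = x := by
  have : NeZero (2 : K) := ⟨h2⟩
  have hA : A.toGL.IsParabolic := hA
  exact ⟨_, hA.smul_eq_self_iff.mpr rfl, fun x ↦ hA.smul_eq_self_iff.mp⟩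

end ProjectiveLine

section QuadraticResidues

variable {F : Type*} [Field F] [Finite F]

lemma isSquare_mul_iff_not_isSquare {θ x : F} (hθ : ¬ IsSquare θ) (hx : x ≠ 0) :
    IsSquare (θ * x) ↔ ¬ IsSquare x := by
  classical
  have := Fintype.ofFinite F
  have hθ0 : θ ≠ 0 := fun h ↦ hθ (h ▸ .zero)
  rw [← quadraticChar_one_iff_isSquare (mul_ne_zero hθ0 hx), map_mul,
    quadraticChar_neg_one_iff_not_isSquare.mpr hθ, ← quadraticChar_neg_one_iff_not_isSquare,
    neg_one_mul, neg_eq_iff_eq_neg]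

end QuadraticResidues

section GaloisInvolution

variable {F : Type*} [Field F] [Fintype F] [DecidableEq F]

/-- The underlying map of `galoisInvolution`, an involution when `θ` is not a square. -/
def galoisMap (θ : F) : OnePoint F → OnePoint F
  | ∞ => (0 : F)
  | (x : F) => if x = 0 then ∞ else if IsSquare x then (θ * x : F) else (θ⁻¹ * x : F)

lemma galoisMap_involutive {θ : F} (hθ : ¬ IsSquare θ) : (galoisMap θ).Involutive := by
  have hθ0 : θ ≠ 0 := by rintro rfl; exact hθ .zero
  have hθ' : ¬ IsSquare θ⁻¹ := by rwa [isSquare_inv]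
  intro x
  cases x with
  | infty => exact if_pos rfl
  | coe x =>
    by_cases hx0 : x = 0
    · subst hx0
      simp [galoisMap]
    by_cases hx : IsSquare x <;>
      simp [galoisMap, hx0, hx, hθ0, isSquare_mul_iff_not_isSquare, hθ, hθ']

/-- The involution of the projective line that exchanges `∞` with `0` and, for a nonsquare `θ`,
exchanges every nonzero square `x` with `θ * x`. -/
def galoisInvolution {θ : F} (hθ : ¬ IsSquare θ) : Perm (OnePoint F) :=
  (galoisMap_involutive hθ).toPerm

variable {θ : F} (hθ : ¬ IsSquare θ)

lemma galoisInvolution_infty : galoisInvolution hθ ∞ = (0 : F) :=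
  rfl

lemma galoisInvolution_zero : galoisInvolution hθ (0 : F) = ∞ :=
  if_pos rfl

lemma galoisInvolution_coe_of_isSquare {x : F} (hx : x ≠ 0) (hsq : IsSquare x) :
    galoisInvolution hθ x = (θ * x : F) :=
  (if_neg hx).trans (if_pos hsq)

lemma galoisInvolution_coe_of_not_isSquare {x : F} (hsq : ¬ IsSquare x) :
    galoisInvolution hθ x = (θ⁻¹ * x : F) :=
  (if_neg (by rintro rfl; exact hsq .zero)).trans (if_neg hsq)

lemma galoisInvolution_apply_ne (x : OnePoint F) : galoisInvolution hθ x ≠ x := by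
  have hθ1 : θ ≠ 1 := by rintro rfl; exact hθ .one
  cases x with
  | infty => exact coe_ne_infty 0
  | coe x =>
    by_cases hx0 : x = 0
    · subst hx0
      exact galoisInvolution_zero hθ ▸ infty_ne_coe 0
    by_cases hx : IsSquare x
    · simp [galoisInvolution_coe_of_isSquare, hx0, hx, hθ1]
    · simp [galoisInvolution_coe_of_not_isSquare, hx0, hx, hθ1]

lemma commute_diag2_galoisInvolution {a : F} (ha : a ≠ 0) :
    Commute (slMoebius (SpecialLinearGroup.diag2 a ha)) (galoisInvolution hθ) := by
  ext x
  change slMoebius _ (galoisInvolution hθ x) = galoisInvolution hθ (slMoebius _ x)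
  cases x with
  | infty => simp [slMoebius_diag2_infty, slMoebius_diag2_coe, galoisInvolution_infty]
  | coe x =>
    have ha2 : IsSquare (a ^ 2 * x) ↔ IsSquare x := by
      refine ⟨fun h ↦ ?_, (IsSquare.sq a).mul⟩
      simpa [ha] using h.div (.sq a)
    by_cases hx0 : x = 0
    · simp [slMoebius_diag2_infty, slMoebius_diag2_coe, galoisInvolution_zero, hx0]
    by_cases hx : IsSquare x <;>
      simp [slMoebius_diag2_coe, galoisInvolution_coe_of_isSquare,
        galoisInvolution_coe_of_not_isSquare, hx0, hx, ha, ha2, mul_left_comm]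

lemma galoisInvolution_eq_galoisInvolution_inv_iff (hneg : θ ≠ -1) {x : F} :
    galoisInvolution hθ x = galoisInvolution (isSquare_inv.not.mpr hθ) x ↔ x = 0 := by
  have hθ0 : θ ≠ 0 := by rintro rfl; exact hθ .zero
  have hθ1 : θ ≠ 1 := by rintro rfl; exact hθ .one
  have hinv : θ ≠ θ⁻¹ := by rw [ne_eq, self_eq_inv₀]; tauto
  refine ⟨fun h ↦ ?_, fun h ↦ by simp [h, galoisInvolution_zero]⟩
  by_contra hx0
  by_cases hx : IsSquare x
  · simp [galoisInvolution_coe_of_isSquare, hx0, hx, hinv] at h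
  · simp [galoisInvolution_coe_of_not_isSquare, hx0, hx, hinv.symm] at h

lemma moebius_reflection_conj_galoisInvolution (h1 : ¬ IsSquare (-1 : F)) :
    moebius reflection * galoisInvolution hθ * (moebius reflection)⁻¹ =
      galoisInvolution (isSquare_inv.not.mpr hθ) := by
  rw [mul_inv_eq_iff_eq_mul]
  ext x
  change moebius reflection (galoisInvolution hθ x) =
    galoisInvolution (isSquare_inv.not.mpr hθ) (moebius reflection x)
  cases x with
  | infty => simp [moebius_reflection_infty, moebius_reflection_coe, galoisInvolution_infty]
  | coe x =>
    by_cases hx0 : x = 0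
    · simp [moebius_reflection_infty, moebius_reflection_coe, galoisInvolution_zero, hx0]
    have hneg : IsSquare (-x) ↔ ¬ IsSquare x := by
      rw [← neg_one_mul, isSquare_mul_iff_not_isSquare h1 hx0]
    by_cases hx : IsSquare x <;>
      simp [moebius_reflection_coe, galoisInvolution_coe_of_isSquare,
        galoisInvolution_coe_of_not_isSquare, hx0, hx, hneg]

/-- The conjugate of `galoisInvolution hθ` by the translation `x ↦ x + c`. -/
def galoisTranslate (c : F) : Perm (OnePoint F) :=
  slMoebius (translation c) * galoisInvolution hθ * (slMoebius (translation c))⁻¹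

lemma galoisTranslate_zero : galoisTranslate hθ 0 = galoisInvolution hθ := by
  simp [galoisTranslate, translation]

lemma galoisTranslate_infty (c : F) : galoisTranslate hθ c ∞ = c := by
  rw [galoisTranslate, ← map_inv, translation_inv]
  simp [slMoebius_translation_infty, slMoebius_translation_coe, galoisInvolution_infty]

lemma galoisTranslate_injective : Function.Injective (galoisTranslate hθ) := fun b c h ↦ by
  simpa [galoisTranslate_infty] using congr($h ∞)

lemma translation_conj_galoisTranslate (b c : F) :
    slMoebius (translation b) * galoisTranslate hθ c * (slMoebius (translation b))⁻¹ =
      galoisTranslate hθ (b + c) := by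
  simp only [galoisTranslate, translation_add, map_mul, _root_.mul_inv_rev, mul_assoc]

variable {hθ}

-- The translations and `x ↦ -x⁻¹` generate `SL(2, F)`.
lemma slMoebius_mem_normalizer_range_galoisTranslate
    (hw : slMoebius negInversion ∈ normalizer (Set.range (galoisTranslate hθ))) (A : SL(2, F)) :
    slMoebius A ∈ normalizer (Set.range (galoisTranslate hθ)) := by
  have htranslation (b : F) :
      slMoebius (translation b) ∈ normalizer (Set.range (galoisTranslate hθ)) := by
    refine mem_normalizer_fintype ?_
    rintro _ ⟨c, rfl⟩
    exact ⟨b + c, (translation_conj_galoisTranslate hθ b c).symm⟩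
  have hlower (b : F) : slMoebius (SpecialLinearGroup.transvection one_ne_zero b) ∈
      normalizer (Set.range (galoisTranslate hθ)) := by
    rw [← neg_neg b, ← negInversion_mul_translation_mul_inv, map_mul_inv, map_mul]
    exact mul_mem (mul_mem hw (htranslation _)) (inv_mem hw)
  refine SL2.transvection_induction (slMoebius · ∈ normalizer _) (fun i j hij c ↦ ?_)
    (fun A B hA hB ↦ ?_) A
  · fin_cases i <;> fin_cases j
    exacts [absurd rfl hij, htranslation c, hlower c, absurd rfl hij]
  · exact map_mul slMoebius A B ▸ mul_mem hA hB

lemma exists_galoisTranslate_eq_conj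
    (hw : slMoebius negInversion ∈ normalizer (Set.range (galoisTranslate hθ))) (A : SL(2, F)) :
    ∃ c, galoisTranslate hθ c = slMoebius A * galoisInvolution hθ * (slMoebius A)⁻¹ :=
  (slMoebius_mem_normalizer_range_galoisTranslate hw A _).mp ⟨0, galoisTranslate_zero hθ⟩

/-- The elements of `PSL(2, F)` that commute with `galoisInvolution hθ`. -/
def galoisSubgroup {θ : F} (hθ : ¬ IsSquare θ) : Subgroup PSL(2, F) :=
  (centralizer {galoisInvolution hθ}).comap pslMoebius

lemma index_galoisSubgroup
    (hw : slMoebius negInversion ∈ normalizer (Set.range (galoisTranslate hθ))) :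
    (galoisSubgroup hθ).index = Fintype.card F := by
  have hrange : Set.range (fun g ↦ pslMoebius g * galoisInvolution hθ * (pslMoebius g)⁻¹) =
      Set.range (galoisTranslate hθ) := by
    refine Set.Subset.antisymm ?_ ?_
    · rintro _ ⟨g, rfl⟩
      obtain ⟨A, rfl⟩ := QuotientGroup.mk_surjective g
      exact exists_galoisTranslate_eq_conj hw A
    · rintro _ ⟨c, rfl⟩
      exact ⟨translation c, rfl⟩
  rw [galoisSubgroup, index_comap_centralizer_singleton, hrange, ← Set.image_univ,
    Set.ncard_image_of_injective _ (galoisTranslate_injective hθ), Set.ncard_univ,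
    Nat.card_eq_fintype_card]

lemma map_conjPSL_reflection_galoisSubgroup (h1 : ¬ IsSquare (-1 : F)) :
    (galoisSubgroup hθ).map (conjPSL reflection).toMonoidHom =
      galoisSubgroup (isSquare_inv.not.mpr hθ) := by
  rw [galoisSubgroup, map_comap_centralizer_singleton (pslMoebius_conjPSL reflection),
    moebius_reflection_conj_galoisInvolution hθ h1, galoisSubgroup]

lemma not_isParabolic_of_commute_galoisInvolution (h2 : (2 : F) ≠ 0) {A : SL(2, F)}
    (hA : Commute (slMoebius A) (galoisInvolution hθ)) : ¬ A.val.IsParabolic := fun hpar ↦ by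
  obtain ⟨x, hx, hunique⟩ := existsUnique_slMoebius_eq_self h2 hpar
  refine galoisInvolution_apply_ne hθ x (hunique _ ?_)
  exact (DFunLike.congr_fun hA.eq x).trans (congrArg (galoisInvolution hθ) hx)

lemma isConj_conjPSL_of_mem_galoisSubgroup (hF : ringChar F ≠ 2) (d : GL (Fin 2) F)
    {g : PSL(2, F)} (hg : g ∈ galoisSubgroup hθ) : IsConj g (conjPSL d g) := by
  obtain ⟨A, rfl⟩ := QuotientGroup.mk_surjective g
  have hA : Commute (slMoebius A) (galoisInvolution hθ) := mem_comap_centralizer_singleton.mp hg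
  exact (QuotientGroup.mk' _).map_isConj <| isConj_conjSL hF d <|
    not_isParabolic_of_commute_galoisInvolution (Ring.two_ne_zero hF) hA

lemma eq_zero_of_commute_galoisTranslate_imp (hneg : θ ≠ -1) {c : F}
    (h : ∀ A : SL(2, F), Commute (slMoebius A) (galoisTranslate hθ c) →
      Commute (slMoebius A) (galoisInvolution (isSquare_inv.not.mpr hθ))) : c = 0 := by
  have hθ0 : θ ≠ 0 := by rintro rfl; exact hθ .zero
  have hθ1 : θ ≠ 1 := by rintro rfl; exact hθ .one
  have hsq : θ ^ 2 ≠ 1 := by rw [ne_eq, sq_eq_one_iff]; tauto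
  -- `x ↦ θ ^ 2 * (x - c) + c`
  let A : SL(2, F) := translation c * SpecialLinearGroup.diag2 θ hθ0 * (translation c)⁻¹
  have hA : Commute (slMoebius A) (galoisInvolution (isSquare_inv.not.mpr hθ)) := by
    refine h A ?_
    simp only [A, map_mul, map_inv, galoisTranslate]
    exact (commute_diag2_galoisInvolution hθ hθ0).conj _
  have hinfty : slMoebius A ∞ = ∞ := by
    simp [A, translation_inv, slMoebius_translation_infty, slMoebius_diag2_infty]
  have hzero : slMoebius A (0 : F) = (0 : F) := by
    simpa [galoisInvolution_infty, hinfty] using congr($hA.eq ∞)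
  have hzero : θ ^ 2 * -c + c = 0 := by
    simpa [A, translation_inv, slMoebius_translation_coe, slMoebius_diag2_coe] using hzero
  have : c * (θ ^ 2 - 1) = 0 := by linear_combination -hzero
  simpa [sub_eq_zero, hsq] using this

lemma not_forall_commute_galoisInvolution_imp (hneg : θ ≠ -1)
    (hw : slMoebius negInversion ∈ normalizer (Set.range (galoisTranslate hθ))) :
    ¬ ∀ A : SL(2, F), Commute (slMoebius A) (galoisInvolution hθ) →
      Commute (slMoebius A) (galoisInvolution (isSquare_inv.not.mpr hθ)) := by
  intro h
  -- `x ↦ -(x + 1)⁻¹`, which maps `∞` to `0` and `0` to `-1`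
  let B : SL(2, F) := negInversion * translation 1
  obtain ⟨c, hc⟩ := exists_galoisTranslate_eq_conj hw B
  let A : SL(2, F) := (translation c)⁻¹ * B
  have hA : Commute (slMoebius A) (galoisInvolution hθ) := by
    rw [galoisTranslate, eq_mul_inv_iff_mul_eq] at hc
    rw [commute_iff_eq, map_mul, map_inv, mul_assoc, ← hc]
    group
  have hinfty : slMoebius A ∞ = (-c : F) := by
    simp [A, B, translation_inv, slMoebius_translation_infty, slMoebius_translation_coe,
      slMoebius_negInversion_infty]
  have hzero : slMoebius A (0 : F) = (-1 - c : F) := by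
    simp [A, B, translation_inv, slMoebius_translation_coe, slMoebius_negInversion_coe,
      sub_eq_add_neg]
  have hagree {x : OnePoint F}
      (hx : galoisInvolution hθ x = galoisInvolution (isSquare_inv.not.mpr hθ) x) :
      galoisInvolution hθ (slMoebius A x) =
        galoisInvolution (isSquare_inv.not.mpr hθ) (slMoebius A x) :=
    calc
      _ = slMoebius A (galoisInvolution hθ x) := (DFunLike.congr_fun hA.eq x).symm
      _ = slMoebius A (galoisInvolution (isSquare_inv.not.mpr hθ) x) := by rw [hx]
      _ = _ := DFunLike.congr_fun (h A hA).eq x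
  have hc0 : -c = 0 := by
    rw [← galoisInvolution_eq_galoisInvolution_inv_iff hθ hneg, ← hinfty]
    exact hagree (by simp only [galoisInvolution_infty])
  have hc1 : -1 - c = 0 := by
    rw [← galoisInvolution_eq_galoisInvolution_inv_iff hθ hneg, ← hzero]
    exact hagree (by simp only [galoisInvolution_zero])
  exact one_ne_zero (by linear_combination hc0 - hc1)

lemma not_exists_map_conj_galoisSubgroup_eq (hneg : θ ≠ -1)
    (hw : slMoebius negInversion ∈ normalizer (Set.range (galoisTranslate hθ))) :
    ¬ ∃ g : PSL(2, F), (galoisSubgroup hθ).map (MulAut.conj g).toMonoidHom =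
      galoisSubgroup (isSquare_inv.not.mpr hθ) := by
  rintro ⟨g, hg⟩
  obtain ⟨B, rfl⟩ := QuotientGroup.mk_surjective g
  obtain ⟨c, hc⟩ := exists_galoisTranslate_eq_conj hw B
  have hconj (g : PSL(2, F)) : pslMoebius (MulAut.conj (B : PSL(2, F)) g) =
      slMoebius B * pslMoebius g * (slMoebius B)⁻¹ := by
    rw [MulAut.conj_apply, map_mul_inv, map_mul, pslMoebius_mk]
  rw [galoisSubgroup, map_comap_centralizer_singleton hconj, ← hc, galoisSubgroup] at hg
  have hcomm (A : SL(2, F)) (hA : Commute (slMoebius A) (galoisTranslate hθ c)) :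
      Commute (slMoebius A) (galoisInvolution (isSquare_inv.not.mpr hθ)) :=
    mem_comap_centralizer_singleton.mp <| hg.le <|
      mem_comap_centralizer_singleton (g := (A : PSL(2, F))).mpr hA
  obtain rfl := eq_zero_of_commute_galoisTranslate_imp hneg hcomm
  rw [galoisTranslate_zero] at hcomm
  exact not_forall_commute_galoisInvolution_imp hneg hw hcomm

theorem exists_gassmannEquivalent_not_conj (h1 : ¬ IsSquare (-1 : F)) (hneg : θ ≠ -1)
    (hw : slMoebius negInversion ∈ normalizer (Set.range (galoisTranslate hθ))) :
    ∃ H₁ H₂ : Subgroup PSL(2, F), H₁.index = Fintype.card F ∧ H₂.index = Fintype.card F ∧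
      (¬ ∃ g : PSL(2, F), H₁.map (MulAut.conj g).toMonoidHom = H₂) ∧
      GassmannEquivalent H₁ H₂ := by
  have hF : ringChar F ≠ 2 := fun h ↦ h1 (FiniteField.isSquare_of_char_two h _)
  have hmap := map_conjPSL_reflection_galoisSubgroup (hθ := hθ) h1
  refine ⟨galoisSubgroup hθ, galoisSubgroup (isSquare_inv.not.mpr hθ), index_galoisSubgroup hw, ?_,
    not_exists_map_conj_galoisSubgroup_eq hneg hw, ?_⟩
  · rw [← hmap]
    exact (index_map_of_bijective (conjPSL reflection).bijective _).trans (index_galoisSubgroup hw)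
  · rw [← hmap]
    exact gassmannEquivalent_map _ fun g ↦ isConj_conjPSL_of_mem_galoisSubgroup hF reflection

end GaloisInvolution

section SmallPrimes

instance {K : Type*} [DecidableEq K] : DecidableEq (OnePoint K) :=
  inferInstanceAs (DecidableEq (Option K))

instance : Fact (Nat.Prime 7) := ⟨by decide⟩

instance : Fact (Nat.Prime 11) := ⟨by decide⟩

lemma not_isSquare_three_zmod_seven : ¬ IsSquare (3 : ZMod 7) := by
  decide

lemma not_isSquare_two_zmod_eleven : ¬ IsSquare (2 : ZMod 11) := by
  decide

lemma slMoebius_negInversion_mem_normalizer_zmod_seven : slMoebius negInversion ∈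
    normalizer (Set.range (galoisTranslate not_isSquare_three_zmod_seven)) := by
  have hconj : ∀ c, ∃ c', galoisTranslate not_isSquare_three_zmod_seven c' =
      slMoebius negInversion * galoisTranslate not_isSquare_three_zmod_seven c *
        (slMoebius negInversion)⁻¹ := by
    decide +kernel
  exact mem_normalizer_fintype (Set.forall_mem_range.mpr hconj)

lemma slMoebius_negInversion_mem_normalizer_zmod_eleven : slMoebius negInversion ∈
    normalizer (Set.range (galoisTranslate not_isSquare_two_zmod_eleven)) := by
  have hconj : ∀ c, ∃ c', galoisTranslate not_isSquare_two_zmod_eleven c' =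
      slMoebius negInversion * galoisTranslate not_isSquare_two_zmod_eleven c *
        (slMoebius negInversion)⁻¹ := by
    decide +kernel
  exact mem_normalizer_fintype (Set.forall_mem_range.mpr hconj)

end SmallPrimes

end SunadaPair

/-- For each `p ∈ {7, 11}`, the group `PSL(2,p)` contains a pair of
subgroups `H₁, H₂` of index `p` that are almost conjugate: not conjugate in
`PSL(2,p)`, yet `|C ∩ H₁| = |C ∩ H₂|` for every conjugacy class `C` of `PSL(2,p)`. -/
theorem stmt_7 :
    ∀ p : ℕ, (p = 7 ∨ p = 11) →
      ∃ H₁ H₂ : Subgroup (PSL2 p),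
        H₁.index = p ∧ H₂.index = p ∧
        (¬ ∃ g : PSL2 p, Subgroup.map (MulAut.conj g).toMonoidHom H₁ = H₂) ∧
        ∀ x : PSL2 p, Nat.card {y : PSL2 p // IsConj x y ∧ y ∈ H₁} =
          Nat.card {y : PSL2 p // IsConj x y ∧ y ∈ H₂} := by
  rintro p (rfl | rfl)
  · obtain ⟨H₁, H₂, hindex₁, hindex₂, hconj, hequiv⟩ :=
      SunadaPair.exists_gassmannEquivalent_not_conj (by decide) (by decide)
        SunadaPair.slMoebius_negInversion_mem_normalizer_zmod_seven
    exact ⟨H₁, H₂, hindex₁.trans (ZMod.card 7), hindex₂.trans (ZMod.card 7), hconj, hequiv⟩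
  · obtain ⟨H₁, H₂, hindex₁, hindex₂, hconj, hequiv⟩ :=
      SunadaPair.exists_gassmannEquivalent_not_conj (by decide) (by decide)
        SunadaPair.slMoebius_negInversion_mem_normalizer_zmod_eleven
    exact ⟨H₁, H₂, hindex₁.trans (ZMod.card 11), hindex₂.trans (ZMod.card 11), hconj, hequiv⟩
end
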